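/- arXiv:0710.4234 — 7 statements merged into one kernel-verified Lean document; each statement's English description precedes it below -/
import Mathlib

section
/- Suppose the centred parametrisation is partially tight in parameter (PTIP), i.e. there exists k > 0 such that limsup_{|θ|→∞} ∫_{{x : |x| > k}} π(x | θ) dx < 1. Then the marginal Θ-chain of the centred Gibbs sampler is uniformly ergodic: there exist a constant M < ∞ and r ∈ [0,1) such that for every θ₀ ∈ ℝ and every n ≥ 1, ‖Pⁿ(θ₀, ·) − Π‖_TV ≤ M·rⁿ. -/
open MeasureTheory Filter Set

noncomputable section

/-- Joint (unnormalised posterior) density `f_θ(x) = f₁(y - x) · f₂(x - θ)`. -/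
def fjoint (f₁ f₂ : ℝ → ℝ) (y θ x : ℝ) : ℝ := f₁ (y - x) * f₂ (x - θ)

/-- Normalising constant `c_θ = ∫ f_θ(x) dx`. -/
def cnorm (f₁ f₂ : ℝ → ℝ) (y θ : ℝ) : ℝ := ∫ x, fjoint f₁ f₂ y θ x

/-- Conditional posterior density `π(x | θ) = f_θ(x)/c_θ`. -/
def post (f₁ f₂ : ℝ → ℝ) (y θ x : ℝ) : ℝ := fjoint f₁ f₂ y θ x / cnorm f₁ f₂ y θ

/-- One-step transition density of the marginal Θ-chain of the centred Gibbs sampler: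
`p(θ₀, θ₁) = (1/c_{θ₀}) ∫ f₂(x - θ₁) f_{θ₀}(x) dx`. -/
def gibbsTrans (f₁ f₂ : ℝ → ℝ) (y θ₀ θ₁ : ℝ) : ℝ :=
  (1 / cnorm f₁ f₂ y θ₀) * ∫ x, f₂ (x - θ₁) * fjoint f₁ f₂ y θ₀ x

/-- `n`-step transition density (for `n ≥ 1`; the value at `n = 0` is unused). -/
def gibbsTransN (f₁ f₂ : ℝ → ℝ) (y : ℝ) : ℕ → ℝ → ℝ → ℝ
  | 0, _, _ => 0
  | 1, θ₀, θ₁ => gibbsTrans f₁ f₂ y θ₀ θ₁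
  | (n + 2), θ₀, θ₁ => ∫ u, gibbsTransN f₁ f₂ y (n + 1) θ₀ u * gibbsTrans f₁ f₂ y u θ₁

lemma aux_kernel (p : ℝ → ℝ → ℝ) (δ : ℝ)
    (hm : Measurable (Function.uncurry p)) (h0 : ∀ u t, 0 ≤ p u t)
    (hpi : ∀ u, Integrable (p u)) (hp1 : ∀ u, ∫ t, p u t = 1)
    (hB : ∃ B, ∀ u t, p u t ≤ B)
    (hδ : ∀ u t, (Icc (0:ℝ) 1).indicator (fun _ => δ) t ≤ p u t)
    (h : ℝ → ℝ) (hh : Integrable h) :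
    Integrable (fun t => ∫ u, h u * p u t) ∧ (∫ t, ∫ u, h u * p u t) = ∫ u, h u ∧
    (∫ u, h u = 0 → ∫ t, |∫ u, h u * p u t| ≤ (1 - δ) * ∫ u, |h u|) := by
  have key : ∀ (q : ℝ → ℝ → ℝ) (c : ℝ), Measurable (Function.uncurry q) → (∀ u t, 0 ≤ q u t) →
      (∀ u, Integrable (q u)) → (∀ u, ∫ t, q u t = c) →
      Integrable (Function.uncurry fun u t => h u * q u t) (volume.prod volume) := by
    intro q c hq hq0 hqi hqc
    rw [integrable_prod_iff]
    · refine ⟨.of_forall fun u => (hqi u).const_mul (h u), ?_⟩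
      have : (fun u => ∫ t, ‖Function.uncurry (fun u t => h u * q u t) (u, t)‖)
          = fun u => ‖h u‖ * c := by
        funext u
        simp only [Function.uncurry, norm_mul, integral_const_mul, Real.norm_of_nonneg (hq0 _ _),
          hqc]
      rw [this]
      exact hh.norm.mul_const c
    · exact (hh.1.comp_fst).mul hq.aestronglyMeasurable
  have k1 := key p 1 hm h0 hpi hp1
  have hind : Integrable ((Icc (0:ℝ) 1).indicator (fun _ => δ)) := by
    rw [integrable_indicator_iff measurableSet_Icc]
    simp
  have hindv : ∫ t, (Icc (0:ℝ) 1).indicator (fun _ => δ) t = δ := by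
    rw [integral_indicator measurableSet_Icc]
    simp
  refine ⟨k1.integral_prod_right, ?_, fun hz => ?_⟩
  · rw [← integral_integral_swap k1]
    simp only [integral_const_mul, hp1, mul_one]
  · obtain ⟨B, hB⟩ := hB
    set q : ℝ → ℝ → ℝ := fun u t => p u t - (Icc (0:ℝ) 1).indicator (fun _ => δ) t with hq
    have hqm : Measurable (Function.uncurry q) := by
      refine hm.sub ?_
      exact (measurable_const.indicator measurableSet_Icc).comp measurable_snd
    have hq0 : ∀ u t, 0 ≤ q u t := fun u t => sub_nonneg.2 (hδ u t)
    have hqi : ∀ u, Integrable (q u) := fun u => (hpi u).sub hind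
    have hqc : ∀ u, ∫ t, q u t = 1 - δ := fun u => by
      rw [hq]; simp only
      rw [integral_sub (hpi u) hind, hp1, hindv]
    have k2 := key q (1 - δ) hqm hq0 hqi hqc
    have k3 : Integrable (Function.uncurry fun u t => |h u| * q u t) (volume.prod volume) := by
      refine k2.norm.congr (.of_forall fun z => ?_)
      simp [Function.uncurry, abs_of_nonneg (hq0 _ _)]
    have e1 : ∀ t, ∫ u, h u * p u t = ∫ u, h u * q u t := by
      intro t
      have i1 : Integrable fun u => h u * p u t := by
        refine hh.mul_bdd (c := B) (hm.comp (measurable_id.prodMk measurable_const)).aestronglyMeasurable ?_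
        exact .of_forall fun u => by rw [Real.norm_of_nonneg (h0 _ _)]; exact hB _ _
      simp only [hq, mul_sub]
      rw [integral_sub i1 (hh.mul_const _), integral_mul_const, hz, zero_mul, sub_zero]
    calc ∫ t, |∫ u, h u * p u t| ≤ ∫ t, ∫ u, |h u| * q u t := by
          refine integral_mono k1.integral_prod_right.norm k3.integral_prod_right fun t => ?_
          simp only [e1]
          refine (abs_integral_le_integral_abs).trans_eq ?_
          simp only [abs_mul, abs_of_nonneg (hq0 _ _)]
      _ = (1 - δ) * ∫ u, |h u| := by
          rw [← integral_integral_swap k3]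
          simp only [integral_const_mul, hqc, integral_mul_const, mul_comm]

/-- if the centred parametrisation is PTIP, then the marginal Θ-chain of the
centred Gibbs sampler is uniformly ergodic (total variation distance from the stationary
law `Π`, with density `θ ↦ c_θ / C`, decays geometrically, uniformly in the start `θ₀`). -/
theorem ptip_implies_uniformly_ergodic (f₁ f₂ : ℝ → ℝ) (y : ℝ)
    (hf₁c : Continuous f₁) (hf₂c : Continuous f₂)
    (hf₁pos : ∀ t, 0 < f₁ t) (hf₂pos : ∀ t, 0 < f₂ t)
    (hf₁bdd : ∃ M, ∀ t, f₁ t ≤ M) (hf₂bdd : ∃ M, ∀ t, f₂ t ≤ M)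
    (hf₁sym : ∀ t, f₁ (-t) = f₁ t) (hf₂sym : ∀ t, f₂ (-t) = f₂ t)
    (hf₁prob : ∫ t, f₁ t = 1) (hf₂prob : ∫ t, f₂ t = 1)
    (hjint : ∀ θ, Integrable (fun x => fjoint f₁ f₂ y θ x))
    (hcpos : ∀ θ, 0 < cnorm f₁ f₂ y θ)
    (hCint : Integrable (fun θ => cnorm f₁ f₂ y θ))
    (hPTIP : ∃ k > (0 : ℝ),
      limsup (fun θ => ∫ x in {x : ℝ | k < |x|}, post f₁ f₂ y θ x) (cocompact ℝ) < 1) :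
    ∃ M : ℝ, ∃ r : ℝ, 0 ≤ r ∧ r < 1 ∧
      ∀ θ₀ : ℝ, ∀ n : ℕ, 1 ≤ n →
        (∫ θ, |gibbsTransN f₁ f₂ y n θ₀ θ - cnorm f₁ f₂ y θ / (∫ θ', cnorm f₁ f₂ y θ')|) ≤
          M * r ^ n := by
  obtain ⟨M₁, hM₁⟩ := hf₁bdd
  obtain ⟨M₂, hM₂⟩ := hf₂bdd
  obtain ⟨k, hk, hlim⟩ := hPTIP
  have i1 : Integrable f₁ := by
    by_contra h; rw [integral_undef h] at hf₁prob; norm_num at hf₁prob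
  have i2 : Integrable f₂ := by
    by_contra h; rw [integral_undef h] at hf₂prob; norm_num at hf₂prob
  have hM₁p : 0 < M₁ := (hf₁pos 0).trans_le (hM₁ 0)
  have jpos : ∀ θ x, 0 < fjoint f₁ f₂ y θ x := fun θ x => mul_pos (hf₁pos _) (hf₂pos _)
  have jcont : Continuous fun z : ℝ × ℝ => fjoint f₁ f₂ y z.1 z.2 := by
    unfold fjoint; fun_prop
  have ppos : ∀ θ x, 0 ≤ post f₁ f₂ y θ x := fun θ x => (div_pos (jpos _ _) (hcpos _)).le
  have pint : ∀ θ, Integrable (post f₁ f₂ y θ) := fun θ => (hjint θ).div_const _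
  have pone : ∀ θ, ∫ x, post f₁ f₂ y θ x = 1 := fun θ => by
    unfold post; rw [integral_div]; exact div_self (hcpos θ).ne'
  have cmeas : Measurable (cnorm f₁ f₂ y) :=
    (jcont.stronglyMeasurable.integral_prod_right (ν := volume)).measurable
  have cle : ∀ θ, cnorm f₁ f₂ y θ ≤ M₁ := fun θ => by
    calc cnorm f₁ f₂ y θ ≤ ∫ x, M₁ * f₂ (x - θ) := by
          refine integral_mono (hjint θ) ((i2.comp_sub_right θ).const_mul _) fun x => ?_
          exact mul_le_mul_of_nonneg_right (hM₁ _) (hf₂pos _).le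
      _ = M₁ := by rw [integral_const_mul, integral_sub_right_eq_self, hf₂prob, mul_one]
  have trans_eq : ∀ u t, gibbsTrans f₁ f₂ y u t = ∫ x, f₂ (x - t) * post f₁ f₂ y u x := by
    intro u t
    unfold gibbsTrans post
    rw [← integral_const_mul]
    congr 1; funext x; ring
  have tint : ∀ u t, Integrable fun x => f₂ (x - t) * post f₁ f₂ y u x := by
    intro u t
    refine (pint u).bdd_mul (c := M₂) (by fun_prop) (.of_forall fun x => ?_)
    rw [Real.norm_of_nonneg (hf₂pos _).le]; exact hM₂ _
  have h0 : ∀ u t, 0 ≤ gibbsTrans f₁ f₂ y u t := fun u t => by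
    rw [trans_eq]
    exact integral_nonneg fun x => mul_nonneg (hf₂pos _).le (ppos _ _)
  have hB : ∀ u t, gibbsTrans f₁ f₂ y u t ≤ M₂ := fun u t => by
    rw [trans_eq]
    calc _ ≤ ∫ x, M₂ * post f₁ f₂ y u x := integral_mono (tint u t) ((pint u).const_mul _)
            fun x => mul_le_mul_of_nonneg_right (hM₂ _) (ppos _ _)
      _ = M₂ := by rw [integral_const_mul, pone, mul_one]
  have pm : Measurable fun z : ℝ × ℝ => post f₁ f₂ y z.1 z.2 :=
    jcont.measurable.div (cmeas.comp measurable_fst)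
  have hm : Measurable (Function.uncurry (gibbsTrans f₁ f₂ y)) := by
    have : Function.uncurry (gibbsTrans f₁ f₂ y) =
        fun z : ℝ × ℝ => ∫ x, f₂ (x - z.2) * post f₁ f₂ y z.1 x := by
      funext z; exact trans_eq _ _
    rw [this]
    have h3 : Measurable fun w : (ℝ × ℝ) × ℝ => f₂ (w.2 - w.1.2) * post f₁ f₂ y w.1.1 w.2 := by
      refine Measurable.mul (by fun_prop) ?_
      exact pm.comp ((measurable_fst.comp measurable_fst).prodMk measurable_snd)
    exact (h3.stronglyMeasurable.integral_prod_right (ν := volume)).measurable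
  -- general Fubini fact
  have fub : ∀ g : ℝ → ℝ, Integrable g →
      Integrable (Function.uncurry fun x t => f₂ (x - t) * g x) (volume.prod volume) := by
    intro g hg
    rw [integrable_prod_iff]
    · refine ⟨.of_forall fun x => (i2.comp_sub_left x).mul_const (g x), ?_⟩
      have : (fun x => ∫ t, ‖Function.uncurry (fun x t => f₂ (x - t) * g x) (x, t)‖)
          = fun x => ‖g x‖ := by
        funext x
        simp only [Function.uncurry, norm_mul, integral_mul_const,
          Real.norm_of_nonneg (hf₂pos _).le]
        rw [integral_sub_left_eq_self f₂ volume x, hf₂prob, one_mul]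
      rw [this]
      exact hg.norm
    · refine AEStronglyMeasurable.mul ?_ (hg.1.comp_fst)
      exact (by fun_prop : Continuous fun z : ℝ × ℝ => f₂ (z.1 - z.2)).aestronglyMeasurable
  have fub1 : ∀ g : ℝ → ℝ, ∀ x, ∫ t, f₂ (x - t) * g x = g x := by
    intro g x
    rw [integral_mul_const, integral_sub_left_eq_self f₂ volume x, hf₂prob, one_mul]
  have hpi : ∀ u, Integrable (gibbsTrans f₁ f₂ y u) := fun u => by
    rw [show gibbsTrans f₁ f₂ y u = _ from funext (trans_eq u)]
    exact (fub _ (pint u)).integral_prod_right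
  have hp1 : ∀ u, ∫ t, gibbsTrans f₁ f₂ y u t = 1 := fun u => by
    simp only [trans_eq]
    rw [← integral_integral_swap (fub _ (pint u))]
    simp only [fub1, pone]
  -- stationarity
  have hst : ∀ t, ∫ u, cnorm f₁ f₂ y u * gibbsTrans f₁ f₂ y u t = cnorm f₁ f₂ y t := by
    intro t
    have e : ∀ u, cnorm f₁ f₂ y u * gibbsTrans f₁ f₂ y u t
        = ∫ x, f₂ (x - u) * fjoint f₁ f₂ y t x := by
      intro u
      unfold gibbsTrans
      rw [← mul_assoc, mul_one_div_cancel (hcpos u).ne', one_mul]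
      congr 1; funext x; unfold fjoint; ring
    simp only [e]
    rw [← integral_integral_swap (fub _ (hjint t))]
    simp only [fub1 (fjoint f₁ f₂ y t)]
    rfl
  have hCpos : 0 < ∫ t, cnorm f₁ f₂ y t := by
    rw [integral_pos_iff_support_of_nonneg (fun t => (hcpos t).le) hCint]
    have : Function.support (fun t => cnorm f₁ f₂ y t) = univ := by
      ext t; simp [(hcpos t).ne']
    rw [this]; simp
  -- small set mass
  have hsetm : MeasurableSet {x : ℝ | k < |x|} :=
    (isOpen_lt continuous_const continuous_abs).measurableSet
  have hcompl : {x : ℝ | k < |x|}ᶜ = Icc (-k) k := by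
    ext x; simp [abs_le]
  have hsplit : ∀ θ, ∫ x in Icc (-k) k, post f₁ f₂ y θ x
      = 1 - ∫ x in {x : ℝ | k < |x|}, post f₁ f₂ y θ x := fun θ => by
    rw [← pone θ, ← integral_add_compl hsetm (pint θ), hcompl]; ring
  have hmass : ∃ ε > 0, ∀ θ, ε ≤ ∫ x in Icc (-k) k, post f₁ f₂ y θ x := by
    obtain ⟨b, hb1, hb2⟩ := exists_between hlim
    have hbd : IsBoundedUnder (· ≤ ·) (cocompact ℝ)
        (fun θ => ∫ x in {x : ℝ | k < |x|}, post f₁ f₂ y θ x) := by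
      refine isBoundedUnder_of ⟨1, fun θ => ?_⟩
      rw [← pone θ]
      exact setIntegral_le_integral (pint θ) (.of_forall (ppos θ))
    have hev := eventually_lt_of_limsup_lt hb1 hbd
    obtain ⟨K, hK, hKs⟩ := mem_cocompact.1 hev
    have hcomp : IsCompact (K ×ˢ Icc (-k) k) := hK.prod isCompact_Icc
    have hlow : ∃ m > 0, ∀ θ ∈ K, ∀ x ∈ Icc (-k) k, m ≤ fjoint f₁ f₂ y θ x := by
      obtain ⟨m, hm0, hm⟩ := hcomp.exists_forall_le' jcont.continuousOn (a := 0)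
        (fun z _ => jpos _ _)
      exact ⟨m, hm0, fun θ hθ x hx => hm (θ, x) ⟨hθ, hx⟩⟩
    obtain ⟨m, hm0, hml⟩ := hlow
    refine ⟨min (1 - b) (2 * k * (m / M₁)), lt_min (by linarith) (by positivity), fun θ => ?_⟩
    by_cases hθ : θ ∈ K
    · refine (min_le_right _ _).trans ?_
      have : ∫ x in Icc (-k) k, m / M₁ = 2 * k * (m / M₁) := by
        simp [two_mul, hk.le]
      rw [← this]
      refine setIntegral_mono_on (by simp) (pint θ).integrableOn measurableSet_Icc fun x hx => ?_
      exact div_le_div₀ (jpos _ _).le (hml θ hθ x hx) (hcpos _) (cle _)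
    · refine (min_le_left _ _).trans ?_
      have := hKs hθ
      simp only [mem_ofPred_eq] at this
      rw [hsplit]; linarith
  obtain ⟨ε, hε, hεm⟩ := hmass
  have hmin : ∃ m > 0, ∀ t ∈ Icc (0:ℝ) 1, ∀ x ∈ Icc (-k) k, m ≤ f₂ (x - t) := by
    obtain ⟨m, hm0, hm⟩ := ((isCompact_Icc (a := (0:ℝ)) (b := 1)).prod
      (isCompact_Icc (a := -k) (b := k))).exists_forall_le' (f := fun z : ℝ × ℝ => f₂ (z.2 - z.1))
      (by fun_prop) (a := 0) (fun z _ => hf₂pos _)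
    exact ⟨m, hm0, fun θ hθ x hx => hm (θ, x) ⟨hθ, hx⟩⟩
  obtain ⟨m, hm0, hml⟩ := hmin
  have hlow : ∀ u, ∀ t ∈ Icc (0:ℝ) 1, m * ε ≤ gibbsTrans f₁ f₂ y u t := by
    intro u t ht
    rw [trans_eq]
    calc m * ε ≤ m * ∫ x in Icc (-k) k, post f₁ f₂ y u x :=
          mul_le_mul_of_nonneg_left (hεm u) hm0.le
      _ = ∫ x in Icc (-k) k, m * post f₁ f₂ y u x := by rw [integral_const_mul]
      _ ≤ ∫ x in Icc (-k) k, f₂ (x - t) * post f₁ f₂ y u x := by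
          refine setIntegral_mono_on ((pint u).const_mul _).integrableOn (tint u t).integrableOn
            measurableSet_Icc fun x hx => ?_
          exact mul_le_mul_of_nonneg_right (hml t ht x hx) (ppos _ _)
      _ ≤ _ := setIntegral_le_integral (tint u t)
          (.of_forall fun x => mul_nonneg (hf₂pos _).le (ppos _ _))
  set δ := min (1/2) (m * ε) with hδd
  have hδ0 : 0 < δ := lt_min (by norm_num) (by positivity)
  have hδ1 : δ ≤ 1/2 := min_le_left _ _
  have hδ : ∀ u t, (Icc (0:ℝ) 1).indicator (fun _ => δ) t ≤ gibbsTrans f₁ f₂ y u t := by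
    intro u t
    by_cases ht : t ∈ Icc (0:ℝ) 1
    · rw [indicator_of_mem ht]; exact (min_le_right _ _).trans (hlow u t ht)
    · rw [indicator_of_notMem ht]; exact h0 u t
  have ker := aux_kernel (gibbsTrans f₁ f₂ y) δ hm h0 hpi hp1 ⟨M₂, hB⟩ hδ
  set C := ∫ θ', cnorm f₁ f₂ y θ' with hC
  have piint : Integrable fun t => cnorm f₁ f₂ y t / C := hCint.div_const C
  have pi1 : ∫ t, cnorm f₁ f₂ y t / C = 1 := by
    rw [integral_div]; exact div_self hCpos.ne'
  refine ⟨2 / (1 - δ), 1 - δ, by linarith, by linarith, fun θ₀ n hn => ?_⟩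
  have main : ∀ n : ℕ, Integrable (gibbsTransN f₁ f₂ y (n+1) θ₀) ∧
      (∫ t, gibbsTransN f₁ f₂ y (n+1) θ₀ t) = 1 ∧
      ∫ t, |gibbsTransN f₁ f₂ y (n+1) θ₀ t - cnorm f₁ f₂ y t / C| ≤ 2 * (1 - δ) ^ n := by
    intro n
    induction n with
    | zero =>
      have e : gibbsTransN f₁ f₂ y (0+1) θ₀ = gibbsTrans f₁ f₂ y θ₀ := by
        funext t; simp [gibbsTransN]
      rw [e]
      refine ⟨hpi _, hp1 _, ?_⟩
      calc _ ≤ ∫ t, (gibbsTrans f₁ f₂ y θ₀ t + cnorm f₁ f₂ y t / C) := by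
            refine integral_mono ((hpi θ₀).sub piint).norm ((hpi θ₀).add piint) fun t => ?_
            have a := h0 θ₀ t
            have b : 0 ≤ cnorm f₁ f₂ y t / C := (div_pos (hcpos t) hCpos).le
            simp only
            rw [abs_le]; constructor <;> linarith
        _ = 2 * (1 - δ) ^ 0 := by
            rw [integral_add (hpi _) piint, hp1, pi1]; norm_num
    | succ n ih =>
      obtain ⟨ia, ib, ic⟩ := ih
      have e : gibbsTransN f₁ f₂ y (n+1+1) θ₀ =
          fun t => ∫ u, gibbsTransN f₁ f₂ y (n+1) θ₀ u * gibbsTrans f₁ f₂ y u t := by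
        funext t; simp [gibbsTransN]
      obtain ⟨ka, kb, -⟩ := ker _ ia
      rw [e]
      refine ⟨ka, kb.trans ib, ?_⟩
      obtain ⟨-, -, kc⟩ := ker _ (ia.sub piint)
      have bi : ∀ g : ℝ → ℝ, Integrable g → ∀ t,
          Integrable fun u => g u * gibbsTrans f₁ f₂ y u t := by
        intro g hg t
        refine hg.mul_bdd (c := M₂)
          (hm.comp (measurable_id.prodMk measurable_const)).aestronglyMeasurable ?_
        exact .of_forall fun u => by rw [Real.norm_of_nonneg (h0 _ _)]; exact hB _ _
      have e2 : ∀ t, (∫ u, gibbsTransN f₁ f₂ y (n+1) θ₀ u * gibbsTrans f₁ f₂ y u t)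
          - cnorm f₁ f₂ y t / C
          = ∫ u, (gibbsTransN f₁ f₂ y (n+1) θ₀ u - cnorm f₁ f₂ y u / C)
            * gibbsTrans f₁ f₂ y u t := by
        intro t
        simp only [sub_mul]
        rw [integral_sub (bi _ ia t) (bi _ piint t)]
        congr 1
        simp only [div_mul_eq_mul_div]
        rw [integral_div, hst]
      simp only [e2]
      refine (kc ?_).trans ?_
      · simp only [Pi.sub_apply]
        rw [integral_sub ia piint, ib, pi1, sub_self]
      · rw [pow_succ']
        have := mul_le_mul_of_nonneg_left ic (by linarith : 0 ≤ 1 - δ)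
        simp only [Pi.sub_apply]
        linarith
  obtain ⟨n, rfl⟩ : ∃ k, n = k + 1 := ⟨n - 1, by omega⟩
  refine (main n).2.2.trans_eq ?_
  have : 1 - δ ≠ 0 := by linarith
  rw [pow_succ]; field_simp
end
end

section
/- Suppose there exists k > 0 such that limsup_{|θ|→∞} ∫_{{x : |x| > k}} π(x | θ) dx < 1 (PTIP). Then for every θ₁ ∈ ℝ, the transition density of the marginal Θ-chain is bounded away from zero uniformly in the starting point: inf_{θ₀ ∈ ℝ} p(θ₀, θ₁) > 0; indeed p(θ₀, θ₁) ≥ (inf_{|x| ≤ k} f₂(x − θ₁)) · ∫_{{x : |x| ≤ k}} π(x | θ₀) dx, and the right-hand factor ∫_{{|x| ≤ k}} π(x | θ₀) dx has a strictly positive infimum over θ₀ ∈ ℝ. -/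
open MeasureTheory Filter Set

noncomputable section

/-- under PTIP, the transition density of the marginal Θ-chain is bounded
away from zero uniformly in the starting point, via the stated lower bound. -/
theorem ptip_transition_bounded_below (f₁ f₂ : ℝ → ℝ) (y : ℝ)
    (hf₁c : Continuous f₁) (hf₂c : Continuous f₂)
    (hf₁pos : ∀ t, 0 < f₁ t) (hf₂pos : ∀ t, 0 < f₂ t)
    (hf₁bdd : ∃ M, ∀ t, f₁ t ≤ M) (hf₂bdd : ∃ M, ∀ t, f₂ t ≤ M)
    (hf₁sym : ∀ t, f₁ (-t) = f₁ t) (hf₂sym : ∀ t, f₂ (-t) = f₂ t)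
    (hf₁prob : ∫ t, f₁ t = 1) (hf₂prob : ∫ t, f₂ t = 1)
    (hjint : ∀ θ, Integrable (fun x => fjoint f₁ f₂ y θ x))
    (hcpos : ∀ θ, 0 < cnorm f₁ f₂ y θ)
    (k : ℝ) (hk : 0 < k)
    (hPTIP : limsup (fun θ => ∫ x in {x : ℝ | k < |x|}, post f₁ f₂ y θ x)
      (cocompact ℝ) < 1) :
    (∀ θ₁ : ℝ, 0 < ⨅ θ₀, gibbsTrans f₁ f₂ y θ₀ θ₁) ∧
    (∀ θ₀ θ₁ : ℝ,
      sInf ((fun x => f₂ (x - θ₁)) '' {x : ℝ | |x| ≤ k}) *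
          ∫ x in {x : ℝ | |x| ≤ k}, post f₁ f₂ y θ₀ x ≤
        gibbsTrans f₁ f₂ y θ₀ θ₁) ∧
    (0 < ⨅ θ₀ : ℝ, ∫ x in {x : ℝ | |x| ≤ k}, post f₁ f₂ y θ₀ x) := by
  obtain ⟨M₂, hM₂⟩ := hf₂bdd
  have hM₂pos : 0 < M₂ := (hf₂pos 0).trans_le (hM₂ 0)
  set S : Set ℝ := {x : ℝ | |x| ≤ k} with hS
  have hSI : S = Icc (-k) k := by ext x; simp [hS, abs_le]
  have hScomp : IsCompact S := hSI ▸ isCompact_Icc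
  have hSm : MeasurableSet S := hSI ▸ measurableSet_Icc
  have hSc : {x : ℝ | k < |x|} = Sᶜ := by ext x; simp [hS]
  have hSne : S.Nonempty := ⟨0, by simp [hS, hk.le]⟩
  have hSvol : volume.real S = 2 * k := by
    rw [hSI, Real.volume_real_Icc_of_le (by linarith)]; ring
  have hSfin : volume S ≠ ⊤ := hScomp.measure_lt_top.ne
  have hjpos : ∀ θ x, 0 < fjoint f₁ f₂ y θ x := fun θ x => mul_pos (hf₁pos _) (hf₂pos _)
  have hpint : ∀ θ, Integrable (fun x => post f₁ f₂ y θ x) := fun θ => (hjint θ).div_const _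
  have hptot : ∀ θ, ∫ x, post f₁ f₂ y θ x = 1 := by
    intro θ
    simp only [post]
    rw [integral_div]
    exact div_self (hcpos θ).ne'
  have hppos : ∀ θ x, 0 < post f₁ f₂ y θ x := fun θ x => div_pos (hjpos θ x) (hcpos θ)
  have hAB : ∀ θ, (∫ x in S, post f₁ f₂ y θ x) + ∫ x in Sᶜ, post f₁ f₂ y θ x = 1 := by
    intro θ
    rw [integral_add_compl hSm (hpint θ), hptot]
  have hA0 : ∀ θ, 0 ≤ ∫ x in S, post f₁ f₂ y θ x :=
    fun θ => integral_nonneg fun x => (hppos θ x).le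
  have hf₁int : Integrable f₁ := by
    by_contra h
    rw [integral_undef h] at hf₁prob
    norm_num at hf₁prob
  have hcle : ∀ θ, cnorm f₁ f₂ y θ ≤ M₂ := by
    intro θ
    have h1 : ∫ x, f₁ (y - x) * M₂ = M₂ := by
      rw [integral_mul_const, integral_sub_left_eq_self f₁ volume y, hf₁prob, one_mul]
    rw [← h1]
    exact integral_mono (hjint θ) ((hf₁int.comp_sub_left y).mul_const _)
      fun x => mul_le_mul_of_nonneg_left (hM₂ _) (hf₁pos _).le
  have hthird : ∃ δ : ℝ, 0 < δ ∧ ∀ θ, δ ≤ ∫ x in S, post f₁ f₂ y θ x := by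
    obtain ⟨r, hr1, hr2⟩ := exists_between hPTIP
    rw [hSc] at hr1
    have hev := eventually_lt_of_limsup_lt hr1
      (isBoundedUnder_of ⟨1, fun θ => by linarith [hAB θ, hA0 θ]⟩)
    obtain ⟨K, hK, hKs⟩ := mem_cocompact.1 hev
    obtain ⟨m, hm, hmle⟩ : ∃ m : ℝ, 0 < m ∧ ∀ θ ∈ K, ∀ x ∈ S, m ≤ fjoint f₁ f₂ y θ x := by
      rcases K.eq_empty_or_nonempty with rfl | hne
      · exact ⟨1, one_pos, by simp⟩
      · have hcont : Continuous (fun p : ℝ × ℝ => fjoint f₁ f₂ y p.1 p.2) := by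
          unfold fjoint; fun_prop
        obtain ⟨p, -, hp⟩ := (hK.prod hScomp).exists_isMinOn (hne.prod hSne) hcont.continuousOn
        exact ⟨_, hjpos p.1 p.2, fun θ hθ x hx => hp (show (θ, x) ∈ K ×ˢ S from ⟨hθ, hx⟩)⟩
    refine ⟨min (1 - r) (2 * k * (m / M₂)), lt_min (by linarith) (by positivity), fun θ => ?_⟩
    by_cases hθ : θ ∈ K
    · refine (min_le_right _ _).trans ?_
      have h1 : ∫ x in S, m / M₂ = 2 * k * (m / M₂) := by
        rw [setIntegral_const, hSvol, smul_eq_mul]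
      rw [← h1]
      refine setIntegral_mono_on (integrableOn_const hSfin) (hpint θ).integrableOn hSm ?_
      intro x hx
      exact div_le_div₀ (hjpos θ x).le (hmle θ hθ x hx) (hcpos θ) (hcle θ)
    · have h2 : (∫ x in Sᶜ, post f₁ f₂ y θ x) < r := hKs hθ
      exact (min_le_left _ _).trans (by linarith [hAB θ])
  have hbelow : ∀ θ₁, BddBelow ((fun x => f₂ (x - θ₁)) '' S) := fun θ₁ =>
    ⟨0, by rintro _ ⟨x, -, rfl⟩; exact (hf₂pos _).le⟩
  have hsecond : ∀ θ₀ θ₁ : ℝ, sInf ((fun x => f₂ (x - θ₁)) '' S) *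
      ∫ x in S, post f₁ f₂ y θ₀ x ≤ gibbsTrans f₁ f₂ y θ₀ θ₁ := by
    intro θ₀ θ₁
    set s := sInf ((fun x => f₂ (x - θ₁)) '' S)
    have hint : Integrable (fun x => f₂ (x - θ₁) * fjoint f₁ f₂ y θ₀ x) := by
      refine (hjint θ₀).bdd_mul (c := M₂) (by fun_prop) (Eventually.of_forall fun x => ?_)
      rw [Real.norm_of_nonneg (hf₂pos _).le]
      exact hM₂ _
    have h1 : s * ∫ x in S, fjoint f₁ f₂ y θ₀ x ≤
        ∫ x, f₂ (x - θ₁) * fjoint f₁ f₂ y θ₀ x := by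
      rw [← integral_const_mul]
      refine (setIntegral_mono_on ((hjint θ₀).const_mul s).integrableOn hint.integrableOn hSm
        fun x hx => ?_).trans (setIntegral_le_integral hint (Eventually.of_forall fun x => ?_))
      · exact mul_le_mul_of_nonneg_right (csInf_le (hbelow θ₁) ⟨x, hx, rfl⟩) (hjpos _ _).le
      · exact (mul_pos (hf₂pos _) (hjpos _ _)).le
    simp only [post, gibbsTrans]
    rw [integral_div, one_div, ← mul_div_assoc, div_eq_inv_mul]
    exact mul_le_mul_of_nonneg_left h1 (inv_nonneg.2 (hcpos _).le)
  obtain ⟨δ, hδ, hδle⟩ := hthird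
  refine ⟨fun θ₁ => ?_, hsecond, hδ.trans_le (le_ciInf hδle)⟩
  have hspos : 0 < sInf ((fun x => f₂ (x - θ₁)) '' S) := by
    obtain ⟨x, -, hx⟩ := (hScomp.image (f := fun x => f₂ (x - θ₁)) (by fun_prop)).sInf_mem
      (hSne.image _)
    rw [← hx]
    exact hf₂pos _
  exact (mul_pos hspos hδ).trans_le (le_ciInf fun θ₀ =>
    (mul_le_mul_of_nonneg_left (hδle θ₀) hspos.le).trans (hsecond θ₀ θ₁))
end
end

section
/- Suppose the model is robust in data (RID): for every z ∈ ℝ, ∫_{(-∞, θ+z]} π(x | θ) dx → F₂(z) := ∫_{(-∞, z]} f₂(u) du as |θ| → ∞. Then the marginal Θ-chain of the centred Gibbs sampler is not geometrically ergodic: there do not exist r ∈ [0,1) and a function M : ℝ → [0,∞) such that for every θ₀ ∈ ℝ and every n ≥ 1, ‖Pⁿ(θ₀, ·) − Π‖_TV ≤ M(θ₀)·rⁿ. -/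
open MeasureTheory Filter Set

noncomputable section

def BM (h : ℝ → ℝ) : Prop := Measurable h ∧ ∃ b, ∀ x, |h x| ≤ b

lemma BM.bound {h : ℝ → ℝ} (hh : BM h) : ∃ b, 0 ≤ b ∧ ∀ x, |h x| ≤ b := by
  obtain ⟨_, b, hb⟩ := hh
  exact ⟨b, (abs_nonneg _).trans (hb 0), hb⟩

lemma BM.mul {h k : ℝ → ℝ} (hh : BM h) (hk : BM k) : BM (fun x => h x * k x) := by
  obtain ⟨b, b0, hb⟩ := hh.bound
  obtain ⟨d, d0, hd⟩ := hk.bound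
  refine ⟨hh.1.mul hk.1, b * d, fun x => ?_⟩
  rw [abs_mul]
  exact mul_le_mul (hb x) (hd x) (abs_nonneg _) b0

lemma BM.const (a : ℝ) : BM (fun _ => a) := ⟨measurable_const, |a|, fun _ => le_rfl⟩

lemma BM.sub {h k : ℝ → ℝ} (hh : BM h) (hk : BM k) : BM (fun x => h x - k x) := by
  obtain ⟨b, b0, hb⟩ := hh.bound
  obtain ⟨d, d0, hd⟩ := hk.bound
  refine ⟨hh.1.sub hk.1, b + d, fun x => ?_⟩
  exact (abs_sub _ _).trans (add_le_add (hb x) (hd x))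

lemma BM.ind {B : Set ℝ} (hB : MeasurableSet B) : BM (B.indicator (fun _ => (1:ℝ))) := by
  refine ⟨measurable_const.indicator hB, 1, fun x => ?_⟩
  by_cases hx : x ∈ B <;> simp [hx]

lemma BM.integrable {h w : ℝ → ℝ} (hh : BM h) (hw : Integrable w) :
    Integrable (fun x => w x * h x) := by
  obtain ⟨b, b0, hb⟩ := hh.bound
  exact hw.mul_bdd hh.1.aestronglyMeasurable (Eventually.of_forall (fun x => by simpa using hb x))

def TT (p : ℝ → ℝ → ℝ) (h : ℝ → ℝ) (θ : ℝ) : ℝ := ∫ u, p θ u * h u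

structure MK (p : ℝ → ℝ → ℝ) (w : ℝ → ℝ) : Prop where
  pm : Measurable (Function.uncurry p)
  p0 : ∀ θ u, 0 ≤ p θ u
  pb : ∃ b, ∀ θ u, p θ u ≤ b
  pint : ∀ θ, Integrable (p θ)
  p1 : ∀ θ, ∫ u, p θ u = 1
  wm : Measurable w
  w0 : ∀ θ, 0 ≤ w θ
  wi : Integrable w
  w1 : ∫ θ, w θ = 1
  rev : ∀ θ u, w θ * p θ u = w u * p u θ

variable {p : ℝ → ℝ → ℝ} {w : ℝ → ℝ}

lemma TT_abs (hp : MK p w) {h : ℝ → ℝ} {b : ℝ} (hb : ∀ x, |h x| ≤ b) (hm : BM h) (θ : ℝ) :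
    |TT p h θ| ≤ b := by
  unfold TT
  calc |∫ u, p θ u * h u| ≤ ∫ u, p θ u * b := by
        rw [← Real.norm_eq_abs]
        refine (norm_integral_le_of_norm_le ((hp.pint θ).mul_const b) (Eventually.of_forall fun u => ?_))
        rw [Real.norm_eq_abs, abs_mul, abs_of_nonneg (hp.p0 θ u)]
        exact mul_le_mul_of_nonneg_left (hb u) (hp.p0 θ u)
    _ = b := by rw [integral_mul_const, hp.p1, one_mul]

lemma TT_BM (hp : MK p w) {h : ℝ → ℝ} (hh : BM h) : BM (TT p h) := by
  obtain ⟨b, b0, hb⟩ := hh.bound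
  refine ⟨?_, b, TT_abs hp hb hh⟩
  have : StronglyMeasurable (Function.uncurry fun θ u => p θ u * h u) :=
    (hp.pm.mul (hh.1.comp measurable_snd)).stronglyMeasurable
  exact this.integral_prod_right.measurable

lemma TT_one (hp : MK p w) (a : ℝ) : TT p (fun _ => a) = fun _ => a := by
  funext θ
  simp [TT, integral_mul_const, hp.p1]

lemma prod_int (hp : MK p w) {h k : ℝ → ℝ} (hh : BM h) (hk : BM k) :
    Integrable (Function.uncurry fun θ u => w θ * h θ * (p θ u * k u)) (volume.prod volume) := by
  obtain ⟨b, b0, hb⟩ := hh.bound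
  obtain ⟨d, d0, hd⟩ := hk.bound
  have hm1 : Measurable (Function.uncurry fun θ u => w θ * p θ u) :=
    (hp.wm.comp measurable_fst).mul hp.pm
  have h1 : Integrable (Function.uncurry fun θ u => w θ * p θ u) (volume.prod volume) := by
    rw [integrable_prod_iff hm1.aestronglyMeasurable]
    refine ⟨Eventually.of_forall fun θ => (hp.pint θ).const_mul (w θ), ?_⟩
    have : (fun x => ∫ y, ‖Function.uncurry (fun θ u => w θ * p θ u) (x, y)‖) = w := by
      funext x
      simp only [Function.uncurry, norm_mul, Real.norm_eq_abs, abs_of_nonneg (hp.w0 _),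
        abs_of_nonneg (hp.p0 _ _)]
      rw [integral_const_mul, hp.p1, mul_one]
    rw [this]; exact hp.wi
  have h2 : Integrable (fun z : ℝ × ℝ => Function.uncurry (fun θ u => w θ * p θ u) z *
      (h z.1 * k z.2)) (volume.prod volume) := by
    refine h1.mul_bdd (c := b * d) ?_ (Eventually.of_forall fun z => ?_)
    · exact ((hh.1.comp measurable_fst).mul (hk.1.comp measurable_snd)).aestronglyMeasurable
    · rw [norm_mul]; exact mul_le_mul (hb _) (hd _) (norm_nonneg _) b0
  refine h2.congr (Eventually.of_forall fun z => ?_)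
  simp only [Function.uncurry]; ring

lemma selfadj (hp : MK p w) {h k : ℝ → ℝ} (hh : BM h) (hk : BM k) :
    ∫ θ, w θ * (h θ * TT p k θ) = ∫ θ, w θ * (TT p h θ * k θ) := by
  have e1 : ∫ θ, w θ * (h θ * TT p k θ) = ∫ θ, ∫ u, w θ * h θ * (p θ u * k u) := by
    congr 1; funext θ; rw [integral_const_mul, TT, mul_assoc]
  rw [e1, integral_integral_swap (prod_int hp hh hk)]
  congr 1; funext u
  rw [TT, ← integral_mul_const, ← integral_const_mul]
  congr 1; funext θ
  have := hp.rev θ u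
  calc w θ * h θ * (p θ u * k u) = (w θ * p θ u) * h θ * k u := by ring
    _ = _ := by rw [this]; ring

lemma iter_BM (hp : MK p w) {h : ℝ → ℝ} (hh : BM h) (n : ℕ) : BM ((TT p)^[n] h) := by
  induction n with
  | zero => exact hh
  | succ n ih => rw [Function.iterate_succ_apply']; exact TT_BM hp ih

lemma iter_selfadj (hp : MK p w) {h k : ℝ → ℝ} (hh : BM h) (hk : BM k) (n : ℕ) :
    ∫ θ, w θ * (h θ * (TT p)^[n] k θ) = ∫ θ, w θ * ((TT p)^[n] h θ * k θ) := by
  induction n generalizing k with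
  | zero => rfl
  | succ n ih =>
    rw [Function.iterate_succ_apply, ih (TT_BM hp hk), selfadj hp (iter_BM hp hh n) hk,
      Function.iterate_succ_apply']

lemma CS (hp : MK p w) {h k : ℝ → ℝ} (hh : BM h) (hk : BM k) :
    (∫ θ, w θ * (h θ * k θ)) ^ 2 ≤ (∫ θ, w θ * (h θ * h θ)) * (∫ θ, w θ * (k θ * k θ)) := by
  have i1 := (hh.mul hh).integrable hp.wi
  have i2 := (hh.mul hk).integrable hp.wi
  have i3 := (hk.mul hk).integrable hp.wi
  have := discrim_le_zero (a := ∫ θ, w θ * (k θ * k θ)) (b := 2 * ∫ θ, w θ * (h θ * k θ))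
    (c := ∫ θ, w θ * (h θ * h θ)) (fun t => by
      have : (∫ θ, w θ * (k θ * k θ)) * (t * t) + 2 * (∫ θ, w θ * (h θ * k θ)) * t
        + ∫ θ, w θ * (h θ * h θ) = ∫ θ, w θ * (h θ + t * k θ) ^ 2 := by
        rw [← integral_mul_const, ← integral_const_mul, ← integral_mul_const,
          ← integral_add (i3.mul_const _) ((i2.const_mul 2).mul_const t), ← integral_add]
        rotate_left
        · exact ((i3.mul_const _).add ((i2.const_mul 2).mul_const t))
        · exact i1
        congr 1; funext θ; ring
      rw [this]
      exact integral_nonneg fun θ => mul_nonneg (hp.w0 θ) (sq_nonneg _))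
  rw [discrim] at this
  nlinarith

lemma gap_core (hp : MK p w) {h : ℝ → ℝ} (hh : BM h) {r K : ℝ} (r0 : 0 ≤ r)
    (hK : ∀ n : ℕ, 1 ≤ n → ∫ θ, w θ * (h θ * (TT p)^[n] h θ) ≤ K * r ^ n) :
    ∫ θ, w θ * (h θ * TT p h θ) ≤ r * ∫ θ, w θ * (h θ * h θ) := by
  set b : ℕ → ℝ := fun n => ∫ θ, w θ * (h θ * (TT p)^[n] h θ) with hb
  have hb0 : 0 ≤ b 0 := integral_nonneg fun θ => mul_nonneg (hp.w0 θ) (mul_self_nonneg _)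
  have hcs : ∀ n, b n ^ 2 ≤ b 0 * b (n + n) := by
    intro n
    refine (CS hp hh (iter_BM hp hh n)).trans (le_of_eq ?_)
    congr 1
    rw [hb]; simp only
    rw [Function.iterate_add_apply, iter_selfadj hp hh (iter_BM hp hh n)]
  change b 1 ≤ r * b 0
  by_contra hcon
  push Not at hcon
  rcases hb0.eq_or_lt with h0 | h0
  · have := hcs 1
    rw [← h0] at this hcon
    nlinarith
  have hl : r < b 1 / b 0 := by rwa [lt_div_iff₀ h0]
  set l := b 1 / b 0
  have l0 : 0 < l := r0.trans_lt hl
  have key : ∀ k : ℕ, l ^ (2 ^ k) * b 0 ≤ b (2 ^ k) := by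
    intro k
    induction k with
    | zero => simp [l, h0.ne']
    | succ k ih =>
      have h1 := hcs (2 ^ k)
      have h2 : (l ^ (2 ^ k) * b 0) ^ 2 ≤ b (2 ^ k) ^ 2 := by gcongr
      have e : 2 ^ (k + 1) = 2 ^ k + 2 ^ k := by ring
      rw [e, pow_add]
      have h3 : b 0 * (l ^ 2 ^ k * l ^ 2 ^ k * b 0) ≤ b 0 * b (2 ^ k + 2 ^ k) := by
        refine le_trans (le_of_eq ?_) (h2.trans h1); ring
      exact le_of_mul_le_mul_left h3 h0
  have hlim : Tendsto (fun n : ℕ => K * (r / l) ^ n) atTop (nhds (K * 0)) :=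
    (tendsto_pow_atTop_nhds_zero_of_lt_one (by positivity) (by rwa [div_lt_one l0])).const_mul K
  rw [mul_zero] at hlim
  have h2 : Tendsto (fun k : ℕ => 2 ^ k) atTop atTop := tendsto_pow_atTop_atTop_of_one_lt (by norm_num : (1:ℕ) < 2)
  have := (hlim.comp h2).eventually (gt_mem_nhds h0)
  obtain ⟨k, hk⟩ := this.exists
  have h5 := (key k).trans (hK (2 ^ k) Nat.one_le_two_pow)
  simp only [Function.comp, div_pow] at hk
  rw [← mul_div_assoc, div_lt_iff₀ (by positivity)] at hk
  linarith

/-- n-step -/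
structure NS (p : ℝ → ℝ → ℝ) (pn : ℝ → ℝ → ℝ) (n : ℕ) : Prop where
  m : Measurable (Function.uncurry pn)
  p0 : ∀ θ u, 0 ≤ pn θ u
  i : ∀ θ, Integrable (pn θ)
  T : ∀ h, BM h → ∀ θ, TT pn h θ = (TT p)^[n] h θ

lemma NS_one (hp : MK p w) : NS p p 1 := ⟨hp.pm, hp.p0, hp.pint, fun _ _ _ => rfl⟩

lemma NS_succ (hp : MK p w) {pn : ℝ → ℝ → ℝ} {n : ℕ} (hn : NS p pn n) :
    NS p (fun θ v => ∫ u, pn θ u * p u v) (n + 1) := by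
  have hI : ∀ θ, Integrable (Function.uncurry fun u v => pn θ u * p u v) (volume.prod volume) := by
    intro θ
    have hm1 : Measurable (Function.uncurry fun u v => pn θ u * p u v) :=
      ((hn.m.comp measurable_prodMk_left).comp measurable_fst).mul hp.pm
    rw [integrable_prod_iff hm1.aestronglyMeasurable]
    refine ⟨Eventually.of_forall fun u => (hp.pint u).const_mul (pn θ u), ?_⟩
    have : (fun x => ∫ y, ‖Function.uncurry (fun u v => pn θ u * p u v) (x, y)‖) = pn θ := by
      funext x
      simp only [Function.uncurry, norm_mul, Real.norm_eq_abs, abs_of_nonneg (hn.p0 _ _),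
        abs_of_nonneg (hp.p0 _ _)]
      rw [integral_const_mul, hp.p1, mul_one]
    rw [this]; exact hn.i θ
  refine ⟨?_, fun θ v => integral_nonneg fun u => mul_nonneg (hn.p0 _ _) (hp.p0 _ _),
    fun θ => (hI θ).integral_prod_right, ?_⟩
  · have : StronglyMeasurable (Function.uncurry fun (z : ℝ × ℝ) (u : ℝ) => pn z.1 u * p u z.2) := by
      refine Measurable.stronglyMeasurable ?_
      have a1 : Measurable fun y : (ℝ × ℝ) × ℝ => Function.uncurry pn (y.1.1, y.2) :=
        hn.m.comp (by fun_prop)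
      have a2 : Measurable fun y : (ℝ × ℝ) × ℝ => Function.uncurry p (y.2, y.1.2) :=
        hp.pm.comp (by fun_prop)
      exact a1.mul a2
    exact this.integral_prod_right.measurable
  · intro h hh θ
    obtain ⟨b, b0, hb⟩ := hh.bound
    rw [Function.iterate_succ_apply, ← hn.T _ (TT_BM hp hh)]
    unfold TT
    have e1 : ∀ v, (∫ u, pn θ u * p u v) * h v = ∫ u, pn θ u * p u v * h v := fun v => by
      rw [integral_mul_const]
    simp_rw [e1]
    rw [← integral_integral_swap]
    · congr 1; funext u; rw [← integral_const_mul]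
      congr 1; funext v; ring
    · refine ((hI θ).mul_bdd (c := b) (g := fun z : ℝ × ℝ => h z.2)
        (hh.1.comp measurable_snd).aestronglyMeasurable (Eventually.of_forall fun z => hb _)).congr
        (Eventually.of_forall fun z => rfl)

lemma ind_sq (B : Set ℝ) (x : ℝ) : B.indicator (fun _ => (1:ℝ)) x * B.indicator (fun _ => (1:ℝ)) x =
   B.indicator (fun _ => (1:ℝ)) x := by
  by_cases hx : x ∈ B <;> simp [hx]

abbrev one (B : Set ℝ) : ℝ → ℝ := B.indicator (fun _ => (1:ℝ))

lemma one_nonneg' (B : Set ℝ) (x : ℝ) : 0 ≤ one B x := by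
  by_cases hx : x ∈ B <;> simp [one, hx]
lemma one_le' (B : Set ℝ) (x : ℝ) : one B x ≤ 1 := by
  by_cases hx : x ∈ B <;> simp [one, hx]

lemma iter_const (hp : MK p w) (n : ℕ) (a : ℝ) : (TT p)^[n] (fun _ => a) = fun _ => a := by
  induction n with
  | zero => rfl
  | succ n ih => rw [Function.iterate_succ_apply, TT_one hp, ih]

lemma gap_set (hp : MK p w) (pn : ℕ → ℝ → ℝ → ℝ) (hn : ∀ n, 1 ≤ n → NS p (pn n) n) {r : ℝ}
    (r0 : 0 ≤ r) {k : ℝ} (k0 : 0 ≤ k) {B : Set ℝ} (hB : MeasurableSet B)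
    (hM : ∀ θ ∈ B, ∀ n, 1 ≤ n → ∫ u, |pn n θ u - w u| ≤ k * r ^ n) :
    (∫ θ, w θ * (one B θ * TT p (one B) θ)) - (∫ θ, w θ * one B θ) ^ 2
     ≤ r * ((∫ θ, w θ * one B θ) - (∫ θ, w θ * one B θ) ^ 2) := by
  set m := ∫ θ, w θ * one B θ with hm
  have bo : BM (one B) := BM.ind hB
  have io := bo.integrable hp.wi
  have m0 : 0 ≤ m := integral_nonneg fun θ => mul_nonneg (hp.w0 θ) (one_nonneg' B θ)
  have m1 : m ≤ 1 := by
    rw [← hp.w1]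
    refine integral_mono io hp.wi fun θ => ?_
    exact mul_le_of_le_one_right (hp.w0 θ) (one_le' B θ)
  set h : ℝ → ℝ := fun θ => one B θ - m with hh
  have bh : BM h := bo.sub (BM.const m)
  have h1 : ∀ x, |h x| ≤ 1 := fun x => by
    rw [abs_le]; constructor <;> simp only [hh] <;> linarith [one_nonneg' B x, one_le' B x]
  have wh : ∫ θ, w θ * h θ = 0 := by
    simp only [hh, mul_sub]
    rw [integral_sub io (hp.wi.mul_const m), integral_mul_const, hp.w1, ← hm]; ring
  have wTh : ∀ n, ∫ θ, w θ * (TT p)^[n] h θ = 0 := fun n => by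
    have := iter_selfadj hp (BM.const 1) bh n
    simp only [iter_const hp, one_mul] at this
    rw [this, wh]
  have hb : ∀ n, ∫ θ, w θ * (h θ * (TT p)^[n] h θ) = ∫ θ, w θ * (one B θ * (TT p)^[n] h θ) := by
    intro n
    have e : ∀ θ, w θ * (h θ * (TT p)^[n] h θ) =
      w θ * (one B θ * (TT p)^[n] h θ) - m * (w θ * (TT p)^[n] h θ) := fun θ => by
        simp only [hh]; ring
    have bn := iter_BM hp bh n
    simp_rw [e]
    rw [integral_sub ((bo.mul bn).integrable hp.wi) ((bn.integrable hp.wi).const_mul m),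
      integral_const_mul, wTh, mul_zero, sub_zero]
  have main := gap_core hp bh (K := k) r0 (fun n hn1 => by
    rw [hb]
    have hT : ∀ θ ∈ B, (TT p)^[n] h θ ≤ k * r ^ n := by
      intro θ hθ
      refine le_trans ?_ (hM θ hθ n hn1)
      rw [← (hn n hn1).T h bh θ, TT]
      have i1 := bh.integrable ((hn n hn1).i θ)
      have i2 := bh.integrable hp.wi
      have : ∫ u, pn n θ u * h u = ∫ u, (pn n θ u - w u) * h u := by
        simp only [sub_mul]
        rw [integral_sub i1 i2, wh, sub_zero]
      rw [this]
      refine integral_mono ?_ ((((hn n hn1).i θ).sub hp.wi).abs) fun u => ?_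
      · simp only [sub_mul]; exact i1.sub i2
      · refine (le_abs_self _).trans ?_
        simp only [abs_mul]
        exact mul_le_of_le_one_right (abs_nonneg _) (h1 u)
    calc ∫ θ, w θ * (one B θ * (TT p)^[n] h θ) ≤ ∫ θ, w θ * (k * r ^ n) := by
          refine integral_mono ((bo.mul (iter_BM hp bh n)).integrable hp.wi) (hp.wi.mul_const _)
            fun θ => mul_le_mul_of_nonneg_left ?_ (hp.w0 θ)
          by_cases hθ : θ ∈ B
          · simpa [one, hθ] using hT θ hθ
          · simp only [one, indicator_of_notMem hθ, zero_mul]; positivity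
      _ = k * r ^ n := by rw [integral_mul_const, hp.w1, one_mul])
  have e1 : ∫ θ, w θ * (h θ * h θ) = m - m ^ 2 := by
    have := hb 0
    simp only [Function.iterate_zero, id] at this
    rw [this]
    have e : ∀ θ, w θ * (one B θ * h θ) = w θ * one B θ - (w θ * one B θ) * m := fun θ => by
      simp only [hh]; have := ind_sq B θ; simp only [one]; rw [mul_sub, this]; ring
    simp_rw [e]
    rw [integral_sub io (io.mul_const m), integral_mul_const, ← hm]; ring
  have e2 : ∫ θ, w θ * (h θ * TT p h θ) = (∫ θ, w θ * (one B θ * TT p (one B) θ)) - m ^ 2 := by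
    have := hb 1
    simp only [Function.iterate_one] at this
    rw [this]
    have e0 : ∀ θ, TT p h θ = TT p (one B) θ - m := fun θ => by
      have a1 := bo.integrable (hp.pint θ)
      simp only [TT, hh, mul_sub]
      rw [integral_sub a1 ((hp.pint θ).mul_const m), integral_mul_const, hp.p1, one_mul]
    have e : ∀ θ, w θ * (one B θ * TT p h θ) = w θ * (one B θ * TT p (one B) θ) - (w θ * one B θ) * m :=
      fun θ => by rw [e0]; ring
    simp_rw [e]
    rw [integral_sub ((bo.mul (TT_BM hp bo)).integrable hp.wi) (io.mul_const m), integral_mul_const, ← hm]; ring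
  rw [e1, e2] at main
  exact main

lemma gap_all (hp : MK p w) (pn : ℕ → ℝ → ℝ → ℝ) (hn : ∀ n, 1 ≤ n → NS p (pn n) n) {r : ℝ}
    (r0 : 0 ≤ r) (M : ℝ → ℝ) (hM : ∀ θ, ∀ n : ℕ, 1 ≤ n → ∫ u, |pn n θ u - w u| ≤ M θ * r ^ n)
    {B : Set ℝ} (hB : MeasurableSet B) :
    (∫ θ, w θ * (one B θ * TT p (one B) θ)) - (∫ θ, w θ * one B θ) ^ 2
     ≤ r * ((∫ θ, w θ * one B θ) - (∫ θ, w θ * one B θ) ^ 2) := by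
  let S : ℕ → Set ℝ := fun k => B ∩ ⋂ n : ℕ, {θ | 1 ≤ n → ∫ u, |pn n θ u - w u| ≤ k * r ^ n}
  have hS : ∀ k, MeasurableSet (S k) := by
    intro k
    refine hB.inter (MeasurableSet.iInter fun n => ?_)
    by_cases h1 : 1 ≤ n
    · simp only [h1, true_imp_iff]
      refine measurableSet_le ?_ measurable_const
      have : StronglyMeasurable (Function.uncurry fun θ u => |pn n θ u - w u|) := by
        refine Measurable.stronglyMeasurable ?_
        have a := ((hn n h1).m.sub (hp.wm.comp measurable_snd))
        exact measurable_norm.comp a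
      exact this.integral_prod_right.measurable
    · simp [h1]
  have hlim : ∀ θ, ∀ᶠ k in atTop, one (S k) θ = one B θ := by
    intro θ
    obtain ⟨k0, hk0⟩ := exists_nat_ge (M θ)
    filter_upwards [eventually_ge_atTop k0] with k hk
    have : θ ∈ S k ↔ θ ∈ B := by
      refine ⟨fun h => h.1, fun h => ⟨h, mem_iInter.2 fun n h1 => (hM θ n h1).trans ?_⟩⟩
      have : (k0:ℝ) ≤ k := by exact_mod_cast hk
      gcongr
      linarith
    by_cases hx : θ ∈ B
    · rw [one, one, indicator_of_mem hx, indicator_of_mem (this.2 hx)]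
    · rw [one, one, indicator_of_notMem hx, indicator_of_notMem (fun h => hx (this.1 h))]
  have hlim' : ∀ θ, Tendsto (fun k => one (S k) θ) atTop (nhds (one B θ)) := fun θ =>
    tendsto_const_nhds.congr' ((hlim θ).mono fun k hk => hk.symm)
  have ab : ∀ B x, |one B x| ≤ 1 := fun B x => by
    rw [abs_of_nonneg (one_nonneg' B x)]; exact one_le' B x
  have l1 : ∀ g : ℝ → ℝ, Integrable g → Tendsto (fun k => ∫ θ, g θ * one (S k) θ) atTop
      (nhds (∫ θ, g θ * one B θ)) := by
    intro g hg
    refine tendsto_integral_of_dominated_convergence (fun θ => ‖g θ‖)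
      (fun k => ((BM.ind (hS k)).integrable hg).1) hg.norm (fun k => Eventually.of_forall fun θ => ?_)
      (Eventually.of_forall fun θ => (hlim' θ).const_mul _)
    rw [norm_mul]; exact mul_le_of_le_one_right (norm_nonneg _) (ab _ _)
  have l2 : Tendsto (fun k => ∫ θ, w θ * (one (S k) θ * TT p (one (S k)) θ)) atTop
      (nhds (∫ θ, w θ * (one B θ * TT p (one B) θ))) := by
    refine tendsto_integral_of_dominated_convergence (fun θ => ‖w θ‖)
      (fun k => (((BM.ind (hS k)).mul (TT_BM hp (BM.ind (hS k)))).integrable hp.wi).1)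
      hp.wi.norm (fun k => Eventually.of_forall fun θ => ?_)
      (Eventually.of_forall fun θ => ((hlim' θ).mul (l1 _ (hp.pint θ))).const_mul _)
    rw [norm_mul, norm_mul]
    refine mul_le_of_le_one_right (norm_nonneg _) ?_
    exact mul_le_one₀ (ab _ _) (norm_nonneg _) (TT_abs hp (ab _) (BM.ind (hS k)) θ)
  have l3 := l1 w hp.wi
  refine le_of_tendsto_of_tendsto (l2.sub (l3.pow 2)) ((l3.sub (l3.pow 2)).const_mul r)
    (Eventually.of_forall fun k => ?_)
  refine gap_set hp pn hn r0 (k := k) (Nat.cast_nonneg k) (hS k) ?_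
  intro θ hθ n h1
  exact mem_iInter.1 hθ.2 n h1

section partB
variable {f₁ f₂ : ℝ → ℝ} {y : ℝ}

lemma fj_nonneg (hf₁pos : ∀ t, 0 < f₁ t) (hf₂pos : ∀ t, 0 < f₂ t) (θ x : ℝ) :
    0 ≤ fjoint f₁ f₂ y θ x := mul_nonneg (hf₁pos _).le (hf₂pos _).le

def qq (f₁ f₂ : ℝ → ℝ) (y θ u : ℝ) : ℝ := ∫ x, f₂ (x - u) * fjoint f₁ f₂ y θ x

lemma q_prod (hf₁c : Continuous f₁) (hf₂c : Continuous f₂)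
    (hf₁pos : ∀ t, 0 < f₁ t) (hf₂pos : ∀ t, 0 < f₂ t) (hf₂i : Integrable f₂)
    (hf₂prob : ∫ t, f₂ t = 1)
    (hjint : ∀ θ, Integrable (fun x => fjoint f₁ f₂ y θ x)) (θ : ℝ) :
    Integrable (Function.uncurry fun x u => f₂ (x - u) * fjoint f₁ f₂ y θ x)
      (volume.prod volume) := by
  have hm1 : Measurable (Function.uncurry fun x u => f₂ (x - u) * fjoint f₁ f₂ y θ x) := by
    unfold fjoint
    simp only [Function.uncurry_def]
    exact Continuous.measurable (by fun_prop)
  rw [integrable_prod_iff hm1.aestronglyMeasurable]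
  refine ⟨Eventually.of_forall fun x => (hf₂i.comp_sub_left x).mul_const (fjoint f₁ f₂ y θ x), ?_⟩
  refine (hjint θ).congr (Eventually.of_forall fun x => ?_)
  simp only [Function.uncurry, norm_mul, Real.norm_eq_abs, abs_of_nonneg (hf₂pos _).le,
        abs_of_nonneg (fj_nonneg hf₁pos hf₂pos _ _)]
  rw [integral_mul_const, integral_sub_left_eq_self, hf₂prob, one_mul]

lemma q_fub (hf₁c : Continuous f₁) (hf₂c : Continuous f₂)
    (hf₁pos : ∀ t, 0 < f₁ t) (hf₂pos : ∀ t, 0 < f₂ t) (hf₂i : Integrable f₂)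
    (hf₂prob : ∫ t, f₂ t = 1)
    (hjint : ∀ θ, Integrable (fun x => fjoint f₁ f₂ y θ x)) (θ : ℝ) (s : Set ℝ) :
    ∫ u in s, qq f₁ f₂ y θ u = ∫ x, (∫ u in s, f₂ (x - u)) * fjoint f₁ f₂ y θ x ∧
    Integrable (fun x => (∫ u in s, f₂ (x - u)) * fjoint f₁ f₂ y θ x) := by
  have h := q_prod hf₁c hf₂c hf₁pos hf₂pos hf₂i hf₂prob hjint θ
  have h2 : Integrable (Function.uncurry fun x u => f₂ (x - u) * fjoint f₁ f₂ y θ x)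
      (volume.prod (volume.restrict s)) :=
    h.mono_measure (Measure.prod_mono le_rfl Measure.restrict_le_self)
  constructor
  · unfold qq
    rw [← integral_integral_swap h2]
    congr 1; funext x; rw [integral_mul_const]
  · refine h2.integral_prod_left.congr (Eventually.of_forall fun x => ?_)
    simp only [Function.uncurry]
    rw [integral_mul_const]

lemma rid (hf₂i : Integrable f₂)
    (hjint : ∀ θ, Integrable (fun x => fjoint f₁ f₂ y θ x))
    (hRID : ∀ z : ℝ,
      Tendsto (fun θ => ∫ x in Iic (θ + z), post f₁ f₂ y θ x) (cocompact ℝ)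
        (nhds (∫ u in Iic z, f₂ u))) (a b : ℝ) :
    Tendsto (fun θ => (∫ x in (θ + a)..(θ + b), fjoint f₁ f₂ y θ x) / cnorm f₁ f₂ y θ) atTop
      (nhds (∫ u in a..b, f₂ u)) := by
  have h := ((hRID b).sub (hRID a)).mono_left atTop_le_cocompact
  rw [intervalIntegral.integral_Iic_sub_Iic hf₂i.integrableOn hf₂i.integrableOn] at h
  refine h.congr fun θ => ?_
  have hi : Integrable (fun x => post f₁ f₂ y θ x) := (hjint θ).div_const _
  rw [intervalIntegral.integral_Iic_sub_Iic hi.integrableOn hi.integrableOn]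
  unfold post
  rw [intervalIntegral.integral_div]

lemma local_flat (hf₁c : Continuous f₁) (hf₂c : Continuous f₂)
    (hf₁pos : ∀ t, 0 < f₁ t) (hf₂pos : ∀ t, 0 < f₂ t) (hf₂i : Integrable f₂)
    (hjint : ∀ θ, Integrable (fun x => fjoint f₁ f₂ y θ x))
    (hcpos : ∀ θ, 0 < cnorm f₁ f₂ y θ)
    (hRID : ∀ z : ℝ,
      Tendsto (fun θ => ∫ x in Iic (θ + z), post f₁ f₂ y θ x) (cocompact ℝ)
        (nhds (∫ u in Iic z, f₂ u))) (a : ℝ) :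
    ∃ e > 0, ∀ η, 0 < η → η ≤ e → ∀ᶠ θ in atTop,
      η * cnorm f₁ f₂ y θ ≤ 3 * ∫ x in (θ + a)..(θ + (a + η)), f₁ (y - x) ∧
      ∫ x in (θ + a)..(θ + (a + η)), f₁ (y - x) ≤ 3 * η * cnorm f₁ f₂ y θ := by
  have hv := hf₂pos a
  set v := f₂ a with hvd
  have hc := Metric.continuous_iff.1 hf₂c a (v / 5) (by positivity)
  obtain ⟨d, d0, hd⟩ := hc
  refine ⟨d / 2, by positivity, fun η η0 hη => ?_⟩
  have hb : ∀ u ∈ Icc a (a + η), 4 / 5 * v ≤ f₂ u ∧ f₂ u ≤ 6 / 5 * v := by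
    intro u hu
    have := hd u (by rw [Real.dist_eq, abs_lt]; constructor <;> linarith [hu.1, hu.2])
    rw [Real.dist_eq, abs_lt] at this
    constructor <;> linarith [this.1, this.2]
  have hI : ∀ a b : ℝ, IntervalIntegrable f₂ volume a b := fun a b => hf₂c.intervalIntegrable a b
  have L := rid hf₂i hjint hRID a (a + η)
  have up : ∫ u in a..(a + η), f₂ u ≤ 6 / 5 * (η * v) := by
    have := intervalIntegral.integral_mono_on (by linarith : a ≤ a + η) (hI _ _)
      (intervalIntegrable_const (c := 6 / 5 * v)) (fun u hu => (hb u hu).2)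
    simpa using this
  have lo : 4 / 5 * (η * v) ≤ ∫ u in a..(a + η), f₂ u := by
    have := intervalIntegral.integral_mono_on (by linarith : a ≤ a + η)
      (intervalIntegrable_const (c := 4 / 5 * v)) (hI _ _) (fun u hu => (hb u hu).1)
    simpa using this
  have ηv : 0 < η * v := by positivity
  filter_upwards [L.eventually_const_lt (u := 3 / 5 * (η * v)) (by linarith),
    L.eventually_lt_const (u := 7 / 5 * (η * v)) (by linarith)] with θ h1 h2
  have cp := hcpos θ
  rw [lt_div_iff₀ cp] at h1
  rw [div_lt_iff₀ cp] at h2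
  have c1 : Continuous fun x => f₁ (y - x) := by fun_prop
  have c2 : Continuous fun x => fjoint f₁ f₂ y θ x := by unfold fjoint; fun_prop
  have hle : θ + a ≤ θ + (a + η) := by linarith
  have k1 : (4 / 5 * v) * ∫ x in (θ + a)..(θ + (a + η)), f₁ (y - x) ≤
      ∫ x in (θ + a)..(θ + (a + η)), fjoint f₁ f₂ y θ x := by
    rw [← intervalIntegral.integral_const_mul]
    refine intervalIntegral.integral_mono_on hle ((c1.const_mul _).intervalIntegrable _ _)
      (c2.intervalIntegrable _ _) fun x hx => ?_
    have := (hb (x - θ) ⟨by linarith [hx.1], by linarith [hx.2]⟩).1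
    unfold fjoint; nlinarith [hf₁pos (y - x)]
  have k2 : ∫ x in (θ + a)..(θ + (a + η)), fjoint f₁ f₂ y θ x ≤
     (6 / 5 * v) * ∫ x in (θ + a)..(θ + (a + η)), f₁ (y - x) := by
    rw [← intervalIntegral.integral_const_mul]
    refine intervalIntegral.integral_mono_on hle
      (c2.intervalIntegrable _ _) ((c1.const_mul _).intervalIntegrable _ _) fun x hx => ?_
    have := (hb (x - θ) ⟨by linarith [hx.1], by linarith [hx.2]⟩).2
    unfold fjoint; nlinarith [hf₁pos (y - x)]
  have ηc : 0 < η * cnorm f₁ f₂ y θ := by positivity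
  set I := ∫ x in (θ + a)..(θ + (a + η)), f₁ (y - x)
  set c := cnorm f₁ f₂ y θ
  constructor
  · have : v * (3 / 5 * (η * c)) < v * (6 / 5 * I) := by nlinarith
    have := lt_of_mul_lt_mul_left this hv.le
    linarith
  · have : v * (4 / 5 * I) < v * (7 / 5 * (η * c)) := by nlinarith
    have := lt_of_mul_lt_mul_left this hv.le
    linarith

lemma ratio (hf₁c : Continuous f₁) (hf₂c : Continuous f₂)
    (hf₁pos : ∀ t, 0 < f₁ t) (hf₂pos : ∀ t, 0 < f₂ t) (hf₂i : Integrable f₂)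
    (hjint : ∀ θ, Integrable (fun x => fjoint f₁ f₂ y θ x))
    (hcpos : ∀ θ, 0 < cnorm f₁ f₂ y θ)
    (hRID : ∀ z : ℝ,
      Tendsto (fun θ => ∫ x in Iic (θ + z), post f₁ f₂ y θ x) (cocompact ℝ)
        (nhds (∫ u in Iic z, f₂ u))) (h : ℝ) :
    ∀ᶠ θ in atTop, cnorm f₁ f₂ y θ ≤ 9 * cnorm f₁ f₂ y (θ + h) := by
  obtain ⟨e, e0, he⟩ := local_flat hf₁c hf₂c hf₁pos hf₂pos hf₂i hjint hcpos hRID h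
  obtain ⟨d, d0, hd⟩ := local_flat hf₁c hf₂c hf₁pos hf₂pos hf₂i hjint hcpos hRID 0
  have m0 : 0 < min e d := lt_min e0 d0
  have h1 := he _ m0 (min_le_left _ _)
  have h2 := (tendsto_atTop_add_const_right atTop h tendsto_id).eventually
    (hd _ m0 (min_le_right _ _))
  set η := min e d
  filter_upwards [h1, h2] with θ a1 a2
  have b1 := a1.1
  have b2 := a2.2
  simp only [id] at b2
  rw [show θ + h + 0 = θ + h by ring, show θ + h + (0 + η) = θ + (h + η) by ring] at b2
  have : η * cnorm f₁ f₂ y θ ≤ η * (9 * cnorm f₁ f₂ y (θ + h)) := by linarith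
  exact le_of_mul_le_mul_left this m0

lemma tail (hf₂i : Integrable f₂) (hf₂prob : ∫ t, f₂ t = 1)
    (hjint : ∀ θ, Integrable (fun x => fjoint f₁ f₂ y θ x))
    (hcpos : ∀ θ, 0 < cnorm f₁ f₂ y θ)
    (hRID : ∀ z : ℝ,
      Tendsto (fun θ => ∫ x in Iic (θ + z), post f₁ f₂ y θ x) (cocompact ℝ)
        (nhds (∫ u in Iic z, f₂ u))) {δ : ℝ} (hδ : 0 < δ) :
    ∃ K > 0, 1 - δ ≤ ∫ u in (-K)..K, f₂ u ∧ ∀ᶠ θ in atTop,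
      (1 - δ) * cnorm f₁ f₂ y θ ≤ ∫ x in (θ - K)..(θ + K), fjoint f₁ f₂ y θ x := by
  have h := intervalIntegral_tendsto_integral hf₂i (l := (atTop : Filter ℝ)) tendsto_neg_atTop_atBot tendsto_id
  rw [hf₂prob] at h
  obtain ⟨K, hK, K0⟩ := ((h.eventually (lt_mem_nhds (by linarith : 1 - δ < 1))).and
    (eventually_gt_atTop 0)).exists
  refine ⟨K, K0, hK.le, ?_⟩
  filter_upwards [(rid hf₂i hjint hRID (-K) K).eventually (lt_mem_nhds hK)] with θ hθ
  rw [lt_div_iff₀ (hcpos θ)] at hθ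
  exact hθ.le

lemma block {c : ℝ → ℝ} (hc : Integrable c) (n : ℕ) {T H : ℝ} (H0 : 0 ≤ H)
    (h : ∀ θ, T ≤ θ → ∀ j : ℕ, j ≤ n → c θ ≤ 9 * c (θ + j * H) ∧ c θ ≤ 9 * c (θ - j * H)) :
    ((n:ℝ) + 1) * (∫ θ in T..(T + H), c θ) ≤ 9 * ∫ θ in T..(T + (n + 1) * H), c θ ∧
    ((n:ℝ) + 1) * (∫ θ in (T + n * H)..(T + (n + 1) * H), c θ) ≤
      9 * ∫ θ in T..(T + (n + 1) * H), c θ := by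
  have hI : ∀ a b : ℝ, IntervalIntegrable c volume a b := fun a b => hc.intervalIntegrable
  have sum := intervalIntegral.sum_integral_adjacent_intervals (f := c) (μ := volume)
    (a := fun j : ℕ => T + j * H) (n := n + 1) (fun k _ => hI _ _)
  simp only [Nat.cast_zero, zero_mul, add_zero, Nat.cast_add, Nat.cast_one] at sum
  rw [← sum, Finset.mul_sum]
  have key : ∀ S : ℝ, (∀ j ∈ Finset.range (n + 1), S ≤ 9 * ∫ θ in (T + j * H)..(T + (j + 1) * H), c θ) →
     ((n:ℝ) + 1) * S ≤ ∑ j ∈ Finset.range (n + 1), 9 * ∫ θ in (T + j * H)..(T + (j + 1) * H), c θ := by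
    intro S hS
    have := Finset.card_nsmul_le_sum _ _ _ hS
    simpa using this
  constructor
  · refine key _ fun j hj => ?_
    have hj' : j ≤ n := by simpa [Nat.lt_succ_iff] using hj
    have e := intervalIntegral.integral_comp_add_right (a := T) (b := T + H) c (j * H)
    rw [show T + (j + 1) * H = T + H + j * H by ring, ← e, ← intervalIntegral.integral_const_mul]
    exact intervalIntegral.integral_mono_on (by linarith) (hI _ _)
      (((hc.comp_add_right _).const_mul 9).intervalIntegrable) fun θ hθ => (h θ hθ.1 j hj').1
  · refine key _ fun j hj => ?_
    have hj' : j ≤ n := by simpa [Nat.lt_succ_iff] using hj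
    obtain ⟨i, rfl⟩ := Nat.exists_eq_add_of_le hj'
    have e := intervalIntegral.integral_comp_sub_right (a := T + ((j + i : ℕ):ℝ) * H)
      (b := T + (((j + i : ℕ):ℝ) + 1) * H) c (i * H)
    rw [show T + (j:ℝ) * H = T + ((j + i : ℕ):ℝ) * H - i * H by push_cast; ring,
      show T + ((j:ℝ) + 1) * H = T + (((j + i : ℕ):ℝ) + 1) * H - i * H by push_cast; ring,
      ← e, ← intervalIntegral.integral_const_mul]
    refine intervalIntegral.integral_mono_on (by linarith) (hI _ _)
      (((hc.comp_sub_right _).const_mul 9).intervalIntegrable) fun θ hθ => (h θ ?_ i (by omega)).2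
    have : 0 ≤ ((j + i : ℕ):ℝ) * H := by positivity
    linarith [hθ.1]

end partB

lemma one_int {c : ℝ → ℝ} {a b : ℝ} (hab : a ≤ b) :
    ∫ θ, c θ * one (Ioc a b) θ = ∫ θ in a..b, c θ := by
  rw [intervalIntegral.integral_of_le hab, ← integral_indicator measurableSet_Ioc]
  congr 1; funext x
  by_cases hx : x ∈ Ioc a b
  · simp only [one, indicator_of_mem hx, mul_one]
  · simp only [one, indicator_of_notMem hx, mul_zero]

lemma gibbs_MK {f₁ f₂ : ℝ → ℝ} {y : ℝ} (hf₁c : Continuous f₁) (hf₂c : Continuous f₂)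
    (hf₁pos : ∀ t, 0 < f₁ t) (hf₂pos : ∀ t, 0 < f₂ t)
    (hf₂bdd : ∃ M, ∀ t, f₂ t ≤ M) (hf₂i : Integrable f₂) (hf₂prob : ∫ t, f₂ t = 1)
    (hjint : ∀ θ, Integrable (fun x => fjoint f₁ f₂ y θ x))
    (hcpos : ∀ θ, 0 < cnorm f₁ f₂ y θ)
    (hCint : Integrable (fun θ => cnorm f₁ f₂ y θ))
    (hC : 0 < ∫ θ, cnorm f₁ f₂ y θ) :
    MK (gibbsTrans f₁ f₂ y) (fun θ => cnorm f₁ f₂ y θ / ∫ θ', cnorm f₁ f₂ y θ') := by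
  have hcm : Measurable (cnorm f₁ f₂ y) := by
    have : StronglyMeasurable (Function.uncurry fun θ x => fjoint f₁ f₂ y θ x) := by
      refine Continuous.stronglyMeasurable ?_
      unfold fjoint
      simp only [Function.uncurry_def]
      fun_prop
    exact this.integral_prod_right.measurable
  have hqm : Measurable (Function.uncurry (qq f₁ f₂ y)) := by
    have : StronglyMeasurable (Function.uncurry fun (z : ℝ × ℝ) (x : ℝ) =>
        f₂ (x - z.2) * fjoint f₁ f₂ y z.1 x) := by
      refine Continuous.stronglyMeasurable ?_
      unfold fjoint
      simp only [Function.uncurry_def]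
      fun_prop
    exact this.integral_prod_right.measurable
  obtain ⟨b, hb⟩ := hf₂bdd
  have hfub := fun θ => q_fub hf₁c hf₂c hf₁pos hf₂pos hf₂i hf₂prob hjint θ univ
  have hq1 : ∀ θ, ∫ u, qq f₁ f₂ y θ u = cnorm f₁ f₂ y θ := fun θ => by
    have := (hfub θ).1
    simp only [Measure.restrict_univ, integral_sub_left_eq_self, hf₂prob, one_mul] at this
    exact this
  have hqp : ∀ θ, Integrable (qq f₁ f₂ y θ) := fun θ =>
    (q_prod hf₁c hf₂c hf₁pos hf₂pos hf₂i hf₂prob hjint θ).integral_prod_right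
  have heq : ∀ θ u, gibbsTrans f₁ f₂ y θ u = (1 / cnorm f₁ f₂ y θ) * qq f₁ f₂ y θ u :=
    fun _ _ => rfl
  refine ⟨?_, ?_, ⟨b, ?_⟩, ?_, ?_, hcm.div_const _, ?_, hCint.div_const _, ?_, ?_⟩
  · exact ((measurable_const.div hcm).comp measurable_fst).mul hqm
  · intro θ u
    refine mul_nonneg (one_div_nonneg.2 (hcpos θ).le) (integral_nonneg fun x => ?_)
    exact mul_nonneg (hf₂pos _).le (fj_nonneg hf₁pos hf₂pos _ _)
  · intro θ u
    rw [heq, one_div, inv_mul_le_iff₀ (hcpos θ), mul_comm]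
    unfold qq cnorm
    rw [← integral_const_mul]
    refine integral_mono_of_nonneg (Eventually.of_forall fun x =>
      mul_nonneg (hf₂pos _).le (fj_nonneg hf₁pos hf₂pos _ _)) ((hjint θ).const_mul b)
      (Eventually.of_forall fun x => mul_le_mul_of_nonneg_right (hb _)
        (fj_nonneg hf₁pos hf₂pos _ _))
  · exact fun θ => (hqp θ).const_mul _
  · intro θ
    simp only [heq]
    rw [integral_const_mul, hq1, one_div, inv_mul_cancel₀ (hcpos θ).ne']
  · exact fun θ => div_nonneg (hcpos θ).le hC.le
  · rw [integral_div, div_self hC.ne']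
  · intro θ u
    have hs : qq f₁ f₂ y θ u = qq f₁ f₂ y u θ := by
      unfold qq fjoint; congr 1; funext x; ring
    rw [heq, heq, hs]
    have := (hcpos θ).ne'
    have := (hcpos u).ne'
    field_simp

lemma TT_lower {f₁ f₂ : ℝ → ℝ} {y : ℝ} (hf₁c : Continuous f₁) (hf₂c : Continuous f₂)
    (hf₁pos : ∀ t, 0 < f₁ t) (hf₂pos : ∀ t, 0 < f₂ t)
    (hf₂i : Integrable f₂) (hf₂prob : ∫ t, f₂ t = 1)
    (hjint : ∀ θ, Integrable (fun x => fjoint f₁ f₂ y θ x))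
    (hcpos : ∀ θ, 0 < cnorm f₁ f₂ y θ) {δ K θ a b : ℝ} (hδ : δ ≤ 1) (K0 : 0 < K)
    (hK : 1 - δ ≤ ∫ u in (-K)..K, f₂ u)
    (hθ : (1 - δ) * cnorm f₁ f₂ y θ ≤ ∫ x in (θ - K)..(θ + K), fjoint f₁ f₂ y θ x)
    (ha : a ≤ θ - 2 * K) (hb : θ + 2 * K ≤ b) :
    (1 - δ) ^ 2 ≤ TT (gibbsTrans f₁ f₂ y) (one (Ioc a b)) θ := by
  have cp := hcpos θ
  have e : TT (gibbsTrans f₁ f₂ y) (one (Ioc a b)) θ =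
      (1 / cnorm f₁ f₂ y θ) * ∫ u in Ioc a b, qq f₁ f₂ y θ u := by
    rw [TT, one_int (by linarith), intervalIntegral.integral_of_le (by linarith)]
    rw [← integral_const_mul]; rfl
  have F := q_fub hf₁c hf₂c hf₁pos hf₂pos hf₂i hf₂prob hjint θ (Ioc a b)
  rw [e, F.1, one_div, inv_mul_eq_div, le_div_iff₀ cp]
  have G0 : ∀ x, 0 ≤ ∫ u in Ioc a b, f₂ (x - u) := fun x =>
    integral_nonneg fun u => (hf₂pos _).le
  have G1 : ∀ x ∈ Ioc (θ - K) (θ + K), 1 - δ ≤ ∫ u in Ioc a b, f₂ (x - u) := by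
    intro x hx
    refine hK.trans ?_
    have e2 := intervalIntegral.integral_comp_sub_left (a := x - K) (b := x + K) f₂ x
    rw [show x - (x + K) = -K by ring, show x - (x - K) = K by ring] at e2
    rw [← e2, intervalIntegral.integral_of_le (by linarith)]
    refine setIntegral_mono_set ((hf₂i.comp_sub_left x).integrableOn)
      (Eventually.of_forall fun u => (hf₂pos _).le) (Eventually.of_forall ?_)
    exact Ioc_subset_Ioc (by linarith [hx.1]) (by linarith [hx.2])
  calc (1 - δ) ^ 2 * cnorm f₁ f₂ y θ = (1 - δ) * ((1 - δ) * cnorm f₁ f₂ y θ) := by ring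
    _ ≤ (1 - δ) * ∫ x in (θ - K)..(θ + K), fjoint f₁ f₂ y θ x :=
        mul_le_mul_of_nonneg_left hθ (by linarith)
    _ = ∫ x in Ioc (θ - K) (θ + K), (1 - δ) * fjoint f₁ f₂ y θ x := by
        rw [intervalIntegral.integral_of_le (by linarith), integral_const_mul]
    _ ≤ ∫ x in Ioc (θ - K) (θ + K), (∫ u in Ioc a b, f₂ (x - u)) * fjoint f₁ f₂ y θ x := by
        refine setIntegral_mono_on ((hjint θ).const_mul _).integrableOn F.2.integrableOn
          measurableSet_Ioc fun x hx => ?_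
        exact mul_le_mul_of_nonneg_right (G1 x hx) (fj_nonneg hf₁pos hf₂pos _ _)
    _ ≤ ∫ x, (∫ u in Ioc a b, f₂ (x - u)) * fjoint f₁ f₂ y θ x :=
        setIntegral_le_integral F.2 (Eventually.of_forall fun x =>
          mul_nonneg (G0 x) (fj_nonneg hf₁pos hf₂pos _ _))

/-- if the model is robust in data (RID), then the marginal Θ-chain of the
centred Gibbs sampler is not geometrically ergodic. -/
theorem rid_implies_not_geometrically_ergodic (f₁ f₂ : ℝ → ℝ) (y : ℝ)
    (hf₁c : Continuous f₁) (hf₂c : Continuous f₂)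
    (hf₁pos : ∀ t, 0 < f₁ t) (hf₂pos : ∀ t, 0 < f₂ t)
    (hf₁bdd : ∃ M, ∀ t, f₁ t ≤ M) (hf₂bdd : ∃ M, ∀ t, f₂ t ≤ M)
    (hf₁sym : ∀ t, f₁ (-t) = f₁ t) (hf₂sym : ∀ t, f₂ (-t) = f₂ t)
    (hf₁prob : ∫ t, f₁ t = 1) (hf₂prob : ∫ t, f₂ t = 1)
    (hjint : ∀ θ, Integrable (fun x => fjoint f₁ f₂ y θ x))
    (hcpos : ∀ θ, 0 < cnorm f₁ f₂ y θ)
    (hCint : Integrable (fun θ => cnorm f₁ f₂ y θ))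
    (hRID : ∀ z : ℝ,
      Tendsto (fun θ => ∫ x in Iic (θ + z), post f₁ f₂ y θ x) (cocompact ℝ)
        (nhds (∫ u in Iic z, f₂ u))) :
    ¬ ∃ r : ℝ, 0 ≤ r ∧ r < 1 ∧ ∃ M : ℝ → ℝ, (∀ θ₀, 0 ≤ M θ₀) ∧
      ∀ θ₀ : ℝ, ∀ n : ℕ, 1 ≤ n →
        (∫ θ, |gibbsTransN f₁ f₂ y n θ₀ θ - cnorm f₁ f₂ y θ / (∫ θ', cnorm f₁ f₂ y θ')|) ≤
          M θ₀ * r ^ n := by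
  rintro ⟨r, r0, r1, M, M0, hM⟩
  have hf₂i : Integrable f₂ := by
    by_contra h
    rw [integral_undef h] at hf₂prob
    norm_num at hf₂prob
  set C := ∫ θ, cnorm f₁ f₂ y θ with hCd
  have hC : 0 < C := by
    refine (integral_pos_iff_support_of_nonneg (fun θ => (hcpos θ).le) hCint).2 ?_
    have : Function.support (fun θ => cnorm f₁ f₂ y θ) = univ := by
      ext θ; simp [(hcpos θ).ne']
    rw [this]; simp
  have hp := gibbs_MK hf₁c hf₂c hf₁pos hf₂pos hf₂bdd hf₂i hf₂prob hjint hcpos hCint hC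
  rw [← hCd] at hp
  have hn : ∀ n, 1 ≤ n → NS (gibbsTrans f₁ f₂ y) (gibbsTransN f₁ f₂ y n) n := by
    intro n h1
    induction n, h1 using Nat.le_induction with
    | base =>
      have : gibbsTransN f₁ f₂ y 1 = gibbsTrans f₁ f₂ y := by
        funext a b; simp [gibbsTransN]
      rw [this]; exact NS_one hp
    | succ n h1 ih =>
      have : gibbsTransN f₁ f₂ y (n + 1) =
          fun θ v => ∫ u, gibbsTransN f₁ f₂ y n θ u * gibbsTrans f₁ f₂ y u v := by
        obtain ⟨k, rfl⟩ := Nat.exists_eq_add_of_le' h1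
        funext a b; simp [gibbsTransN]
      rw [this]; exact NS_succ hp ih
  -- parameters
  set δ := (1 - r) / 16 with hδ
  have δ0 : 0 < δ := by rw [hδ]; linarith
  have δ1 : δ ≤ 1 := by rw [hδ]; linarith
  obtain ⟨n, hnn⟩ := exists_nat_ge (18 / δ)
  obtain ⟨K, K0, hK, hKev⟩ := tail hf₂i hf₂prob hjint hcpos hRID δ0
  set H := 2 * K with hH
  have H0 : 0 < H := by positivity
  have hR := ratio hf₁c hf₂c hf₁pos hf₂pos hf₂i hjint hcpos hRID
  have hR2 : ∀ᶠ θ in atTop, ∀ j ∈ Finset.range (n + 1),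
      cnorm f₁ f₂ y θ ≤ 9 * cnorm f₁ f₂ y (θ + j * H) ∧
      cnorm f₁ f₂ y θ ≤ 9 * cnorm f₁ f₂ y (θ - j * H) := by
    rw [Filter.eventually_all_finset]
    intro j _
    refine (hR (j * H)).and ((hR (-(j * H))).mono fun θ h => ?_)
    rwa [← sub_eq_add_neg] at h
  have hsmall : ∀ᶠ T in atTop, ∫ θ in T..(T + (n + 1) * H), cnorm f₁ f₂ y θ < C / 2 := by
    have a1 := intervalIntegral_tendsto_integral_Ioi (f := fun θ => cnorm f₁ f₂ y θ) 0
      hCint.integrableOn (tendsto_id (x := atTop))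
    have a2 := intervalIntegral_tendsto_integral_Ioi (f := fun θ => cnorm f₁ f₂ y θ) 0
      hCint.integrableOn (tendsto_atTop_add_const_right atTop (((n:ℝ) + 1) * H) tendsto_id)
    have a3 := a2.sub a1
    rw [sub_self] at a3
    filter_upwards [a3.eventually_lt_const (by positivity : (0:ℝ) < C / 2)] with T hT
    rw [intervalIntegral.integral_interval_sub_left hCint.intervalIntegrable
      hCint.intervalIntegrable] at hT
    exact hT
  obtain ⟨T, ⟨hT1, hT2⟩, hT3⟩ := (((eventually_forall_ge_atTop.2 hKev).and (eventually_forall_ge_atTop.2 hR2)).and hsmall).exists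
  obtain ⟨b1, b2⟩ := block hCint n H0.le (T := T) (fun θ hθ j hj =>
    hT2 θ hθ j (by simpa [Nat.lt_succ_iff] using hj))
  have n0 : (0:ℝ) ≤ n := Nat.cast_nonneg n
  have n18 : (18:ℝ) ≤ n := le_trans (by rw [le_div_iff₀ δ0]; linarith) hnn
  have nd : 18 ≤ n * δ := by rwa [div_le_iff₀ δ0] at hnn
  have I : ∀ a b : ℝ, IntervalIntegrable (fun θ => cnorm f₁ f₂ y θ) volume a b :=
    fun a b => hCint.intervalIntegrable
  have hTB : T < T + (n + 1) * H := by have : 0 < ((n:ℝ) + 1) * H := by positivity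
                                       linarith
  have hTB2 : T + H ≤ T + n * H := by nlinarith
  have A := gap_all hp _ hn r0 M hM (B := Ioc T (T + (n + 1) * H)) measurableSet_Ioc
  have split : (∫ θ in T..(T + H), cnorm f₁ f₂ y θ) + (∫ θ in (T + H)..(T + n * H), cnorm f₁ f₂ y θ)
      + (∫ θ in (T + n * H)..(T + (n + 1) * H), cnorm f₁ f₂ y θ) =
      ∫ θ in T..(T + (n + 1) * H), cnorm f₁ f₂ y θ := by
    rw [intervalIntegral.integral_add_adjacent_intervals (I _ _) (I _ _),
      intervalIntegral.integral_add_adjacent_intervals (I _ _) (I _ _)]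
  have Bpos : 0 < ∫ θ in T..(T + (n + 1) * H), cnorm f₁ f₂ y θ :=
    intervalIntegral.intervalIntegral_pos_of_pos (I _ _) hcpos hTB
  have mid : (1 - δ) * (∫ θ in T..(T + (n + 1) * H), cnorm f₁ f₂ y θ) ≤
      ∫ θ in (T + H)..(T + n * H), cnorm f₁ f₂ y θ := by
    set S := ∫ θ in T..(T + (n + 1) * H), cnorm f₁ f₂ y θ
    set x := ∫ θ in T..(T + H), cnorm f₁ f₂ y θ
    set z := ∫ θ in (T + n * H)..(T + (n + 1) * H), cnorm f₁ f₂ y θ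
    have : ((n:ℝ) + 1) * (x + z) ≤ ((n:ℝ) + 1) * (δ * S) := by nlinarith
    have := le_of_mul_le_mul_left this (by positivity)
    linarith
  have m_eq : ∀ a b, a ≤ b → ∫ θ, cnorm f₁ f₂ y θ / C * one (Ioc a b) θ =
      (∫ θ in a..b, cnorm f₁ f₂ y θ) / C := fun a b hab => by
    rw [one_int hab, intervalIntegral.integral_div]
  have low : (1 - δ) ^ 2 * ((∫ θ in (T + H)..(T + n * H), cnorm f₁ f₂ y θ) / C) ≤
      ∫ θ, cnorm f₁ f₂ y θ / C * (one (Ioc T (T + (n + 1) * H)) θ *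
        TT (gibbsTrans f₁ f₂ y) (one (Ioc T (T + (n + 1) * H))) θ) := by
    rw [← m_eq _ _ hTB2, ← integral_const_mul]
    have bB := BM.ind (measurableSet_Ioc (a := T) (b := T + (n + 1) * H))
    refine integral_mono (((BM.ind measurableSet_Ioc).integrable hp.wi).const_mul _)
      ((bB.mul (TT_BM hp bB)).integrable hp.wi) fun θ => ?_
    have w0 := hp.w0 θ
    by_cases hθ : θ ∈ Ioc (T + H) (T + n * H)
    · have hθ2 : θ ∈ Ioc T (T + (n + 1) * H) :=
        ⟨by linarith [hθ.1], by linarith [hθ.2]⟩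
      have := TT_lower hf₁c hf₂c hf₁pos hf₂pos hf₂i hf₂prob hjint hcpos δ1 K0 hK
        (hT1 θ (by linarith [hθ.1])) (a := T) (b := T + (n + 1) * H)
        (by linarith [hθ.1]) (by linarith [hθ.2])
      simp only [one, indicator_of_mem hθ, indicator_of_mem hθ2, mul_one, one_mul]
      rw [mul_comm]
      exact mul_le_mul_of_nonneg_left this w0
    · simp only [one, indicator_of_notMem hθ, mul_zero]
      refine mul_nonneg w0 (mul_nonneg (one_nonneg' _ _) ?_)
      exact integral_nonneg fun u => mul_nonneg (hp.p0 _ _) (one_nonneg' _ _)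
  rw [m_eq _ _ hTB.le] at A
  set m := (∫ θ in T..(T + (n + 1) * H), cnorm f₁ f₂ y θ) / C with hm
  have m0 : 0 < m := by positivity
  have mh : m ≤ 1 / 2 := by rw [hm, div_le_iff₀ hC]; linarith
  have mid2 : (1 - δ) * m ≤ (∫ θ in (T + H)..(T + n * H), cnorm f₁ f₂ y θ) / C := by
    rw [hm, ← mul_div_assoc]; gcongr
  have fin1 : (1 - δ) ^ 2 * ((1 - δ) * m) - m ^ 2 ≤ r * (m - m ^ 2) := by
    refine le_trans ?_ A
    have : (1 - δ) ^ 2 * ((1 - δ) * m) ≤ _ := (mul_le_mul_of_nonneg_left mid2 (sq_nonneg _)).trans low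
    linarith
  have fin2 : m * ((1 - δ) ^ 3 - m) ≤ m * (r * (1 - m)) := by nlinarith
  have fin3 := le_of_mul_le_mul_left fin2 m0
  have cube : 1 - 3 * δ ≤ (1 - δ) ^ 3 := by nlinarith [sq_nonneg δ]
  have rr : r = 1 - 16 * δ := by rw [hδ]; ring
  rw [rr] at fin3
  nlinarith
end
end

section
/- Suppose the model is robust in data (RID): for every z ∈ ℝ, ∫_{(-∞, θ+z]} π(x | θ) dx → F₂(z) := ∫_{(-∞, z]} f₂(u) du as |θ| → ∞. Then the transition density of the marginal Θ-chain is random-walk-like in the tails: for every z ∈ ℝ, lim_{|θ₀| → ∞} p(θ₀, θ₀ + z) = ∫_ℝ f₂(u − z)·f₂(u) du, i.e. the limit is the self-convolution (f₂ ⋆ f₂)(z), which is a continuous, everywhere positive probability density symmetric about 0. -/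
open MeasureTheory Filter Set

noncomputable section

lemma rid_cdf_weak {g : ℝ → ℝ → ℝ} {h : ℝ → ℝ}
    (hg0 : ∀ i u, 0 ≤ g i u) (hgc : ∀ i, Continuous (g i)) (hgi : ∀ i, Integrable (g i))
    (hg1 : ∀ i, ∫ u, g i u = 1)
    (hh0 : ∀ u, 0 ≤ h u) (hhc : Continuous h) (hhi : Integrable h) (hh1 : ∫ u, h u = 1)
    (hcdf : ∀ z, Tendsto (fun i => ∫ u in Iic z, g i u) (cocompact ℝ) (nhds (∫ u in Iic z, h u)))
    (φ : ℝ → ℝ) (hφ : Continuous φ) (M : ℝ) (hM : ∀ u, ‖φ u‖ ≤ M) :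
    Tendsto (fun i => ∫ u, φ u * g i u) (cocompact ℝ) (nhds (∫ u, φ u * h u)) := by
  have key : ∀ k : ℝ → ℝ, (∀ u, 0 ≤ k u) → Continuous k → Integrable k → ∫ u, k u = 1 →
      ∃ μ : ProbabilityMeasure ℝ,
        (∀ a b, a ≤ b → ((μ (Ioc a b) : NNReal) : ℝ) = (∫ u in Iic b, k u) - ∫ u in Iic a, k u) ∧
        ∀ ψ : ℝ → ℝ, ∫ u, ψ u ∂(μ : Measure ℝ) = ∫ u, ψ u * k u := by
    intro k hk0 hkc hki hk1
    have hm : Measurable (fun u => (k u).toNNReal) := hkc.measurable.real_toNNReal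
    have hp : IsProbabilityMeasure (volume.withDensity (fun u => ENNReal.ofReal (k u))) := by
      constructor
      rw [withDensity_apply _ MeasurableSet.univ, Measure.restrict_univ,
        ← ofReal_integral_eq_lintegral_ofReal hki (Eventually.of_forall hk0), hk1]
      simp
    refine ⟨⟨_, hp⟩, ?_, ?_⟩
    · intro a b hab
      have e : ((volume.withDensity (fun u => ENNReal.ofReal (k u))) (Ioc a b)).toReal
          = ∫ u in Ioc a b, k u := by
        rw [withDensity_apply _ measurableSet_Ioc,
          ← ofReal_integral_eq_lintegral_ofReal hki.integrableOn (Eventually.of_forall hk0)]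
        exact ENNReal.toReal_ofReal (integral_nonneg hk0)
      have e2 := intervalIntegral.integral_Iic_sub_Iic (f := k) (μ := volume) (a := a) (b := b)
        hki.integrableOn hki.integrableOn
      rw [e2, intervalIntegral.integral_of_le hab, ← e]
      rfl
    · intro ψ
      have := integral_withDensity_eq_integral_smul (μ := volume) hm ψ
      refine Eq.trans this ?_
      congr 1
      ext u
      rw [NNReal.smul_def, Real.coe_toNNReal _ (hk0 u), smul_eq_mul, mul_comm]
  choose μ hμ1 hμ2 using fun i => key (g i) (hg0 i) (hgc i) (hgi i) (hg1 i)
  obtain ⟨ν, hν1, hν2⟩ := key h hh0 hhc hhi hh1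
  have hcg : (cocompact ℝ).IsCountablyGenerated := by
    rw [cocompact_eq_atBot_atTop]; infer_instance
  have hT : Tendsto μ (cocompact ℝ) (nhds ν) := by
    refine IsPiSystem.tendsto_probabilityMeasure_of_tendsto_of_mem
      (S := {s | ∃ a b : ℝ, a < b ∧ Ioc a b = s}) ?_ ?_ ?_ ?_
    · simpa using isPiSystem_Ioc (id : ℝ → ℝ) (id : ℝ → ℝ)
    · rintro s ⟨a, b, -, rfl⟩
      exact measurableSet_Ioc
    · intro u hu x hx
      obtain ⟨ε, hε, hb⟩ := Metric.isOpen_iff.1 hu x hx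
      refine ⟨Ioc (x - ε / 2) (x + ε / 2), ⟨_, _, by linarith, rfl⟩,
        Ioc_mem_nhds (by linarith) (by linarith), ?_⟩
      intro t ht
      apply hb
      rw [Metric.mem_ball, Real.dist_eq, abs_lt]
      constructor <;> linarith [ht.1, ht.2]
    · rintro s ⟨a, b, hab, rfl⟩
      rw [← NNReal.tendsto_coe]
      simp only [hμ1 _ a b hab.le, hν1 a b hab.le]
      exact (hcdf b).sub (hcdf a)
  have := (ProbabilityMeasure.tendsto_iff_forall_integral_tendsto.1 hT)
    (BoundedContinuousFunction.ofNormedAddCommGroup φ hφ M hM)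
  simpa [hμ2, hν2] using this

/-- under RID, the transition density of the marginal Θ-chain is
random-walk-like in the tails, with limit the self-convolution `q(z) = ∫ f₂(u - z) f₂(u) du`,
a continuous, everywhere positive probability density symmetric about 0. -/
theorem rid_implies_random_walk_like (f₁ f₂ : ℝ → ℝ) (y : ℝ)
    (hf₁c : Continuous f₁) (hf₂c : Continuous f₂)
    (hf₁pos : ∀ t, 0 < f₁ t) (hf₂pos : ∀ t, 0 < f₂ t)
    (hf₁bdd : ∃ M, ∀ t, f₁ t ≤ M) (hf₂bdd : ∃ M, ∀ t, f₂ t ≤ M)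
    (hf₁sym : ∀ t, f₁ (-t) = f₁ t) (hf₂sym : ∀ t, f₂ (-t) = f₂ t)
    (hf₁prob : ∫ t, f₁ t = 1) (hf₂prob : ∫ t, f₂ t = 1)
    (hjint : ∀ θ, Integrable (fun x => fjoint f₁ f₂ y θ x))
    (hcpos : ∀ θ, 0 < cnorm f₁ f₂ y θ)
    (hRID : ∀ z : ℝ,
      Tendsto (fun θ => ∫ x in Iic (θ + z), post f₁ f₂ y θ x) (cocompact ℝ)
        (nhds (∫ u in Iic z, f₂ u))) :
    (∀ z : ℝ,
      Tendsto (fun θ₀ => gibbsTrans f₁ f₂ y θ₀ (θ₀ + z)) (cocompact ℝ)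
        (nhds (∫ u, f₂ (u - z) * f₂ u))) ∧
    Continuous (fun z => ∫ u, f₂ (u - z) * f₂ u) ∧
    (∀ z : ℝ, 0 < ∫ u, f₂ (u - z) * f₂ u) ∧
    (∀ z : ℝ, (∫ u, f₂ (u - (-z)) * f₂ u) = ∫ u, f₂ (u - z) * f₂ u) ∧
    (∫ z, ∫ u, f₂ (u - z) * f₂ u) = 1 := by
  obtain ⟨M, hM⟩ := hf₂bdd
  have hi2 : Integrable f₂ := by
    by_contra hn
    rw [integral_undef hn] at hf₂prob
    exact zero_ne_one hf₂prob
  have hMn : ∀ u, ‖f₂ u‖ ≤ M := fun u => by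
    rw [Real.norm_of_nonneg (hf₂pos u).le]; exact hM u
  have hint : ∀ z, Integrable (fun u => f₂ (u - z) * f₂ u) := fun z =>
    hi2.bdd_mul (hf₂c.comp (continuous_id.sub continuous_const)).aestronglyMeasurable
      (Eventually.of_forall fun u => hMn (u - z))
  refine ⟨?_, ?_, ?_, ?_, ?_⟩
  · intro z
    have hpc : ∀ θ, Continuous (fun u => post f₁ f₂ y θ (u + θ)) := by
      intro θ
      unfold post fjoint
      fun_prop
    have hpi : ∀ θ, Integrable (fun x => post f₁ f₂ y θ x) := fun θ => (hjint θ).div_const _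
    have := rid_cdf_weak (g := fun θ u => post f₁ f₂ y θ (u + θ)) (h := f₂)
      (fun θ u => div_nonneg (mul_pos (hf₁pos _) (hf₂pos _)).le (hcpos θ).le)
      hpc (fun θ => (hpi θ).comp_add_right θ)
      (fun θ => by
        rw [integral_add_right_eq_self (fun x => post f₁ f₂ y θ x) θ]
        unfold post
        rw [integral_div]
        exact div_self (hcpos θ).ne')
      (fun u => (hf₂pos u).le) hf₂c hi2 hf₂prob
      (fun w => by
        refine (hRID w).congr fun θ => ?_
        rw [← integral_indicator measurableSet_Iic, ← integral_indicator measurableSet_Iic,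
          ← integral_add_right_eq_self _ θ]
        congr 1
        ext u
        simp only [indicator, mem_Iic]
        congr 1
        apply propext
        constructor <;> intro h <;> linarith)
      (fun u => f₂ (u - z)) (hf₂c.comp (continuous_id.sub continuous_const)) M
      (fun u => hMn _)
    refine this.congr fun θ => ?_
    unfold gibbsTrans
    rw [← integral_const_mul, ← integral_add_right_eq_self (fun x => _ * (_ * _)) θ]
    congr 1
    ext u
    have : u + θ - (θ + z) = u - z := by ring
    rw [this]
    unfold post
    ring
  · refine continuous_of_dominated (bound := fun u => M * f₂ u) ?_ ?_ (hi2.const_mul M) ?_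
    · intro z
      exact (hint z).aestronglyMeasurable
    · intro z
      refine Eventually.of_forall fun u => ?_
      rw [norm_mul, Real.norm_of_nonneg (hf₂pos u).le]
      exact mul_le_mul_of_nonneg_right (hMn _) (hf₂pos u).le
    · refine Eventually.of_forall fun u => ?_
      fun_prop
  · intro z
    have hpos : ∀ u, 0 < f₂ (u - z) * f₂ u := fun u => mul_pos (hf₂pos _) (hf₂pos _)
    rw [integral_pos_iff_support_of_nonneg (fun u => (hpos u).le) (hint z)]
    have : Function.support (fun u => f₂ (u - z) * f₂ u) = univ := by
      ext u; simp [(hf₂pos u).ne', (hf₂pos (u - z)).ne']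
    rw [this]; simp
  · intro z
    rw [← integral_sub_right_eq_self (fun u => f₂ (u - (-z)) * f₂ u) z]
    congr 1
    ext u
    rw [show u - z - -z = u by ring, mul_comm]
  · have h := integral_convolution (ContinuousLinearMap.mul ℝ ℝ) hi2 hi2 (μ := volume) (ν := volume)
    rw [hf₂prob] at h
    simp only [convolution, ContinuousLinearMap.mul_apply', mul_one] at h
    rw [← h]
    congr 1
    ext z
    congr 1
    ext u
    rw [mul_comm, ← hf₂sym (u - z), neg_sub]
end
end

section
/- Suppose: (i) the model is data uniformly relevant (DUR): there exist d, k > 0 such that for all |θ| > k, |∫_ℝ x·π(x | θ) dx| ≤ |θ| − d; (ii) the non-centred parametrisation is geometrically tight in parameter (GTIP): there exist a, b > 0 such that for every θ ∈ ℝ and every t ≥ 0, ∫_{{x : |x − θ| > t}} π(x | θ) dx ≤ a·e^{−b·t}; (iii) f₂ has a finite moment generating function near 0: ∫_ℝ e^{s|t|} f₂(t) dt < ∞ for some s > 0. Then the marginal Θ-chain of the centred Gibbs sampler is geometrically ergodic: there exist r ∈ [0,1) and a function M : ℝ → [0,∞) such that for every θ₀ ∈ ℝ and every n ≥ 1, ‖Pⁿ(θ₀,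 ·) − Π‖_TV ≤ M(θ₀)·rⁿ. -/
open MeasureTheory Filter Set

noncomputable section

set_option maxHeartbeats 4000000

lemma fub_aux {p : ℝ → ℝ → ℝ} {W g : ℝ → ℝ}
    (hpm : StronglyMeasurable (Function.uncurry p)) (hp0 : ∀ u v, 0 ≤ p u v)
    (hWm : Measurable W) (hW0 : ∀ u, 0 ≤ W u)
    (hPWi : ∀ u, Integrable fun v => p u v * W v)
    (hgm : StronglyMeasurable g) 
    (hgI : Integrable (fun u => |g u| * ∫ v, p u v * W v)) :
    Integrable (fun z : ℝ × ℝ => g z.1 * p z.1 z.2 * W z.2) (volume.prod volume) := by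
  have hm : StronglyMeasurable (fun z : ℝ × ℝ => g z.1 * p z.1 z.2 * W z.2) := by
    apply StronglyMeasurable.mul
    · exact (hgm.comp_measurable measurable_fst).mul hpm
    · exact hWm.stronglyMeasurable.comp_measurable measurable_snd
  rw [integrable_prod_iff hm.aestronglyMeasurable]
  refine ⟨Eventually.of_forall fun u => ?_, ?_⟩
  · simpa [mul_assoc] using (hPWi u).const_mul (g u)
  · refine hgI.congr (Eventually.of_forall fun u => ?_)
    simp only
    rw [← integral_const_mul]
    congr 1; ext v
    rw [Real.norm_eq_abs, abs_mul, abs_mul, abs_of_nonneg (hp0 u v), abs_of_nonneg (hW0 v)]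
    ring

lemma harris_step {p : ℝ → ℝ → ℝ} {V ν g : ℝ → ℝ} {lam K R α β ρ Mp : ℝ}
    (hpm : StronglyMeasurable (Function.uncurry p)) (hp0 : ∀ u v, 0 ≤ p u v)
    (hpM : ∀ u v, p u v ≤ Mp)
    (hpi : ∀ u, Integrable (p u)) (hp1 : ∀ u, ∫ v, p u v = 1)
    (hVm : Measurable V) (hV0 : ∀ u, 0 ≤ V u)
    (hPVi : ∀ u, Integrable fun v => p u v * V v)
    (hPV : ∀ u, ∫ v, p u v * V v ≤ lam * V u + K)
    (hνi : Integrable ν) (hν1 : ∫ v, ν v = 1) (hν0 : ∀ v, 0 ≤ ν v)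
    (hmin : ∀ u, V u ≤ R → ∀ v, α * ν v ≤ p u v) (hα : 0 ≤ α) (hβ : 0 ≤ β)
    (hC : ∀ u, V u ≤ R → 1 - α + β * (lam * V u + K) ≤ ρ * (1 + β * V u))
    (hCc : ∀ u, R < V u → 1 + α + β * (lam * V u + K) ≤ ρ * (1 + β * V u))
    (hgm : StronglyMeasurable g) (hgi : Integrable g)
    (hgV : Integrable (fun u => |g u| * V u)) (hg0 : ∫ u, g u = 0) :
    StronglyMeasurable (fun v => ∫ u, g u * p u v) ∧
    Integrable (fun v => ∫ u, g u * p u v) ∧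
    Integrable (fun v => |∫ u, g u * p u v| * V v) ∧
    ∫ v, (∫ u, g u * p u v) = 0 ∧
    ∫ v, |∫ u, g u * p u v| * (1 + β * V v) ≤ ρ * ∫ u, |g u| * (1 + β * V u) := by
  have hagm : StronglyMeasurable (fun u => |g u|) := hgm.norm
  have hagi : Integrable (fun u => |g u|) := hgi.norm
  have hPV0 : ∀ u, 0 ≤ ∫ v, p u v * V v := fun u =>
    integral_nonneg fun v => mul_nonneg (hp0 u v) (hV0 v)
  have hPVm : StronglyMeasurable (fun u => ∫ v, p u v * V v) := by
    apply StronglyMeasurable.integral_prod_right (f := fun u v => p u v * V v)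
    exact hpm.mul (hVm.stronglyMeasurable.comp_measurable measurable_snd)
  have hgPV : Integrable (fun u => |g u| * ∫ v, p u v * V v) := by
    refine Integrable.mono' (g := fun u => lam * (|g u| * V u) + K * |g u|)
      ((hgV.const_mul _).add (hagi.const_mul _)) (hagm.mul hPVm).aestronglyMeasurable
      (Eventually.of_forall fun u => ?_)
    rw [Real.norm_eq_abs, abs_mul, abs_abs, abs_of_nonneg (hPV0 u)]
    nlinarith [mul_le_mul_of_nonneg_left (hPV u) (abs_nonneg (g u))]
  have F1 : Integrable (fun z : ℝ × ℝ => g z.1 * p z.1 z.2) (volume.prod volume) := by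
    have := fub_aux (W := fun _ => 1) (g := g) hpm hp0 measurable_const (fun _ => zero_le_one)
      (by simpa using hpi) hgm (by simpa [hp1] using hagi)
    simpa using this
  have F2 : Integrable (fun z : ℝ × ℝ => |g z.1| * p z.1 z.2) (volume.prod volume) := by
    have := fub_aux (W := fun _ => 1) (g := fun u => |g u|) hpm hp0 measurable_const
      (fun _ => zero_le_one)
      (by simpa using hpi) hagm (by simpa [hp1] using hagi)
    simpa using this
  have F3 : Integrable (fun z : ℝ × ℝ => |g z.1| * p z.1 z.2 * V z.2) (volume.prod volume) :=
    fub_aux (W := V) (g := fun u => |g u|) hpm hp0 hVm hV0 hPVi hagm (by simpa using hgPV)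
  have hgp : ∀ v, Integrable (fun u => g u * p u v) := fun v => by
    refine hgi.mul_bdd (c := Mp) ?_ (Eventually.of_forall fun u => ?_)
    · exact (hpm.comp_measurable (measurable_id.prodMk measurable_const)).aestronglyMeasurable
    · rw [Real.norm_eq_abs, abs_of_nonneg (hp0 u v)]; exact hpM u v
  have hagp : ∀ v, Integrable (fun u => |g u| * p u v) := fun v => by
    refine hagi.mul_bdd (c := Mp) ?_ (Eventually.of_forall fun u => ?_)
    · exact (hpm.comp_measurable (measurable_id.prodMk measurable_const)).aestronglyMeasurable
    · rw [Real.norm_eq_abs, abs_of_nonneg (hp0 u v)]; exact hpM u v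
  set A : ℝ → ℝ := fun v => ∫ u, |g u| * p u v with hA
  have hhm : StronglyMeasurable (fun v => ∫ u, g u * p u v) := by
    apply StronglyMeasurable.integral_prod_left (f := fun u v => g u * p u v)
    exact (hgm.comp_measurable measurable_fst).mul hpm
  have hhi : Integrable (fun v => ∫ u, g u * p u v) := F1.integral_prod_right
  have hAi : Integrable A := F2.integral_prod_right
  have hAV : Integrable (fun v => A v * V v) := by
    have := F3.integral_prod_right
    simpa [integral_mul_const] using this
  have hhA : ∀ v, |∫ u, g u * p u v| ≤ A v := fun v => by
    refine (abs_integral_le_integral_abs).trans (le_of_eq ?_)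
    simp only [hA]
    congr 1; ext u; rw [abs_mul, abs_of_nonneg (hp0 u v)]
  have hhV : Integrable (fun v => |∫ u, g u * p u v| * V v) := by
    refine hAV.mono' (hhm.norm.mul hVm.stronglyMeasurable).aestronglyMeasurable
      (Eventually.of_forall fun v => ?_)
    rw [Real.norm_eq_abs, abs_mul, abs_abs, abs_of_nonneg (hV0 v)]
    exact mul_le_mul_of_nonneg_right (hhA v) (hV0 v)
  have IA : ∫ v, A v = ∫ u, |g u| := by
    simp only [hA]
    rw [integral_integral_swap (f := fun v u => |g u| * p u v) F2.swap]
    simp [integral_const_mul, hp1]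
  have IAV : ∫ v, A v * V v = ∫ u, |g u| * ∫ v, p u v * V v := by
    have := integral_integral_swap (f := fun v u => |g u| * p u v * V v) F3.swap
    simp only [integral_mul_const] at this
    rw [this]
    simp only [mul_assoc, integral_const_mul]
  refine ⟨hhm, hhi, hhV, ?_, ?_⟩
  · rw [integral_integral_swap (f := fun v u => g u * p u v) F1.swap]
    simp [integral_const_mul, hp1, hg0]
  -- main estimate
  set C : Set ℝ := {u | V u ≤ R} with hCdef
  have hCm : MeasurableSet C := measurableSet_le hVm measurable_const
  set D : ℝ := (∫ u in Cᶜ, |g u|) - ∫ u in C, |g u| with hD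
  have key : ∀ v, |∫ u, g u * p u v| ≤ A v + α * ν v * D := fun v => by
    have e1 : ∫ u, g u * p u v = (∫ u, g u * (p u v - C.indicator (fun _ => α * ν v) u))
        + α * ν v * ∫ u in C, g u := by
      rw [← integral_const_mul, ← integral_indicator hCm, ← integral_add]
      · congr 1; ext u
        by_cases hu : u ∈ C <;> simp [hu]
        ring
      · have : (fun u => g u * (p u v - C.indicator (fun _ => α * ν v) u)) =
          fun u => g u * p u v - C.indicator (fun u => α * ν v * g u) u := by
          ext u
          by_cases hu : u ∈ C <;> simp [hu]
          ring
        rw [this]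
        exact (hgp v).sub ((hgi.const_mul _).indicator hCm)
      · exact (hgi.const_mul _).indicator hCm
    have e2 : |∫ u, g u * (p u v - C.indicator (fun _ => α * ν v) u)| ≤
        A v - α * ν v * ∫ u in C, |g u| := by
      refine (abs_integral_le_integral_abs).trans (le_of_eq ?_)
      rw [← integral_const_mul, ← integral_indicator hCm]
      simp only [hA]
      rw [← integral_sub (hagp v) ((hagi.const_mul _).indicator hCm)]
      congr 1; ext u
      by_cases hu : u ∈ C
      · simp only [hu, indicator_of_mem]
        rw [abs_mul, abs_of_nonneg (sub_nonneg.2 (hmin u hu v))]; ring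
      · simp [hu, abs_mul, abs_of_nonneg (hp0 u v)]
    have e3 : |∫ u in C, g u| ≤ ∫ u in Cᶜ, |g u| := by
      have : ∫ u in C, g u = - ∫ u in Cᶜ, g u := by
        have := integral_add_compl hCm hgi
        linarith
      rw [this, abs_neg]
      exact abs_integral_le_integral_abs
    have hαν : 0 ≤ α * ν v := mul_nonneg hα (hν0 v)
    calc _ ≤ |∫ u, g u * (p u v - C.indicator (fun _ => α * ν v) u)|
        + |α * ν v * ∫ u in C, g u| := by rw [e1]; exact abs_add_le _ _
      _ ≤ (A v - α * ν v * ∫ u in C, |g u|) + α * ν v * ∫ u in Cᶜ, |g u| := by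
        refine add_le_add e2 ?_
        rw [abs_mul, abs_of_nonneg hαν]
        exact mul_le_mul_of_nonneg_left e3 hαν
      _ = _ := by rw [hD]; ring
  have hDeq : D = ∫ u, |g u| * (Cᶜ.indicator 1 u - C.indicator 1 u) := by
    rw [hD, ← integral_indicator hCm, ← integral_indicator hCm.compl, ← integral_sub
      (hagi.indicator hCm.compl) (hagi.indicator hCm)]
    congr 1; ext u
    by_cases hu : u ∈ C <;> simp [hu]
  have hDi : Integrable (fun u => |g u| * (Cᶜ.indicator 1 u - C.indicator 1 u)) := by
    refine ((hagi.indicator hCm.compl).sub (hagi.indicator hCm)).congr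
      (Eventually.of_forall fun u => ?_)
    by_cases hu : u ∈ C <;> simp [hu]
  calc ∫ v, |∫ u, g u * p u v| * (1 + β * V v)
      ≤ ∫ v, (A v + α * D * ν v + β * (A v * V v)) := by
        refine integral_mono ?_ ?_ fun v => ?_
        · have := hhi.abs.add (hhV.const_mul β)
          refine this.congr (Eventually.of_forall fun v => ?_)
          simp; ring
        · exact (hAi.add (hνi.const_mul _)).add (hAV.const_mul _)
        · have h1 := key v
          have h2 := mul_le_mul_of_nonneg_right (hhA v) (mul_nonneg hβ (hV0 v))
          simp only
          linarith
    _ = (∫ u, |g u|) + α * D + β * ∫ u, |g u| * ∫ v, p u v * V v := by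
        have hs : Integrable (fun v => A v + α * D * ν v) := hAi.add (hνi.const_mul _)
        rw [integral_add hs (hAV.const_mul _),
          integral_add hAi (hνi.const_mul _), integral_const_mul, integral_const_mul, IA, IAV, hν1]
        ring
    _ = ∫ u, (|g u| + α * (|g u| * (Cᶜ.indicator 1 u - C.indicator 1 u))
          + β * (|g u| * ∫ v, p u v * V v)) := by
        have hs : Integrable (fun u => |g u| + α * (|g u| * (Cᶜ.indicator 1 u - C.indicator 1 u))) :=
          hagi.add (hDi.const_mul _)
        rw [integral_add hs (hgPV.const_mul _),
          integral_add hagi (hDi.const_mul _), integral_const_mul, integral_const_mul, hDeq]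
    _ ≤ ∫ u, ρ * (|g u| * (1 + β * V u)) := by
        refine integral_mono ((hagi.add (hDi.const_mul _)).add (hgPV.const_mul _)) ?_ fun u => ?_
        · have := (hagi.add (hgV.const_mul β)).const_mul ρ
          refine this.congr (Eventually.of_forall fun v => ?_)
          simp only [Pi.add_apply]; ring
        · have h1 := mul_le_mul_of_nonneg_left (hPV u) (mul_nonneg hβ (abs_nonneg (g u)))
          by_cases hu : u ∈ C
          · have h2 := mul_le_mul_of_nonneg_left (hC u hu) (abs_nonneg (g u))
            simp [hu]
            linarith
          · have h2 := mul_le_mul_of_nonneg_left (hCc u (not_le.1 hu)) (abs_nonneg (g u))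
            simp [hu]
            linarith
    _ = _ := integral_const_mul _ _

lemma stat_V {p : ℝ → ℝ → ℝ} {V q : ℝ → ℝ} {lam K : ℝ}
    (hpm : StronglyMeasurable (Function.uncurry p)) (hp0 : ∀ u v, 0 ≤ p u v)
    (hpi : ∀ u, Integrable (p u)) (hp1 : ∀ u, ∫ v, p u v = 1)
    (hVm : Measurable V) (hV0 : ∀ u, 0 ≤ V u)
    (hPVi : ∀ u, Integrable fun v => p u v * V v)
    (hPV : ∀ u, ∫ v, p u v * V v ≤ lam * V u + K)
    (hlam : lam < 1) (hK : 0 ≤ K)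
    (hqm : StronglyMeasurable q) (hqi : Integrable q) (hq0 : ∀ u, 0 ≤ q u)
    (hq1 : ∫ u, q u = 1) (hinv : ∀ v, ∫ u, q u * p u v = q v) :
    Integrable (fun u => q u * V u) := by
  have cover : AECover volume atTop (fun n : ℕ => {u | V u ≤ n}) := by
    refine ⟨Eventually.of_forall fun u => ?_, fun n => measurableSet_le hVm measurable_const⟩
    exact (tendsto_natCast_atTop_atTop.eventually_ge_atTop (V u))
  have hqVm : StronglyMeasurable (fun u => q u * V u) := hqm.mul hVm.stronglyMeasurable
  refine cover.integrable_of_integral_norm_bounded (K / (1 - lam)) (fun n => ?_) ?_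
  · refine Integrable.mono' (g := fun u => q u * n) (hqi.mul_const _).integrableOn
      hqVm.aestronglyMeasurable ?_
    refine (ae_restrict_iff' (measurableSet_le hVm measurable_const)).2
      (Eventually.of_forall fun u (hu : V u ≤ n) => ?_)
    rw [Real.norm_eq_abs, abs_of_nonneg (mul_nonneg (hq0 u) (hV0 u))]
    exact mul_le_mul_of_nonneg_left hu (hq0 u)
  filter_upwards [tendsto_natCast_atTop_atTop.eventually_ge_atTop (K / (1 - lam))] with n hn
  have h1l : 0 < 1 - lam := by linarith
  have hnK : lam * n + K ≤ n := by
    rw [div_le_iff₀ h1l] at hn; nlinarith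
  have hn0 : (0:ℝ) ≤ n := Nat.cast_nonneg n
  set W : ℝ → ℝ := fun v => min (V v) n with hW
  have hWm : Measurable W := hVm.min measurable_const
  have hW0 : ∀ v, 0 ≤ W v := fun v => le_min (hV0 v) hn0
  have hWn : ∀ v, W v ≤ n := fun v => min_le_right _ _
  have hWi : ∀ {h : ℝ → ℝ}, Integrable h → Integrable (fun v => h v * W v) := fun hh =>
    hh.mul_bdd (c := n) hWm.aestronglyMeasurable (Eventually.of_forall fun v => by
      rw [Real.norm_eq_abs, abs_of_nonneg (hW0 v)]; exact hWn v)
  have hPWm : StronglyMeasurable (fun u => ∫ v, p u v * W v) := by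
    apply StronglyMeasurable.integral_prod_right (f := fun u v => p u v * W v)
    exact hpm.mul (hWm.stronglyMeasurable.comp_measurable measurable_snd)
  have hPW0 : ∀ u, 0 ≤ ∫ v, p u v * W v := fun u =>
    integral_nonneg fun v => mul_nonneg (hp0 u v) (hW0 v)
  have hPW1 : ∀ u, ∫ v, p u v * W v ≤ n := fun u => by
    calc _ ≤ ∫ v, p u v * n := integral_mono (hWi (hpi u)) ((hpi u).mul_const _)
            fun v => mul_le_mul_of_nonneg_left (hWn v) (hp0 u v)
      _ = n := by rw [integral_mul_const, hp1, one_mul]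
  have hPW2 : ∀ u, ∫ v, p u v * W v ≤ lam * V u + K := fun u =>
    (integral_mono (hWi (hpi u)) (hPVi u)
            fun v => mul_le_mul_of_nonneg_left (min_le_left _ _) (hp0 u v)).trans (hPV u)
  have hqPW : Integrable (fun u => q u * ∫ v, p u v * W v) :=
    hqi.mul_bdd (c := n) hPWm.aestronglyMeasurable (Eventually.of_forall fun v => by
      rw [Real.norm_eq_abs, abs_of_nonneg (hPW0 v)]; exact hPW1 v)
  have F : Integrable (fun z : ℝ × ℝ => q z.1 * p z.1 z.2 * W z.2) (volume.prod volume) :=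
    fub_aux hpm hp0 hWm hW0 (fun u => hWi (hpi u)) hqm (by
      simpa [abs_of_nonneg (hq0 _)] using hqPW)
  have E : ∫ v, q v * W v = ∫ u, q u * ∫ v, p u v * W v := by
    have := integral_integral_swap (f := fun v u => q u * p u v * W v) F.swap
    simp only [integral_mul_const, hinv] at this
    rw [this]
    simp only [mul_assoc, integral_const_mul]
  have S : MeasurableSet {u | V u ≤ n} := measurableSet_le hVm measurable_const
  have hI : Integrable ({u | V u ≤ n}.indicator (fun u => q u * V u)) := by
    refine (hqi.mul_const (n:ℝ)).mono' (hqVm.indicator S).aestronglyMeasurable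
      (Eventually.of_forall fun u => ?_)
    by_cases hu : V u ≤ n
    · rw [indicator_of_mem (by exact hu), Real.norm_eq_abs,
        abs_of_nonneg (mul_nonneg (hq0 u) (hV0 u))]
      exact mul_le_mul_of_nonneg_left hu (hq0 u)
    · rw [indicator_of_notMem (by exact hu), norm_zero]
      exact mul_nonneg (hq0 u) hn0
  have hfin : (1 - lam) * (∫ u, {u | V u ≤ n}.indicator (fun u => q u * V u) u) - K
      ≤ (∫ v, q v * W v) - ∫ u, q u * ∫ v, p u v * W v := by
    rw [← integral_sub (hWi hqi) hqPW, ← integral_const_mul]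
    have : K = ∫ u, K * q u := by rw [integral_const_mul, hq1, mul_one]
    conv_lhs => rw [this]
    rw [← integral_sub (hI.const_mul _) (hqi.const_mul _)]
    refine integral_mono ((hI.const_mul _).sub (hqi.const_mul _)) ((hWi hqi).sub hqPW) fun u => ?_
    simp only
    by_cases hu : V u ≤ n
    · rw [indicator_of_mem (by exact hu)]
      have : W u = V u := min_eq_left hu
      rw [this]
      nlinarith [mul_le_mul_of_nonneg_left (hPW2 u) (hq0 u)]
    · rw [indicator_of_notMem (by exact hu)]
      have : W u = n := min_eq_right (not_le.1 hu).le
      rw [this]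
      nlinarith [mul_le_mul_of_nonneg_left (hPW1 u) (hq0 u), mul_nonneg hK (hq0 u)]
  rw [E, sub_self, integral_indicator S] at hfin
  rw [le_div_iff₀ h1l]
  have : ∫ u in {u | V u ≤ n}, ‖q u * V u‖ = ∫ u in {u | V u ≤ n}, q u * V u := by
    congr 1; ext u; rw [Real.norm_eq_abs, abs_of_nonneg (mul_nonneg (hq0 u) (hV0 u))]
  rw [this]; linarith

lemma harris {p : ℝ → ℝ → ℝ} {V ν q : ℝ → ℝ} {lam K Mp : ℝ}
    (hpm : StronglyMeasurable (Function.uncurry p)) (hp0 : ∀ u v, 0 ≤ p u v)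
    (hpM : ∀ u v, p u v ≤ Mp)
    (hpi : ∀ u, Integrable (p u)) (hp1 : ∀ u, ∫ v, p u v = 1)
    (hVm : Measurable V) (hV0 : ∀ u, 0 ≤ V u)
    (hPVi : ∀ u, Integrable fun v => p u v * V v)
    (hPV : ∀ u, ∫ v, p u v * V v ≤ lam * V u + K)
    (hlam0 : 0 ≤ lam) (hlam : lam < 1) (hK : 0 < K)
    (hqm : StronglyMeasurable q) (hqi : Integrable q) (hq0 : ∀ u, 0 ≤ q u)
    (hq1 : ∫ u, q u = 1) (hinv : ∀ v, ∫ u, q u * p u v = q v)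
    (hνi : Integrable ν) (hν1 : ∫ v, ν v = 1) (hν0 : ∀ v, 0 ≤ ν v)
    (hsmall : ∀ R : ℝ, ∃ α : ℝ, 0 < α ∧ ∀ u, V u ≤ R → ∀ v, α * ν v ≤ p u v) :
    ∃ r : ℝ, 0 ≤ r ∧ r < 1 ∧ ∃ M : ℝ → ℝ, (∀ θ₀, 0 ≤ M θ₀) ∧
      ∀ θ₀ : ℝ, ∀ P : ℕ → ℝ → ℝ, (∀ v, P 1 v = p θ₀ v) →
        (∀ n v, P (n + 2) v = ∫ u, P (n + 1) u * p u v) → ∀ n : ℕ, 1 ≤ n →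
        (∫ v, |P n v - q v|) ≤ M θ₀ * r ^ n := by
  have hqV := stat_V hpm hp0 hpi hp1 hVm hV0 hPVi hPV hlam hK.le hqm hqi hq0 hq1 hinv
  obtain ⟨α, hα, hmin⟩ := hsmall (8 * K / (1 - lam))
  have h1l : 0 < 1 - lam := by linarith
  set R := 8 * K / (1 - lam) with hR
  set β := α / (2 * K) with hβ
  have hβ0 : 0 < β := by positivity
  have hβK : β * K = α / 2 := by rw [hβ]; field_simp
  have hRK : (1 - lam) * R = 8 * K := by rw [hR]; field_simp
  set ρ := max (1 - α / 2) ((1 + lam) / 2) with hρ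
  have hρ1 : 1 - α / 2 ≤ ρ := le_max_left _ _
  have hρ2 : (1 + lam) / 2 ≤ ρ := le_max_right _ _
  have hρ0 : 0 < ρ := by linarith
  have hρlt : ρ < 1 := max_lt (by linarith) (by linarith)
  have hC : ∀ u, V u ≤ R → 1 - α + β * (lam * V u + K) ≤ ρ * (1 + β * V u) := fun u _ => by
    have : 0 ≤ (ρ - lam) * (β * V u) :=
      mul_nonneg (by linarith) (mul_nonneg hβ0.le (hV0 u))
    nlinarith
  have hCc : ∀ u, R < V u → 1 + α + β * (lam * V u + K) ≤ ρ * (1 + β * V u) := fun u hu => by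
    have h1 : (1 - lam) / 2 * (β * V u) ≤ (ρ - lam) * (β * V u) :=
      mul_le_mul_of_nonneg_right (by linarith) (mul_nonneg hβ0.le (hV0 u))
    have h2 : (1 - lam) * R * β ≤ (1 - lam) * V u * β := by gcongr
    rw [hRK] at h2
    nlinarith
  have step := fun (g : ℝ → ℝ) hgm hgi hgV hg0 => harris_step (g := g) hpm hp0 hpM hpi hp1 hVm hV0
    hPVi hPV hνi hν1 hν0 hmin hα.le hβ0.le hC hCc hgm hgi hgV hg0
  set N : (ℝ → ℝ) → ℝ := fun g => ∫ u, |g u| * (1 + β * V u) with hN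
  have hN0 : ∀ g, 0 ≤ N g := fun g => integral_nonneg fun u =>
    mul_nonneg (abs_nonneg _) (by have := mul_nonneg hβ0.le (hV0 u); linarith)
  have hpsm : ∀ u, StronglyMeasurable (p u) := fun u =>
    hpm.comp_measurable (measurable_const.prodMk measurable_id)
  refine ⟨ρ, hρ0.le, hρlt, fun θ₀ => N (fun v => p θ₀ v - q v) / ρ,
    fun θ₀ => div_nonneg (hN0 _) hρ0.le, ?_⟩
  intro θ₀ P hP1 hP2
  have main : ∀ n : ℕ, StronglyMeasurable (fun v => P (n + 1) v - q v) ∧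
      Integrable (fun v => P (n + 1) v - q v) ∧
      Integrable (fun v => |P (n + 1) v - q v| * V v) ∧
      ∫ v, (P (n + 1) v - q v) = 0 ∧
      N (fun v => P (n + 1) v - q v) ≤ ρ ^ n * N (fun v => p θ₀ v - q v) := by
    intro n
    induction n with
    | zero =>
      simp only [zero_add, hP1, pow_zero, one_mul, le_refl, and_true]
      have hm : StronglyMeasurable (fun v => p θ₀ v - q v) := (hpsm θ₀).sub hqm
      refine ⟨hm, (hpi θ₀).sub hqi, ?_, ?_⟩
      · refine ((hPVi θ₀).add hqV).mono' (hm.norm.mul hVm.stronglyMeasurable).aestronglyMeasurable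
          (Eventually.of_forall fun v => ?_)
        rw [Real.norm_eq_abs, abs_mul, abs_abs, abs_of_nonneg (hV0 v), Pi.add_apply, ← add_mul]
        refine mul_le_mul_of_nonneg_right ?_ (hV0 v)
        rw [abs_le]
        constructor <;> linarith [hp0 θ₀ v, hq0 v]
      · rw [integral_sub (hpi θ₀) hqi, hp1, hq1, sub_self]
    | succ n ih =>
      obtain ⟨i1, i2, i3, i4, i5⟩ := ih
      have hbd : ∀ {g : ℝ → ℝ}, Integrable g → ∀ v, Integrable (fun u => g u * p u v) := by
        intro g hg v
        refine hg.mul_bdd (c := Mp) ?_ (Eventually.of_forall fun u => ?_)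
        · exact (hpm.comp_measurable (measurable_id.prodMk measurable_const)).aestronglyMeasurable
        · rw [Real.norm_eq_abs, abs_of_nonneg (hp0 u v)]; exact hpM u v
      have e : (fun v => P (n + 1 + 1) v - q v) = fun v => ∫ u, (P (n + 1) u - q u) * p u v := by
        ext v
        have hPi : Integrable (fun u => P (n + 1) u) := by
          refine (i2.add hqi).congr (Eventually.of_forall fun u => ?_)
          simp
        rw [hP2, ← hinv v, ← integral_sub (hbd hPi v) (hbd hqi v)]
        congr 1; ext u
        ring
      obtain ⟨s1, s2, s3, s4, s5⟩ := step _ i1 i2 i3 i4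
      have e' := fun v => congrFun e v
      simp only [e']
      refine ⟨s1, s2, s3, s4, ?_⟩
      calc _ ≤ ρ * N (fun v => P (n + 1) v - q v) := s5
        _ ≤ ρ * (ρ ^ n * N (fun v => p θ₀ v - q v)) := mul_le_mul_of_nonneg_left i5 hρ0.le
        _ = _ := by ring
  intro n hn
  obtain ⟨m, rfl⟩ : ∃ m, n = m + 1 := ⟨n - 1, by omega⟩
  obtain ⟨i1, i2, i3, i4, i5⟩ := main m
  calc ∫ v, |P (m + 1) v - q v| ≤ N (fun v => P (m + 1) v - q v) := by
        refine integral_mono i2.abs ?_ fun v => ?_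
        · refine (i2.abs.add (i3.const_mul β)).congr (Eventually.of_forall fun v => ?_)
          simp only [Pi.add_apply]; ring
        · have := mul_nonneg (abs_nonneg (P (m + 1) v - q v)) (mul_nonneg hβ0.le (hV0 v))
          simp only
          linarith
    _ ≤ _ := i5
    _ = _ := by rw [pow_succ]; field_simp

lemma exp_bd {σ η z : ℝ} (hσ : 0 < σ) (hη : |η| ≤ σ / 2) :
    Real.exp (η * z) ≤ 1 + η * z + η ^ 2 * (8 / σ ^ 2 * Real.exp (σ * |z|)) := by
  have h1 := Complex.norm_exp_sub_sum_le_norm_mul_exp ((η * z : ℝ) : ℂ) 2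
  have h2 : |Real.exp (η * z) - (1 + η * z)| ≤ |η * z| ^ 2 * Real.exp |η * z| := by
    have e : Complex.exp ((η * z : ℝ) : ℂ) - ∑ m ∈ Finset.range 2, ((η * z : ℝ) : ℂ) ^ m / m.factorial
      = ((Real.exp (η * z) - (1 + η * z) : ℝ) : ℂ) := by
      simp [Finset.sum_range_succ]
    rw [e, Complex.norm_real, Complex.norm_real] at h1
    exact h1
  have h3 := (abs_le.1 h2).2
  rw [sq_abs, mul_pow] at h3
  have hz := abs_nonneg z
  have h4 : Real.exp |η * z| ≤ Real.exp (σ / 2 * |z|) := by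
    rw [abs_mul]; gcongr
  have h5 : z ^ 2 ≤ 8 / σ ^ 2 * Real.exp (σ / 2 * |z|) := by
    have := Real.quadratic_le_exp_of_nonneg (x := σ / 2 * |z|) (by positivity)
    rw [div_mul_eq_mul_div, le_div_iff₀ (by positivity)]
    rw [mul_pow, sq_abs] at this
    nlinarith [mul_nonneg hσ.le hz]
  have h6 : Real.exp (σ * |z|) = Real.exp (σ / 2 * |z|) * Real.exp (σ / 2 * |z|) := by
    rw [← Real.exp_add]; ring_nf
  have h7 : z ^ 2 * Real.exp |η * z| ≤ 8 / σ ^ 2 * Real.exp (σ * |z|) := by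
    rw [h6, ← mul_assoc]; gcongr
  have := mul_le_mul_of_nonneg_left h7 (sq_nonneg η)
  nlinarith

lemma tail_mgf {a b : ℝ} (ha : 0 < a) (hb : 0 < b) : ∃ K₁ : ℝ, 0 < K₁ ∧
    ∀ (q : ℝ → ℝ) (θ : ℝ), Continuous q → (∀ x, 0 ≤ q x) → Integrable q → ∫ x, q x = 1 →
    (∀ t : ℝ, 0 ≤ t → (∫ x in {x : ℝ | t < |x - θ|}, q x) ≤ a * Real.exp (-b * t)) →
    Integrable (fun x => Real.exp (b / 2 * |x - θ|) * q x) ∧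
    ∫ x, Real.exp (b / 2 * |x - θ|) * q x ≤ K₁ := by
  set w : ℕ → ℝ := fun n => Real.exp (b / 2 * (n + 1)) * (a * Real.exp (-b * n)) with hw
  have hw0 : ∀ n, 0 ≤ w n := fun n => by positivity
  have hws : Summable w := by
    have h : Summable fun n : ℕ => (Real.exp (b / 2) * a) * Real.exp (-(b / 2)) ^ n :=
      (summable_geometric_of_lt_one (Real.exp_pos _).le
        (Real.exp_lt_one_iff.2 (by linarith))).mul_left _
    refine h.congr fun n => ?_
    rw [hw, ← Real.exp_nat_mul]
    simp only
    rw [show b / 2 * ((n:ℝ) + 1) = b / 2 + b / 2 * n by ring, Real.exp_add,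
      show -b * (n:ℝ) = n * (-(b / 2)) + - (b / 2 * n) by ring, Real.exp_add, Real.exp_neg (b / 2 * n)]
    have := Real.exp_pos (b / 2 * n)
    field_simp
  have hts : 0 ≤ ∑' n, w n := tsum_nonneg hw0
  refine ⟨1 + ∑' n, w n, by linarith, ?_⟩
  intro q θ hqc hq0 hqi hq1 ht
  have hSm : ∀ t : ℝ, MeasurableSet {x : ℝ | t < |x - θ|} := fun t =>
    measurableSet_lt measurable_const (by fun_prop)
  have hqm : Measurable fun x => ENNReal.ofReal (q x) := by fun_prop
  have hle : ∫⁻ x, ENNReal.ofReal (Real.exp (b / 2 * |x - θ|) * q x) ≤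
      ENNReal.ofReal (1 + ∑' n, w n) := by
    calc _ ≤ ∫⁻ x, (ENNReal.ofReal (q x) + ∑' n : ℕ, ENNReal.ofReal (Real.exp (b / 2 * (n + 1))) *
            {x : ℝ | (n:ℝ) < |x - θ|}.indicator (fun x => ENNReal.ofReal (q x)) x) := by
          refine lintegral_mono fun x => ?_
          by_cases hx : |x - θ| = 0
          · simp [hx]
          · have hpos : 0 < |x - θ| := lt_of_le_of_ne (abs_nonneg _) (Ne.symm hx)
            obtain ⟨n, hn1, hn2⟩ : ∃ n : ℕ, (n:ℝ) < |x - θ| ∧ |x - θ| ≤ n + 1 := by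
              have hc : 0 < ⌈|x - θ|⌉₊ := Nat.ceil_pos.2 hpos
              refine ⟨⌈|x - θ|⌉₊ - 1, ?_, ?_⟩
              · exact Nat.lt_ceil.1 (by omega)
              · rw [Nat.cast_sub hc]; simpa using Nat.le_ceil _
            refine le_add_left ((le_trans ?_ (ENNReal.le_tsum n)))
            rw [indicator_of_mem (by exact hn1), ENNReal.ofReal_mul (Real.exp_pos _).le]
            gcongr
      _ = ENNReal.ofReal 1 + ∑' n : ℕ, ENNReal.ofReal (Real.exp (b / 2 * (n + 1))) *
            ENNReal.ofReal (∫ x in {x : ℝ | (n:ℝ) < |x - θ|}, q x) := by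
          rw [lintegral_add_left hqm, lintegral_tsum (fun n : ℕ =>
            ((hqm.indicator (hSm n)).const_mul _).aemeasurable),
            ← ofReal_integral_eq_lintegral_ofReal hqi (Eventually.of_forall hq0), hq1]
          congr 2; ext n
          rw [lintegral_const_mul _ (hqm.indicator (hSm n)), lintegral_indicator (hSm n),
            ofReal_integral_eq_lintegral_ofReal hqi.integrableOn (Eventually.of_forall hq0)]
      _ ≤ ENNReal.ofReal 1 + ∑' n : ℕ, ENNReal.ofReal (w n) := by
          gcongr with n
          rw [← ENNReal.ofReal_mul (Real.exp_pos _).le]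
          apply ENNReal.ofReal_le_ofReal
          exact mul_le_mul_of_nonneg_left (ht n (Nat.cast_nonneg n)) (Real.exp_pos _).le
      _ = _ := by
          rw [← ENNReal.ofReal_tsum_of_nonneg hw0 hws,
            ← ENNReal.ofReal_add zero_le_one (tsum_nonneg hw0)]
  have hn : ∀ x, 0 ≤ Real.exp (b / 2 * |x - θ|) * q x := fun x =>
    mul_nonneg (Real.exp_pos _).le (hq0 x)
  have hI : Integrable (fun x => Real.exp (b / 2 * |x - θ|) * q x) := by
    refine ⟨by fun_prop, ?_⟩
    rw [hasFiniteIntegral_iff_ofReal (Eventually.of_forall hn)]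
    exact hle.trans_lt ENNReal.ofReal_lt_top
  refine ⟨hI, ?_⟩
  rw [integral_eq_lintegral_of_nonneg_ae (Eventually.of_forall hn) hI.1]
  exact ENNReal.toReal_le_of_le_ofReal (by linarith) hle

lemma mgf_bd {q : ℝ → ℝ} {θ σ η K₁ : ℝ} (hσ : 0 < σ) (hη : |η| ≤ σ / 2)
    (hqc : Continuous q) (hq0 : ∀ x, 0 ≤ q x) (hqi : Integrable q) (hq1 : ∫ x, q x = 1)
    (hI : Integrable (fun x => Real.exp (σ * |x - θ|) * q x))
    (hK : ∫ x, Real.exp (σ * |x - θ|) * q x ≤ K₁) :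
    Integrable (fun x => Real.exp (η * (x - θ)) * q x) ∧
    ∫ x, Real.exp (η * (x - θ)) * q x ≤
      1 + η * ((∫ x, x * q x) - θ) + η ^ 2 * (8 / σ ^ 2 * K₁) ∧
    ∫ x, Real.exp (η * (x - θ)) * q x ≤ K₁ := by
  have hle : ∀ x, Real.exp (η * (x - θ)) ≤ Real.exp (σ * |x - θ|) := fun x => by
    apply Real.exp_le_exp.2
    calc η * (x - θ) ≤ |η * (x - θ)| := le_abs_self _
      _ = |η| * |x - θ| := abs_mul _ _
      _ ≤ σ * |x - θ| := mul_le_mul_of_nonneg_right (by linarith) (abs_nonneg _)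
  have h1 : Integrable (fun x => Real.exp (η * (x - θ)) * q x) := by
    refine hI.mono' (by fun_prop) (Eventually.of_forall fun x => ?_)
    rw [Real.norm_eq_abs, abs_of_nonneg (mul_nonneg (Real.exp_pos _).le (hq0 x))]
    exact mul_le_mul_of_nonneg_right (hle x) (hq0 x)
  have h2 : Integrable (fun x => (x - θ) * q x) := by
    refine (hI.const_mul (1 / σ)).mono' (by fun_prop) (Eventually.of_forall fun x => ?_)
    rw [Real.norm_eq_abs, abs_mul, abs_of_nonneg (hq0 x), ← mul_assoc]
    refine mul_le_mul_of_nonneg_right ?_ (hq0 x)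
    rw [one_div, ← div_eq_inv_mul, le_div_iff₀ hσ]
    have := Real.add_one_le_exp (σ * |x - θ|)
    linarith
  have h3 : Integrable (fun x => x * q x) := by
    refine (h2.add (hqi.const_mul θ)).congr (Eventually.of_forall fun x => ?_)
    simp only [Pi.add_apply]; ring
  have h4 : ∫ x, (x - θ) * q x = (∫ x, x * q x) - θ := by
    have : ∀ x, (x - θ) * q x = x * q x - θ * q x := fun x => by ring
    simp only [this]
    rw [integral_sub h3 (hqi.const_mul _), integral_const_mul, hq1, mul_one]
  refine ⟨h1, ?_, ?_⟩
  · have hs : Integrable (fun x => q x + η * ((x - θ) * q x)) := hqi.add (h2.const_mul _)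
    calc _ ≤ ∫ x, (q x + η * ((x - θ) * q x)
            + η ^ 2 * (8 / σ ^ 2) * (Real.exp (σ * |x - θ|) * q x)) := by
          refine integral_mono h1 (hs.add (hI.const_mul _)) fun x => ?_
          have := mul_le_mul_of_nonneg_right (exp_bd (z := x - θ) hσ hη) (hq0 x)
          simp only
          linarith
      _ = 1 + η * ((∫ x, x * q x) - θ)
            + η ^ 2 * (8 / σ ^ 2) * ∫ x, Real.exp (σ * |x - θ|) * q x := by
          rw [integral_add hs (hI.const_mul _), integral_add hqi (h2.const_mul _),
            integral_const_mul, integral_const_mul, h4, hq1]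
      _ ≤ _ := by
          rw [← mul_assoc (η ^ 2)]
          gcongr
  · exact (integral_mono h1 hI fun x => mul_le_mul_of_nonneg_right (hle x) (hq0 x)).trans hK

lemma conv_exp {q f₂ : ℝ → ℝ} {η : ℝ} (hqc : Continuous q) (hq0 : ∀ x, 0 ≤ q x)
    (hfc : Continuous f₂) (hf0 : ∀ x, 0 ≤ f₂ x)
    (hqI : Integrable (fun x => Real.exp (η * x) * q x))
    (hfI : Integrable (fun x => Real.exp (-η * x) * f₂ x)) :
    Integrable (fun v => (∫ x, f₂ (x - v) * q x) * Real.exp (η * v)) ∧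
    ∫ v, (∫ x, f₂ (x - v) * q x) * Real.exp (η * v) =
      (∫ x, Real.exp (η * x) * q x) * ∫ t, Real.exp (-η * t) * f₂ t := by
  have e : ∀ x v : ℝ, f₂ (x - v) * Real.exp (η * v) =
      Real.exp (η * x) * (fun t => Real.exp (-η * t) * f₂ t) (x - v) := fun x v => by
    simp only
    rw [← mul_assoc, ← Real.exp_add, mul_comm]
    congr 2; ring
  have hi : ∀ x, Integrable (fun v => f₂ (x - v) * Real.exp (η * v)) := fun x => by
    simp only [e]
    exact (hfI.comp_sub_left x).const_mul _
  have hv : ∀ x, ∫ v, f₂ (x - v) * Real.exp (η * v) =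
      Real.exp (η * x) * ∫ t, Real.exp (-η * t) * f₂ t := fun x => by
    simp only [e]
    rw [integral_const_mul, integral_sub_left_eq_self (fun t => Real.exp (-η * t) * f₂ t)]
  have F := fub_aux (p := fun x v => f₂ (x - v)) (W := fun v => Real.exp (η * v)) (g := q)
    (Continuous.stronglyMeasurable (by unfold Function.uncurry; fun_prop)) (fun x v => hf0 _)
    (by fun_prop) (fun v => (Real.exp_pos _).le) hi hqc.stronglyMeasurable (by
      simp only [hv]
      refine (hqI.mul_const (∫ t, Real.exp (-η * t) * f₂ t)).congr
        (Eventually.of_forall fun x => ?_)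
      simp only [abs_of_nonneg (hq0 x)]
      ring)
  have e2 : ∀ v, ∫ x, q x * f₂ (x - v) * Real.exp (η * v) =
      (∫ x, f₂ (x - v) * q x) * Real.exp (η * v) := fun v => by
    rw [integral_mul_const]; congr 2; ext x; ring
  constructor
  · have := F.integral_prod_right
    simpa only [e2] using this
  · have := integral_integral_swap (f := fun v x => q x * f₂ (x - v) * Real.exp (η * v)) F.swap
    simp only [e2] at this
    rw [this]
    simp only [mul_assoc, integral_const_mul, hv]
    rw [← integral_mul_const]
    congr 1; ext x; ring

lemma exists_lb {f : ℝ → ℝ} (hf : Continuous f) (hpos : ∀ t, 0 < f t) (L : ℝ) :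
    ∃ m > 0, ∀ t, |t| ≤ L → m ≤ f t := by
  by_cases hL : 0 ≤ L
  · obtain ⟨x, _, hx⟩ := (isCompact_Icc (a := -L) (b := L)).exists_isMinOn
      ⟨0, by constructor <;> linarith⟩ hf.continuousOn
    exact ⟨f x, hpos x, fun t ht => hx (by exact abs_le.1 ht)⟩
  · exact ⟨1, one_pos, fun t ht => absurd ((abs_nonneg t).trans ht) hL⟩

theorem dur_gtip_mgf_implies_geometrically_ergodic (f₁ f₂ : ℝ → ℝ) (y : ℝ)
    (hf₁c : Continuous f₁) (hf₂c : Continuous f₂)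
    (hf₁pos : ∀ t, 0 < f₁ t) (hf₂pos : ∀ t, 0 < f₂ t)
    (hf₁bdd : ∃ M, ∀ t, f₁ t ≤ M) (hf₂bdd : ∃ M, ∀ t, f₂ t ≤ M)
    (hf₁sym : ∀ t, f₁ (-t) = f₁ t) (hf₂sym : ∀ t, f₂ (-t) = f₂ t)
    (hf₁prob : ∫ t, f₁ t = 1) (hf₂prob : ∫ t, f₂ t = 1)
    (hjint : ∀ θ, Integrable (fun x => fjoint f₁ f₂ y θ x))
    (hcpos : ∀ θ, 0 < cnorm f₁ f₂ y θ)
    (hCint : Integrable (fun θ => cnorm f₁ f₂ y θ))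
    (hDUR : ∃ d > (0 : ℝ), ∃ k > (0 : ℝ), ∀ θ : ℝ, k < |θ| →
      |∫ x, x * post f₁ f₂ y θ x| ≤ |θ| - d)
    (hGTIP : ∃ a > (0 : ℝ), ∃ b > (0 : ℝ), ∀ θ : ℝ, ∀ t : ℝ, 0 ≤ t →
      (∫ x in {x : ℝ | t < |x - θ|}, post f₁ f₂ y θ x) ≤ a * Real.exp (-b * t))
    (hMGF : ∃ s > (0 : ℝ), Integrable (fun t => Real.exp (s * |t|) * f₂ t)) :
    ∃ r : ℝ, 0 ≤ r ∧ r < 1 ∧ ∃ M : ℝ → ℝ, (∀ θ₀, 0 ≤ M θ₀) ∧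
      ∀ θ₀ : ℝ, ∀ n : ℕ, 1 ≤ n →
        (∫ θ, |gibbsTransN f₁ f₂ y n θ₀ θ - cnorm f₁ f₂ y θ / (∫ θ', cnorm f₁ f₂ y θ')|) ≤
          M θ₀ * r ^ n := by
  obtain ⟨d, hd, k, hk, hDUR⟩ := hDUR
  obtain ⟨a, ha, b, hb, hGTIP⟩ := hGTIP
  obtain ⟨s, hs, hMGF⟩ := hMGF
  obtain ⟨M₂, hM₂⟩ := hf₂bdd
  have hM₂pos : 0 < M₂ := (hf₂pos 0).trans_le (hM₂ 0)
  have hf₁i : Integrable f₁ := by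
    by_contra h; rw [integral_undef h] at hf₁prob; norm_num at hf₁prob
  have hf₂i : Integrable f₂ := by
    by_contra h; rw [integral_undef h] at hf₂prob; norm_num at hf₂prob
  -- basic facts on the joint density and the conditional posterior
  have hjc : ∀ θ, Continuous (fjoint f₁ f₂ y θ) := fun θ => by unfold fjoint; fun_prop
  have hjpos : ∀ θ x, 0 < fjoint f₁ f₂ y θ x := fun θ x => mul_pos (hf₁pos _) (hf₂pos _)
  have hqc : ∀ θ, Continuous (post f₁ f₂ y θ) := fun θ => (hjc θ).div_const _
  have hq0 : ∀ θ x, 0 ≤ post f₁ f₂ y θ x := fun θ x => div_nonneg (hjpos θ x).le (hcpos θ).le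
  have hqi : ∀ θ, Integrable (post f₁ f₂ y θ) := fun θ => (hjint θ).div_const _
  have hq1 : ∀ θ, ∫ x, post f₁ f₂ y θ x = 1 := fun θ => by
    unfold post
    rw [integral_div]
    exact div_self (hcpos θ).ne'
  have hpe : ∀ θ v, gibbsTrans f₁ f₂ y θ v = ∫ x, f₂ (x - v) * post f₁ f₂ y θ x := fun θ v => by
    unfold gibbsTrans post
    rw [← integral_const_mul]
    congr 1; ext x; ring
  -- measurability
  have hcm : StronglyMeasurable (cnorm f₁ f₂ y) := by
    unfold cnorm fjoint
    apply StronglyMeasurable.integral_prod_right (f := fun θ x => f₁ (y - x) * f₂ (x - θ))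
    exact Continuous.stronglyMeasurable (by unfold Function.uncurry; fun_prop)
  have hpm : StronglyMeasurable (Function.uncurry (gibbsTrans f₁ f₂ y)) := by
    have h1 : StronglyMeasurable (fun z : ℝ × ℝ => ∫ x, f₂ (x - z.2) * (f₁ (y - x) * f₂ (x - z.1))) := by
      apply StronglyMeasurable.integral_prod_right
        (f := fun (z : ℝ × ℝ) x => f₂ (x - z.2) * (f₁ (y - x) * f₂ (x - z.1)))
      exact Continuous.stronglyMeasurable (by unfold Function.uncurry; fun_prop)
    have h2 : StronglyMeasurable (fun z : ℝ × ℝ => 1 / cnorm f₁ f₂ y z.1) := by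
      have : Measurable (fun z : ℝ × ℝ => 1 / cnorm f₁ f₂ y z.1) :=
        (hcm.measurable.comp measurable_fst).const_div 1
      exact this.stronglyMeasurable
    exact h2.mul h1
  have hp0 : ∀ u v, 0 ≤ gibbsTrans f₁ f₂ y u v := fun u v => by
    rw [hpe]; exact integral_nonneg fun x => mul_nonneg (hf₂pos _).le (hq0 u x)
  have hbdi : ∀ {h : ℝ → ℝ}, Integrable h → ∀ v, Integrable (fun x => f₂ (x - v) * h x) := by
    intro h hh v
    refine hh.bdd_mul (c := M₂) (by fun_prop) (Eventually.of_forall fun x => ?_)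
    rw [Real.norm_eq_abs, abs_of_pos (hf₂pos _)]; exact hM₂ _
  have hpM : ∀ u v, gibbsTrans f₁ f₂ y u v ≤ M₂ := fun u v => by
    rw [hpe]
    calc _ ≤ ∫ x, M₂ * post f₁ f₂ y u x :=
          integral_mono (hbdi (hqi u) v) ((hqi u).const_mul _)
            fun x => mul_le_mul_of_nonneg_right (hM₂ _) (hq0 u x)
      _ = M₂ := by rw [integral_const_mul, hq1, mul_one]
  have hp : ∀ u, Integrable (gibbsTrans f₁ f₂ y u) ∧ ∫ v, gibbsTrans f₁ f₂ y u v = 1 := fun u => by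
    have := conv_exp (η := 0) (hqc u) (hq0 u) hf₂c (fun x => (hf₂pos x).le)
      (by simpa using hqi u) (by simpa using hf₂i)
    simp only [← hpe] at this
    simpa [hq1, hf₂prob] using this
  -- moment generating functions
  obtain ⟨K₁, hK₁, hT⟩ := tail_mgf ha hb
  have hT' := fun θ => hT (post f₁ f₂ y θ) θ (hqc θ) (hq0 θ) (hqi θ) (hq1 θ) (hGTIP θ)
  set σ := min s (b / 2) with hσdef
  have hσ : 0 < σ := lt_min hs (by linarith)
  have mono_aux : ∀ {h : ℝ → ℝ} {τ θ : ℝ}, σ ≤ τ → Continuous h → (∀ x, 0 ≤ h x) →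
      Integrable (fun x => Real.exp (τ * |x - θ|) * h x) →
      Integrable (fun x => Real.exp (σ * |x - θ|) * h x) ∧
      ∫ x, Real.exp (σ * |x - θ|) * h x ≤ ∫ x, Real.exp (τ * |x - θ|) * h x := by
    intro h τ θ hτ hhc hh0 hhi
    have hle : ∀ x, Real.exp (σ * |x - θ|) * h x ≤ Real.exp (τ * |x - θ|) * h x := fun x => by
      have := hh0 x
      gcongr
    have hi : Integrable (fun x => Real.exp (σ * |x - θ|) * h x) := by
      refine hhi.mono' (by fun_prop) (Eventually.of_forall fun x => ?_)
      rw [Real.norm_eq_abs, abs_of_nonneg (mul_nonneg (Real.exp_pos _).le (hh0 x))]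
      exact hle x
    exact ⟨hi, integral_mono hi hhi hle⟩
  have hPost : ∀ θ η, |η| ≤ σ / 2 → _ := fun θ η hη =>
    mgf_bd (K₁ := K₁) hσ hη (hqc θ) (hq0 θ) (hqi θ) (hq1 θ)
      (mono_aux (min_le_right _ _) (hqc θ) (hq0 θ) (hT' θ).1).1
      ((mono_aux (min_le_right _ _) (hqc θ) (hq0 θ) (hT' θ).1).2.trans (hT' θ).2)
  have hf₂0 : ∀ x, 0 ≤ f₂ x := fun x => (hf₂pos x).le
  have hMGF' : Integrable (fun t => Real.exp (s * |t - 0|) * f₂ t) := by simpa using hMGF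
  set K₂ := ∫ x, Real.exp (s * |x - 0|) * f₂ x with hK₂def
  have hK₂ : 0 ≤ K₂ := integral_nonneg fun x => mul_nonneg (Real.exp_pos _).le (hf₂0 x)
  have hF₂ : ∀ η, |η| ≤ σ / 2 → _ := fun η hη =>
    mgf_bd (K₁ := K₂) (θ := 0) hσ hη hf₂c hf₂0 hf₂i hf₂prob
      (mono_aux (min_le_left _ _) hf₂c hf₂0 hMGF').1
      (mono_aux (min_le_left _ _) hf₂c hf₂0 hMGF').2
  have hmean : ∫ x, x * f₂ x = 0 := by
    have := integral_neg_eq_self (fun x => x * f₂ x) volume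
    simp only [hf₂sym, neg_mul, integral_neg] at this
    linarith
  simp only [hmean, sub_zero, mul_zero, add_zero] at hF₂
  have hpexp : ∀ θ η, |η| ≤ σ / 2 →
      Integrable (fun v => gibbsTrans f₁ f₂ y θ v * Real.exp (η * v)) ∧
      ∫ v, gibbsTrans f₁ f₂ y θ v * Real.exp (η * v) =
        Real.exp (η * θ) * ((∫ x, Real.exp (η * (x - θ)) * post f₁ f₂ y θ x) *
          ∫ t, Real.exp (-η * t) * f₂ t) := by
    intro θ η hη
    have e : ∀ x, Real.exp (η * x) * post f₁ f₂ y θ x =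
        Real.exp (η * θ) * (Real.exp (η * (x - θ)) * post f₁ f₂ y θ x) := fun x => by
      rw [← mul_assoc, ← Real.exp_add]; congr 2; ring
    have := conv_exp (η := η) (hqc θ) (hq0 θ) hf₂c hf₂0
      (by simp only [e]; exact (hPost θ η hη).1.const_mul _)
      (hF₂ (-η) (by rwa [abs_neg])).1
    simp only [← hpe] at this
    refine ⟨this.1, ?_⟩
    rw [this.2]
    simp only [e]
    rw [integral_const_mul, mul_assoc]
  -- choice of the exponent
  set A₁ := 8 / σ ^ 2 * K₁ with hA₁
  set A₂ := 8 / σ ^ 2 * K₂ with hA₂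
  have hA₁0 : 0 < A₁ := by positivity
  have hA₂0 : 0 ≤ A₂ := by positivity
  set B := A₂ + A₁ + A₂ * A₁ with hB
  have hB0 : 0 < B := by positivity
  obtain ⟨ε, hε, hε1, hεσ, hεB, hεd⟩ : ∃ ε : ℝ, 0 < ε ∧ ε ≤ 1 ∧ ε ≤ σ / 2 ∧ ε * B ≤ d / 2 ∧
      ε * d ≤ 1 := by
    refine ⟨min (min 1 (σ / 2)) (min (d / (2 * B)) (1 / d)), by positivity, ?_, ?_, ?_, ?_⟩
    · exact (min_le_left _ _).trans (min_le_left _ _)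
    · exact (min_le_left _ _).trans (min_le_right _ _)
    · have : min (min 1 (σ / 2)) (min (d / (2 * B)) (1 / d)) ≤ d / (2 * B) :=
        (min_le_right _ _).trans (min_le_left _ _)
      calc _ ≤ d / (2 * B) * B := mul_le_mul_of_nonneg_right this hB0.le
        _ = d / 2 := by field_simp
    · have : min (min 1 (σ / 2)) (min (d / (2 * B)) (1 / d)) ≤ 1 / d :=
        (min_le_right _ _).trans (min_le_right _ _)
      calc _ ≤ 1 / d * d := mul_le_mul_of_nonneg_right this hd.le
        _ = 1 := by field_simp
  have hεa : |ε| ≤ σ / 2 := by rwa [abs_of_pos hε]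
  have hεn : |-ε| ≤ σ / 2 := by rwa [abs_neg]
  set A := 1 + ε ^ 2 * A₂ with hA
  have hA0 : 0 < A := by positivity
  set lam := 1 - ε * d / 2 with hlam
  have hAlam : A * (1 - ε * d + ε ^ 2 * A₁) ≤ lam := by
    have h1 : ε ^ 2 * (ε ^ 2 * (A₂ * A₁)) ≤ ε ^ 2 * (A₂ * A₁) := by
      have h2 : ε ^ 2 ≤ 1 := pow_le_one₀ hε.le hε1
      have h3 : 0 ≤ ε ^ 2 * (A₂ * A₁) := by positivity
      nlinarith
    have h4 : ε * (ε * B) ≤ ε * (d / 2) := mul_le_mul_of_nonneg_left hεB hε.le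
    have h5 : 0 ≤ ε ^ 2 * A₂ * (ε * d) := by positivity
    rw [hA, hlam]
    rw [hB] at h4
    nlinarith
  have hF₂A : ∀ η, |η| ≤ σ / 2 → η ^ 2 = ε ^ 2 → 0 ≤ (∫ t, Real.exp (-η * t) * f₂ t) ∧
      (∫ t, Real.exp (-η * t) * f₂ t) ≤ A := fun η hη h2 => by
    refine ⟨integral_nonneg fun x => mul_nonneg (Real.exp_pos _).le (hf₂0 x), ?_⟩
    have := (hF₂ (-η) (by rwa [abs_neg])).2.1
    rw [neg_sq, h2] at this
    exact this
  -- per-exponent drift bounds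
  have hdr1 : ∀ θ η, |η| ≤ σ / 2 → η ^ 2 = ε ^ 2 →
      ∫ v, gibbsTrans f₁ f₂ y θ v * Real.exp (η * v) ≤ Real.exp (η * θ) * (A * K₁) := by
    intro θ η hη h2
    rw [(hpexp θ η hη).2, mul_comm A]
    refine mul_le_mul_of_nonneg_left ?_ (Real.exp_pos _).le
    exact mul_le_mul (hPost θ η hη).2.2 (hF₂A η hη h2).2 (hF₂A η hη h2).1 hK₁.le
  have hdr2 : ∀ θ η, |η| ≤ σ / 2 → η ^ 2 = ε ^ 2 →
      η * ((∫ x, x * post f₁ f₂ y θ x) - θ) ≤ - (ε * d) →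
      ∫ v, gibbsTrans f₁ f₂ y θ v * Real.exp (η * v) ≤ lam * Real.exp (η * θ) := by
    intro θ η hη h2 h3
    rw [(hpexp θ η hη).2, mul_comm lam]
    refine mul_le_mul_of_nonneg_left ?_ (Real.exp_pos _).le
    refine le_trans ?_ hAlam
    rw [mul_comm A]
    have h4 := (hPost θ η hη).2.1
    rw [h2] at h4
    have h5 : 0 ≤ ∫ x, Real.exp (η * (x - θ)) * post f₁ f₂ y θ x :=
      integral_nonneg fun x => mul_nonneg (Real.exp_pos _).le (hq0 θ x)
    have h6 : ∫ x, Real.exp (η * (x - θ)) * post f₁ f₂ y θ x ≤ 1 - ε * d + ε ^ 2 * A₁ := by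
      linarith
    exact mul_le_mul h6 (hF₂A η hη h2).2 (hF₂A η hη h2).1 (h5.trans h6)
  set V : ℝ → ℝ := fun θ => Real.exp (ε * θ) + Real.exp (-ε * θ) with hV
  set K := 2 * (A * K₁) * Real.exp (ε * k) with hKdef
  have hAK : 0 < A * K₁ := mul_pos hA0 hK₁
  have hK0 : 0 < K := by positivity
  have hexpk : 1 ≤ Real.exp (ε * k) := Real.one_le_exp (by positivity)
  have hVi : ∀ u, Integrable (fun v => gibbsTrans f₁ f₂ y u v * V v) := fun u => by
    simp only [hV, mul_add]
    exact (hpexp u ε hεa).1.add (hpexp u (-ε) hεn).1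
  have hPV : ∀ u, ∫ v, gibbsTrans f₁ f₂ y u v * V v ≤ lam * V u + K := by
    intro u
    simp only [hV, mul_add]
    rw [integral_add (hpexp u ε hεa).1 (hpexp u (-ε) hεn).1]
    have hlam0 : 0 ≤ lam := by rw [hlam]; linarith
    have hlp := mul_nonneg hlam0 (Real.exp_pos (ε * u)).le
    have hln := mul_nonneg hlam0 (Real.exp_pos (-ε * u)).le
    have b1 := hdr1 u ε hεa rfl
    have b2 := hdr1 u (-ε) hεn (neg_sq ε)
    have hKA : A * K₁ ≤ K := by rw [hKdef]; nlinarith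
    by_cases hu : k < |u|
    · have hD := abs_le.1 (hDUR u hu)
      rcases lt_or_ge 0 u with hu0 | hu0
      · rw [abs_of_pos hu0] at hD
        have b3 := hdr2 u ε hεa rfl (by nlinarith [hD.2])
        have : Real.exp (-ε * u) ≤ 1 := Real.exp_le_one_iff.2 (by nlinarith)
        nlinarith
      · rw [abs_of_nonpos hu0] at hD
        have b3 := hdr2 u (-ε) hεn (neg_sq ε) (by nlinarith [hD.1])
        have : Real.exp (ε * u) ≤ 1 := Real.exp_le_one_iff.2 (by nlinarith)
        nlinarith
    · have hu' := abs_le.1 (not_lt.1 hu)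
      have h1 : Real.exp (ε * u) ≤ Real.exp (ε * k) := Real.exp_le_exp.2 (by nlinarith [hu'.2])
      have h2 : Real.exp (-ε * u) ≤ Real.exp (ε * k) := Real.exp_le_exp.2 (by nlinarith [hu'.1])
      rw [hKdef]
      nlinarith
  -- stationary density
  set C := ∫ θ', cnorm f₁ f₂ y θ' with hC
  have hC0 : 0 < C := by
    rw [hC, integral_pos_iff_support_of_nonneg (fun θ => (hcpos θ).le) hCint]
    have : Function.support (fun θ => cnorm f₁ f₂ y θ) = univ := by
      ext θ; simp [(hcpos θ).ne']
    rw [this]; simp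
  have hinv : ∀ v, ∫ u, cnorm f₁ f₂ y u / C * gibbsTrans f₁ f₂ y u v = cnorm f₁ f₂ y v / C := by
    intro v
    have F := fub_aux (p := fun x u => f₂ (x - u)) (W := fun _ => 1) (g := fjoint f₁ f₂ y v)
      (Continuous.stronglyMeasurable (by unfold Function.uncurry; fun_prop)) (fun x v => hf₂0 _)
      measurable_const (fun v => zero_le_one) (fun x => by simpa using hf₂i.comp_sub_left x)
      (hjc v).stronglyMeasurable (by
        simp only [mul_one, integral_sub_left_eq_self (fun t => f₂ t), hf₂prob]
        exact (hjint v).abs)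
    simp only [mul_one] at F
    have e : ∀ u, cnorm f₁ f₂ y u / C * gibbsTrans f₁ f₂ y u v =
        (∫ x, fjoint f₁ f₂ y v x * f₂ (x - u)) / C := fun u => by
      have : gibbsTrans f₁ f₂ y u v =
          1 / cnorm f₁ f₂ y u * ∫ x, fjoint f₁ f₂ y v x * f₂ (x - u) := by
        unfold gibbsTrans fjoint
        congr 2; ext x; ring
      rw [this]
      have := (hcpos u).ne'
      field_simp
    simp only [e]
    rw [integral_div, integral_integral_swap (f := fun u x => fjoint f₁ f₂ y v x * f₂ (x - u)) F.swap]
    simp only [integral_const_mul, integral_sub_left_eq_self (fun t => f₂ t), hf₂prob, mul_one]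
    rfl
  -- minorisation
  have hcle : ∀ u, cnorm f₁ f₂ y u ≤ M₂ := fun u => by
    calc cnorm f₁ f₂ y u ≤ ∫ x, f₁ (y - x) * M₂ :=
          integral_mono (hjint u) ((hf₁i.comp_sub_left y).mul_const _)
            fun x => mul_le_mul_of_nonneg_left (hM₂ _) (hf₁pos _).le
      _ = M₂ := by
        rw [integral_mul_const, integral_sub_left_eq_self (fun t => f₁ t), hf₁prob, one_mul]
  have hsmall : ∀ R : ℝ, ∃ α : ℝ, 0 < α ∧ ∀ u, V u ≤ R → ∀ v,
      α * (Icc (-1:ℝ) 1).indicator (fun _ => (1/2 : ℝ)) v ≤ gibbsTrans f₁ f₂ y u v := by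
    intro R
    obtain ⟨m₂, hm₂, hm₂le⟩ := exists_lb hf₂c hf₂pos (max 2 (R / ε + 1))
    obtain ⟨m₁, hm₁, hm₁le⟩ := exists_lb hf₁c hf₁pos (|y| + 1)
    refine ⟨2 * (1 / M₂ * (2 * (m₂ * (m₁ * m₂)))), by positivity, fun u hu v => ?_⟩
    by_cases hv : v ∈ Icc (-1:ℝ) 1
    · rw [indicator_of_mem hv]
      have huR : |u| ≤ R / ε := by
        rw [le_div_iff₀ hε, mul_comm]
        refine le_trans ?_ hu
        have e1 := Real.add_one_le_exp (ε * u)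
        have e2 := Real.add_one_le_exp (-ε * u)
        have e3 := Real.exp_pos (ε * u)
        have e4 := Real.exp_pos (-ε * u)
        simp only [hV]
        rcases abs_cases u with ⟨h, _⟩ | ⟨h, _⟩ <;> rw [h] <;> linarith
      have hv' : |v| ≤ 1 := abs_le.2 hv
      have hint : 2 * (m₂ * (m₁ * m₂)) ≤ ∫ x, f₂ (x - v) * fjoint f₁ f₂ y u x := by
        calc 2 * (m₂ * (m₁ * m₂)) = ∫ x in Icc (-1:ℝ) 1, m₂ * (m₁ * m₂) := by
              simp; norm_num
          _ ≤ ∫ x in Icc (-1:ℝ) 1, f₂ (x - v) * fjoint f₁ f₂ y u x := by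
              refine setIntegral_mono_on (integrableOn_const (by simp)) (hbdi (hjint u) v).integrableOn
                measurableSet_Icc fun x hx => ?_
              have hx' : |x| ≤ 1 := abs_le.2 hx
              have g1 : m₂ ≤ f₂ (x - v) := hm₂le _ (by
                have := abs_sub x v
                have := le_max_left 2 (R / ε + 1)
                linarith)
              have g2 : m₂ ≤ f₂ (x - u) := hm₂le _ (by
                have := abs_sub x u
                have := le_max_right 2 (R / ε + 1)
                linarith)
              have g3 : m₁ ≤ f₁ (y - x) := hm₁le _ (by
                have := abs_sub y x
                linarith)
              unfold fjoint
              exact mul_le_mul g1 (mul_le_mul g3 g2 hm₂.le (hf₁pos _).le) (by positivity) (hf₂0 _)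
          _ ≤ _ := setIntegral_le_integral (hbdi (hjint u) v)
              (Eventually.of_forall fun x => mul_nonneg (hf₂0 _) (hjpos u x).le)
      have hcinv : 1 / M₂ ≤ 1 / cnorm f₁ f₂ y u := one_div_le_one_div_of_le (hcpos u) (hcle u)
      calc _ = 1 / M₂ * (2 * (m₂ * (m₁ * m₂))) := by ring
        _ ≤ 1 / cnorm f₁ f₂ y u * ∫ x, f₂ (x - v) * fjoint f₁ f₂ y u x :=
          mul_le_mul hcinv hint (by positivity) (by have := hcpos u; positivity)
        _ = _ := rfl
    · rw [indicator_of_notMem hv, mul_zero]; exact hp0 u v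
  obtain ⟨r, hr0, hr1, M, hM, hfin⟩ := harris (p := gibbsTrans f₁ f₂ y) (V := V)
    (ν := (Icc (-1:ℝ) 1).indicator (fun _ => (1/2 : ℝ))) (q := fun θ => cnorm f₁ f₂ y θ / C)
    (lam := lam) (K := K) (Mp := M₂) hpm hp0 hpM (fun u => (hp u).1) (fun u => (hp u).2)
    (by fun_prop) (fun u => by positivity) hVi hPV (by rw [hlam]; linarith)
    (by have := mul_pos hε hd; rw [hlam]; linarith) hK0
    (by simpa only [div_eq_mul_inv] using hcm.mul_const C⁻¹) (hCint.div_const C)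
    (fun u => div_nonneg (hcpos u).le hC0.le)
    (by rw [integral_div]; exact div_self hC0.ne') hinv
    ((integrable_indicator_iff measurableSet_Icc).2 (integrableOn_const (by simp)))
    (by rw [integral_indicator measurableSet_Icc]; simp; norm_num)
    (fun v => indicator_nonneg (fun _ _ => by norm_num) v) hsmall
  refine ⟨r, hr0, hr1, M, hM, fun θ₀ n hn => ?_⟩
  exact hfin θ₀ (fun n => gibbsTransN f₁ f₂ y n θ₀) (fun v => rfl) (fun n v => rfl) n hn
end
end

section
/- Suppose: (i) there exist d, k > 0 such that for all |θ| > k, |∫_ℝ x·π(x | θ) dx| ≤ |θ| − d (DUR); (ii) there exist a, b > 0 such that for every θ ∈ ℝ and every t ≥ 0, ∫_{{x : |x − θ| > t}} π(x | θ) dx ≤ a·e^{−b·t} (GTIP of the non-centred parametrisation); (iii) ∫_ℝ e^{s|t|} f₂(t) dt < ∞ for some s > 0. Then a geometric drift condition holds for the marginal Θ-chain with drift function V(θ) = e^{α|θ|}: there exist α > 0, δ > 0 and K < ∞ such that for every θ₀ with |θ₀| > k, ∫_ℝ e^{α|θ₁|} p(θ₀, θ₁) dθ₁ ≤ (1 −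 α·δ)·e^{α|θ₀|} + K. -/
open MeasureTheory Filter Set

noncomputable section

lemma aux_tail (a b η : ℝ) (ha : 0 < a) (hη : 0 < η) (hb : η < b) (g : ℝ → ℝ)
    (hgc : Continuous g) (hg0 : ∀ x, 0 ≤ g x) (hgi : Integrable g) (hg1 : ∫ x, g x = 1) (θ : ℝ)
    (htail : ∀ t : ℝ, 0 ≤ t → (∫ x in {x : ℝ | t < |x - θ|}, g x) ≤ a * Real.exp (-b * t)) :
    Integrable (fun x => Real.exp (η * |x - θ|) * g x) ∧
    ∫ x, Real.exp (η * |x - θ|) * g x ≤ a * η / (b - η) + 1 := by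
  set μ : Measure ℝ := volume.withDensity (fun x => ENNReal.ofReal (g x)) with hμ
  have hgm : Measurable (fun x => ENNReal.ofReal (g x)) := hgc.measurable.ennreal_ofReal
  have hset : ∀ t, MeasurableSet {x : ℝ | t < |x - θ|} := fun t =>
    measurableSet_lt measurable_const (by fun_prop)
  have hμs : ∀ t, 0 ≤ t → μ {x : ℝ | t < |x - θ|} ≤ ENNReal.ofReal (a * Real.exp (-b * t)) := by
    intro t ht
    rw [hμ, withDensity_apply _ (hset t),
      ← ofReal_integral_eq_lintegral_ofReal hgi.integrableOn (ae_of_all _ hg0)]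
    exact ENNReal.ofReal_le_ofReal (htail t ht)
  have hμu : μ univ = 1 := by
    rw [hμ, withDensity_apply _ MeasurableSet.univ, Measure.restrict_univ,
      ← ofReal_integral_eq_lintegral_ofReal hgi (ae_of_all _ hg0), hg1, ENNReal.ofReal_one]
  have hlc := lintegral_comp_eq_lintegral_meas_lt_mul (f := fun x : ℝ => |x - θ|)
    (g := fun t => η * Real.exp (η * t)) μ
    (ae_of_all _ fun x => abs_nonneg _) (by fun_prop)
    (fun t _ => (by fun_prop : Continuous fun t => η * Real.exp (η * t)).intervalIntegrable _ _)
    (ae_of_all _ fun x => by positivity)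
  have hinner : ∀ r : ℝ, ∫ t in (0:ℝ)..r, η * Real.exp (η * t) = Real.exp (η * r) - 1 := by
    intro r
    have : ∀ t ∈ uIcc 0 r, HasDerivAt (fun t => Real.exp (η * t)) (η * Real.exp (η * t)) t := by
      intro t _
      have := ((hasDerivAt_id t).const_mul η).exp
      simpa [mul_comm] using this
    rw [intervalIntegral.integral_eq_sub_of_hasDerivAt this
      ((by fun_prop : Continuous fun t => η * Real.exp (η * t)).intervalIntegrable _ _)]
    simp
  simp only [hinner] at hlc
  have hbd : ∫⁻ t in Ioi (0:ℝ), μ {x : ℝ | t < |x - θ|} * ENNReal.ofReal (η * Real.exp (η * t))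
      ≤ ENNReal.ofReal (a * η / (b - η)) := by
    have hneg : -(b - η) < 0 := by linarith
    have hI := integral_exp_mul_Ioi hneg 0
    have hInt := integrableOn_exp_mul_Ioi hneg 0
    calc _ ≤ ∫⁻ t in Ioi (0:ℝ), ENNReal.ofReal (a * η * Real.exp (-(b - η) * t)) := by
          apply setLIntegral_mono' measurableSet_Ioi
          intro t ht
          have ht0 : (0:ℝ) < t := ht
          calc _ ≤ ENNReal.ofReal (a * Real.exp (-b * t)) * ENNReal.ofReal (η * Real.exp (η * t)) :=
                mul_le_mul_left (hμs t ht0.le) _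
            _ = _ := by
                rw [← ENNReal.ofReal_mul (by positivity)]
                congr 1
                rw [show -(b - η) * t = -b * t + η * t by ring, Real.exp_add]; ring
      _ = ENNReal.ofReal (∫ t in Ioi (0:ℝ), a * η * Real.exp (-(b - η) * t)) := by
          rw [ofReal_integral_eq_lintegral_ofReal (Integrable.const_mul hInt _)
            (ae_of_all _ fun x => by positivity)]
      _ = _ := by
          rw [integral_const_mul, hI]
          congr 1
          rw [mul_zero, Real.exp_zero, neg_div_neg_eq, mul_one_div]
  have hfin : ∫⁻ x, ENNReal.ofReal (Real.exp (η * |x - θ|) * g x)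
      ≤ ENNReal.ofReal (a * η / (b - η) + 1) := by
    have h1 : ∫⁻ x, ENNReal.ofReal (Real.exp (η * |x - θ|) * g x) =
        ∫⁻ x, ENNReal.ofReal (Real.exp (η * |x - θ|)) ∂μ := by
      rw [hμ, lintegral_withDensity_eq_lintegral_mul _ hgm (by fun_prop)]
      refine lintegral_congr fun x => ?_
      rw [Pi.mul_apply, mul_comm, ENNReal.ofReal_mul (hg0 x)]
    have h2 : ∀ x, ENNReal.ofReal (Real.exp (η * |x - θ|)) =
        ENNReal.ofReal (Real.exp (η * |x - θ|) - 1) + 1 := by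
      intro x
      rw [← ENNReal.ofReal_one, ← ENNReal.ofReal_add _ zero_le_one]
      · simp
      · have : 1 ≤ Real.exp (η * |x - θ|) := Real.one_le_exp (by positivity)
        linarith
    rw [h1]
    simp only [h2]
    rw [lintegral_add_right _ measurable_const, hlc, lintegral_one, hμu,
      ENNReal.ofReal_add (div_nonneg (by positivity) (by linarith)) zero_le_one,
      ENNReal.ofReal_one]
    exact add_le_add_left hbd _
  have hnn : ∀ x, 0 ≤ Real.exp (η * |x - θ|) * g x := fun x =>
    mul_nonneg (Real.exp_pos _).le (hg0 x)
  have hm : Continuous (fun x => Real.exp (η * |x - θ|) * g x) := by fun_prop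
  have hint : Integrable (fun x => Real.exp (η * |x - θ|) * g x) := by
    refine ⟨hm.aestronglyMeasurable, ?_⟩
    rw [hasFiniteIntegral_iff_ofReal (ae_of_all _ hnn)]
    exact hfin.trans_lt ENNReal.ofReal_lt_top
  refine ⟨hint, ?_⟩
  rw [integral_eq_lintegral_of_nonneg_ae (ae_of_all _ hnn) hint.aestronglyMeasurable]
  refine ENNReal.toReal_le_of_le_ofReal ?_ hfin
  have := div_nonneg (mul_nonneg ha.le hη.le) (by linarith : 0 ≤ b - η)
  linarith

lemma aux_exp (v : ℝ) : Real.exp v ≤ 1 + v + v ^ 2 * Real.exp |v| := by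
  have h := Complex.norm_exp_sub_sum_le_norm_mul_exp (v : ℂ) 2
  simp only [Finset.sum_range_succ, Finset.sum_range_zero] at h
  have e : Complex.exp v - (0 + (v:ℂ) ^ 0 / (Nat.factorial 0 : ℂ) + (v:ℂ) ^ 1 / (Nat.factorial 1 : ℂ))
      = ((Real.exp v - (1 + v) : ℝ) : ℂ) := by
    push_cast; simp
  rw [e, Complex.norm_real, Complex.norm_real, Real.norm_eq_abs, Real.norm_eq_abs, sq_abs] at h
  linarith [le_abs_self (Real.exp v - (1 + v))]

lemma aux_quad (α η w : ℝ) (hα : 0 ≤ α) (hη : 0 < η) (h : α ≤ η / 2) :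
    Real.exp (α * w) ≤ 1 + α * w + α ^ 2 * (8 / η ^ 2) * Real.exp (η * |w|) := by
  have h1 := aux_exp (α * w)
  have h2 : w ^ 2 ≤ (8 / η ^ 2) * Real.exp (η / 2 * |w|) := by
    have := Real.quadratic_le_exp_of_nonneg (x := η / 2 * |w|) (by positivity)
    rw [mul_pow, sq_abs] at this
    have h0 : 0 ≤ η / 2 * |w| := by positivity
    rw [div_mul_eq_mul_div, le_div_iff₀ (by positivity)]
    nlinarith
  have h3 : Real.exp |α * w| ≤ Real.exp (η / 2 * |w|) := by
    rw [abs_mul, abs_of_nonneg hα]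
    gcongr
  have h4 : (α * w) ^ 2 * Real.exp |α * w| ≤
      α ^ 2 * ((8 / η ^ 2) * Real.exp (η / 2 * |w|)) * Real.exp (η / 2 * |w|) := by
    rw [mul_pow]
    gcongr
  have h5 : Real.exp (η * |w|) = Real.exp (η / 2 * |w|) * Real.exp (η / 2 * |w|) := by
    rw [← Real.exp_add]; congr 1; ring
  rw [h5]
  linarith

lemma aux_pt (α η θ x u σ : ℝ) (hα : 0 ≤ α) (hη : 0 < η) (h : α ≤ η / 2)
    (hσ : σ = 1 ∨ σ = -1) (hθ : |θ| = σ * θ) :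
    Real.exp (α * |x - u|) ≤ Real.exp (α * |θ|) * (1 + α * σ * (x - θ) - α * σ * u
      + α ^ 2 * (8 / η ^ 2) * (Real.exp (η * |x - θ|) * Real.exp (η * |u|)))
      + Real.exp (η * |x - θ|) * Real.exp (η * |u|) := by
  set w := σ * (x - u - θ) with hw
  have hσa : |σ| = 1 := by rcases hσ with rfl | rfl <;> simp
  have hwa : |w| ≤ |x - θ| + |u| := by
    rw [hw, abs_mul, hσa, one_mul, show x - u - θ = (x - θ) - u by ring]
    exact abs_sub _ _
  have hE : Real.exp (η * |w|) ≤ Real.exp (η * |x - θ|) * Real.exp (η * |u|) := by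
    rw [← Real.exp_add, ← mul_add]
    gcongr
  have hxu : |x - u| = |(|θ| + w)| := by
    rw [hθ, hw, ← mul_add, abs_mul, hσa, one_mul]; congr 1; ring
  have hsum : Real.exp (α * |x - u|) ≤ Real.exp (α * |θ|) * Real.exp (α * w) + Real.exp (η * |w|) := by
    rw [hxu, ← Real.exp_add, ← mul_add]
    rcases abs_cases (|θ| + w) with ⟨e, _⟩ | ⟨e, _⟩
    · rw [e]; linarith [Real.exp_pos (η * |w|)]
    · rw [e]
      have : Real.exp (α * -(|θ| + w)) ≤ Real.exp (η * |w|) := by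
        apply Real.exp_le_exp.mpr
        have h1 : -(|θ| + w) ≤ |w| := by linarith [neg_abs_le w, abs_nonneg θ]
        calc _ ≤ α * |w| := by gcongr
          _ ≤ η * |w| := by gcongr; linarith
      linarith [Real.exp_pos (α * (|θ| + w))]
  have hq := aux_quad α η w hα hη h
  have hq2 : Real.exp (α * w) ≤ 1 + α * σ * (x - θ) - α * σ * u
      + α ^ 2 * (8 / η ^ 2) * (Real.exp (η * |x - θ|) * Real.exp (η * |u|)) := by
    have : α ^ 2 * (8 / η ^ 2) * Real.exp (η * |w|) ≤
      α ^ 2 * (8 / η ^ 2) * (Real.exp (η * |x - θ|) * Real.exp (η * |u|)) := by gcongr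
    have e : α * w = α * σ * (x - θ) - α * σ * u := by rw [hw]; ring
    linarith
  have := mul_le_mul_of_nonneg_left hq2 (Real.exp_pos (α * |θ|)).le
  linarith

lemma aux_mom (η : ℝ) (hη : 0 < η) (g : ℝ → ℝ) (hgc : Continuous g) (hg0 : ∀ x, 0 ≤ g x) (θ : ℝ)
    (h : Integrable (fun x => Real.exp (η * |x - θ|) * g x)) :
    Integrable (fun x => (x - θ) * g x) := by
  refine (h.const_mul (1 / η)).mono' (by fun_prop) (ae_of_all _ fun x => ?_)
  rw [Real.norm_eq_abs, abs_mul, abs_of_nonneg (hg0 x), ← mul_assoc]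
  refine mul_le_mul_of_nonneg_right ?_ (hg0 x)
  have := Real.add_one_le_exp (η * |x - θ|)
  rw [one_div_mul_eq_div, le_div_iff₀ hη]
  linarith

lemma aux_core (q f : ℝ → ℝ) (hqc : Continuous q) (hfc : Continuous f)
    (hq0 : ∀ x, 0 ≤ q x) (hf0 : ∀ x, 0 ≤ f x) (hqi : Integrable q) (hfi : Integrable f)
    (hq1 : ∫ x, q x = 1) (hf1 : ∫ x, f x = 1) (hsym : ∀ t, f (-t) = f t)
    (α η θ d m₁ : ℝ) (hα : 0 ≤ α) (hη : 0 < η) (h : α ≤ η / 2)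
    (hqE : Integrable (fun x => Real.exp (η * |x - θ|) * q x))
    (hqm : ∫ x, Real.exp (η * |x - θ|) * q x ≤ m₁)
    (hfE : Integrable (fun u => Real.exp (η * |u|) * f u))
    (hdur : |∫ x, x * q x| ≤ |θ| - d) :
    ∫ θ₁, Real.exp (α * |θ₁|) * ∫ x, f (x - θ₁) * q x ≤
      Real.exp (α * |θ|) * (1 - α * d + α ^ 2 * (8 / η ^ 2) *
        (m₁ * ∫ u, Real.exp (η * |u|) * f u)) + m₁ * ∫ u, Real.exp (η * |u|) * f u := by
  set m₂ := ∫ u, Real.exp (η * |u|) * f u with hm₂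
  have hm₂0 : 0 ≤ m₂ := integral_nonneg fun u => mul_nonneg (Real.exp_pos _).le (hf0 u)
  obtain ⟨σ, hσ, hθ⟩ : ∃ σ : ℝ, (σ = 1 ∨ σ = -1) ∧ |θ| = σ * θ := by
    rcases abs_cases θ with ⟨e, _⟩ | ⟨e, _⟩
    · exact ⟨1, Or.inl rfl, by simp [e]⟩
    · exact ⟨-1, Or.inr rfl, by simp [e]⟩
  have hfu : Integrable (fun u => u * f u) := by
    have := aux_mom η hη f hfc hf0 0 (by simpa using hfE)
    simpa using this
  have hfu0 : ∫ u, u * f u = 0 := by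
    have := integral_neg_eq_self (fun u => u * f u) volume
    simp only [hsym, neg_mul, integral_neg] at this
    linarith
  have hqx := aux_mom η hη q hqc hq0 θ hqE
  have hqxi : ∫ x, (x - θ) * q x = (∫ x, x * q x) - θ := by
    have e : ∀ x, x * q x = (x - θ) * q x + θ * q x := fun x => by ring
    simp only [e]
    rw [integral_add hqx (hqi.const_mul _), integral_const_mul, hq1]; ring
  -- Fubini
  have hprod : Integrable (Function.uncurry fun θ₁ x : ℝ =>
      Real.exp (α * |θ₁|) * (f (x - θ₁) * q x)) (volume.prod volume) := by
    have hc := (hqE.convolution_integrand (ContinuousLinearMap.mul ℝ ℝ) hfE).const_mul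
      (Real.exp (η * |θ|))
    refine hc.mono' ?_ (ae_of_all _ ?_)
    · exact Continuous.aestronglyMeasurable (by unfold Function.uncurry; fun_prop)
    · rintro ⟨t, x⟩
      simp only [Function.uncurry, ContinuousLinearMap.mul_apply']
      rw [Real.norm_eq_abs, abs_of_nonneg
        (mul_nonneg (Real.exp_pos _).le (mul_nonneg (hf0 _) (hq0 _)))]
      have e : f (x - t) = f (t - x) := by rw [← hsym]; congr 1; ring
      rw [e]
      have hb : Real.exp (α * |t|) ≤
          Real.exp (η * |θ|) * (Real.exp (η * |x - θ|) * Real.exp (η * |t - x|)) := by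
        rw [← Real.exp_add, ← Real.exp_add]
        apply Real.exp_le_exp.mpr
        have h1 : |t| ≤ |θ| + (|x - θ| + |t - x|) := by
          have := abs_add_three θ (x - θ) (t - x)
          rw [show θ + (x - θ) + (t - x) = t by ring] at this
          linarith
        calc α * |t| ≤ η * |t| := by gcongr; linarith
          _ ≤ η * (|θ| + (|x - θ| + |t - x|)) := by gcongr
          _ = _ := by ring
      have := mul_le_mul_of_nonneg_right hb (mul_nonneg (hf0 (t - x)) (hq0 x))
      linarith
  have hswap : ∫ θ₁, Real.exp (α * |θ₁|) * ∫ x, f (x - θ₁) * q x =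
      ∫ x, (∫ θ₁, Real.exp (α * |θ₁|) * f (x - θ₁)) * q x := by
    simp only [← integral_const_mul]
    rw [integral_integral_swap hprod]
    refine integral_congr_ae (ae_of_all _ fun x => ?_)
    simp only [← mul_assoc]
    rw [integral_mul_const]
  have hinner : ∀ x, ∫ θ₁, Real.exp (α * |θ₁|) * f (x - θ₁) ≤
      Real.exp (α * |θ|) * (1 + α * σ * (x - θ)
        + α ^ 2 * (8 / η ^ 2) * (Real.exp (η * |x - θ|) * m₂)) + Real.exp (η * |x - θ|) * m₂ := by
    intro x
    have e1 : ∫ θ₁, Real.exp (α * |θ₁|) * f (x - θ₁) = ∫ u, Real.exp (α * |x - u|) * f u := by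
      rw [← integral_sub_left_eq_self (fun t => Real.exp (α * |t|) * f (x - t)) volume x]
      simp
    rw [e1]
    set A := Real.exp (α * |θ|)
    set E := Real.exp (η * |x - θ|)
    set C := α ^ 2 * (8 / η ^ 2)
    have hI1 := hfi.const_mul (A * (1 + α * σ * (x - θ)))
    have hI2 := hfu.const_mul (A * (α * σ))
    have hI3 := hfE.const_mul (A * C * E + E)
    calc _ ≤ ∫ u, (A * (1 + α * σ * (x - θ)) * f u - A * (α * σ) * (u * f u))
          + (A * C * E + E) * (Real.exp (η * |u|) * f u) := by
          refine integral_mono_of_nonneg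
            (ae_of_all _ fun u => mul_nonneg (Real.exp_pos _).le (hf0 u))
            ((hI1.sub hI2).add hI3) (ae_of_all _ fun u => ?_)
          have := mul_le_mul_of_nonneg_right (aux_pt α η θ x u σ hα hη h hσ hθ) (hf0 u)
          refine this.trans (le_of_eq ?_)
          simp only [A, E, C]; ring
      _ = A * (1 + α * σ * (x - θ)) * 1 - A * (α * σ) * 0 + (A * C * E + E) * m₂ := by
          have hI12 : Integrable (fun u => A * (1 + α * σ * (x - θ)) * f u
            - A * (α * σ) * (u * f u)) := hI1.sub hI2
          rw [integral_add hI12 hI3, integral_sub hI1 hI2, integral_const_mul,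
            integral_const_mul, integral_const_mul, hf1, hfu0]
      _ = _ := by ring
  rw [hswap]
  set A := Real.exp (α * |θ|)
  set C := α ^ 2 * (8 / η ^ 2)
  have hI1 := hqi.const_mul A
  have hI2 := hqx.const_mul (A * (α * σ))
  have hI3 := hqE.const_mul ((A * C + 1) * m₂)
  have hAC : 0 ≤ (A * C + 1) * m₂ := by positivity
  calc _ ≤ ∫ x, (A * q x + A * (α * σ) * ((x - θ) * q x))
        + ((A * C + 1) * m₂) * (Real.exp (η * |x - θ|) * q x) := by
        refine integral_mono_of_nonneg (ae_of_all _ fun x => mul_nonneg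
          (integral_nonneg fun u => mul_nonneg (Real.exp_pos _).le (hf0 _)) (hq0 x))
          ((hI1.add hI2).add hI3) (ae_of_all _ fun x => ?_)
        have := mul_le_mul_of_nonneg_right (hinner x) (hq0 x)
        refine this.trans (le_of_eq ?_)
        ring
    _ = A * 1 + A * (α * σ) * ((∫ x, x * q x) - θ)
        + ((A * C + 1) * m₂) * ∫ x, Real.exp (η * |x - θ|) * q x := by
        have hI12 : Integrable (fun x => A * q x + A * (α * σ) * ((x - θ) * q x)) := hI1.add hI2
        rw [integral_add hI12 hI3, integral_add hI1 hI2, integral_const_mul,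
            integral_const_mul, integral_const_mul, hq1, hqxi]
    _ ≤ A * 1 + A * α * (-d) + ((A * C + 1) * m₂) * m₁ := by
        have h1 : σ * (∫ x, x * q x) ≤ |∫ x, x * q x| := by
          rcases hσ with rfl | rfl
          · simpa using le_abs_self _
          · simpa using neg_le_abs _
        have h2 : σ * ((∫ x, x * q x) - θ) ≤ -d := by rw [mul_sub]; linarith
        have h3 := mul_le_mul_of_nonneg_left h2 (by positivity : 0 ≤ A * α)
        have h4 := mul_le_mul_of_nonneg_left hqm hAC
        linarith
    _ = _ := by ring

/-- under DUR (with constants `d, k`), GTIP of the non-centred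
parametrisation, and a finite MGF of `f₂` near 0, a geometric drift condition with drift
function `V(θ) = e^{α|θ|}` holds for the marginal Θ-chain. -/
theorem dur_gtip_mgf_implies_geometric_drift (f₁ f₂ : ℝ → ℝ) (y : ℝ)
    (hf₁c : Continuous f₁) (hf₂c : Continuous f₂)
    (hf₁pos : ∀ t, 0 < f₁ t) (hf₂pos : ∀ t, 0 < f₂ t)
    (hf₁bdd : ∃ M, ∀ t, f₁ t ≤ M) (hf₂bdd : ∃ M, ∀ t, f₂ t ≤ M)
    (hf₁sym : ∀ t, f₁ (-t) = f₁ t) (hf₂sym : ∀ t, f₂ (-t) = f₂ t)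
    (hf₁prob : ∫ t, f₁ t = 1) (hf₂prob : ∫ t, f₂ t = 1)
    (hjint : ∀ θ, Integrable (fun x => fjoint f₁ f₂ y θ x))
    (hcpos : ∀ θ, 0 < cnorm f₁ f₂ y θ)
    (d k : ℝ) (hd : 0 < d) (hk : 0 < k)
    (hDUR : ∀ θ : ℝ, k < |θ| → |∫ x, x * post f₁ f₂ y θ x| ≤ |θ| - d)
    (hGTIP : ∃ a > (0 : ℝ), ∃ b > (0 : ℝ), ∀ θ : ℝ, ∀ t : ℝ, 0 ≤ t →
      (∫ x in {x : ℝ | t < |x - θ|}, post f₁ f₂ y θ x) ≤ a * Real.exp (-b * t))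
    (hMGF : ∃ s > (0 : ℝ), Integrable (fun t => Real.exp (s * |t|) * f₂ t)) :
    ∃ α > (0 : ℝ), ∃ δ > (0 : ℝ), ∃ K : ℝ,
      ∀ θ₀ : ℝ, k < |θ₀| →
        (∫ θ₁, Real.exp (α * |θ₁|) * gibbsTrans f₁ f₂ y θ₀ θ₁) ≤
          (1 - α * δ) * Real.exp (α * |θ₀|) + K := by
  obtain ⟨a, ha, b, hb, hG⟩ := hGTIP
  obtain ⟨s, hs, hM⟩ := hMGF
  have hint2 : Integrable f₂ := by
    by_contra hn
    rw [integral_undef hn] at hf₂prob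
    exact zero_ne_one hf₂prob
  obtain ⟨η, hη, hηb, hηs⟩ : ∃ η > 0, η < b ∧ η ≤ s :=
    ⟨min b s / 2, by positivity, by linarith [min_le_left b s], by linarith [min_le_right b s]⟩
  have hfE : Integrable (fun u => Real.exp (η * |u|) * f₂ u) := by
    refine hM.mono' (by fun_prop) (ae_of_all _ fun u => ?_)
    rw [Real.norm_eq_abs, abs_of_nonneg (mul_nonneg (Real.exp_pos _).le (hf₂pos u).le)]
    have := (hf₂pos u).le
    gcongr
  set m₂ := ∫ u, Real.exp (η * |u|) * f₂ u with hm₂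
  have hm₂0 : 0 ≤ m₂ := integral_nonneg fun u => mul_nonneg (Real.exp_pos _).le (hf₂pos u).le
  set m₁ := a * η / (b - η) + 1 with hm₁
  have hm₁0 : 0 ≤ m₁ := by
    have := div_nonneg (mul_nonneg ha.le hη.le) (by linarith : 0 ≤ b - η)
    linarith
  set D := 8 / η ^ 2 * (m₁ * m₂) with hD
  have hD0 : 0 ≤ D := by positivity
  refine ⟨min (η / 2) (d / (2 * (D + 1))), by positivity, d / 2, by positivity, m₁ * m₂, ?_⟩
  set α := min (η / 2) (d / (2 * (D + 1))) with hα
  have hα0 : 0 < α := by positivity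
  have hα1 : α ≤ η / 2 := min_le_left _ _
  have hα2 : α * D ≤ d / 2 := by
    have : α ≤ d / (2 * (D + 1)) := min_le_right _ _
    rw [le_div_iff₀ (by positivity)] at this
    linarith
  intro θ hθ
  have hc := hcpos θ
  have hq0 : ∀ x, 0 ≤ post f₁ f₂ y θ x := fun x =>
    div_nonneg (mul_nonneg (hf₁pos _).le (hf₂pos _).le) hc.le
  have hqc : Continuous (post f₁ f₂ y θ) := by
    unfold post fjoint; fun_prop
  have hqi : Integrable (post f₁ f₂ y θ) := (hjint θ).div_const _
  have hq1 : ∫ x, post f₁ f₂ y θ x = 1 := by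
    simp only [post]
    rw [integral_div]
    exact div_self hc.ne'
  obtain ⟨hqE, hqm⟩ := aux_tail a b η ha hη hηb _ hqc hq0 hqi hq1 θ (hG θ)
  have key := aux_core _ f₂ hqc hf₂c hq0 (fun x => (hf₂pos x).le) hqi hint2 hq1 hf₂prob hf₂sym
    α η θ d m₁ hα0.le hη hα1 hqE hqm hfE (hDUR θ hθ)
  have e : ∀ θ₁, gibbsTrans f₁ f₂ y θ θ₁ = ∫ x, f₂ (x - θ₁) * post f₁ f₂ y θ x := by
    intro θ₁
    simp only [gibbsTrans, post]
    rw [← integral_const_mul]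
    congr 1; ext x; ring
  simp only [e]
  refine key.trans ?_
  have h1 : 1 - α * d + α ^ 2 * (8 / η ^ 2) * (m₁ * m₂) ≤ 1 - α * (d / 2) := by
    have := mul_le_mul_of_nonneg_left hα2 hα0.le
    rw [hD] at this
    nlinarith
  have h2 := mul_le_mul_of_nonneg_left h1 (Real.exp_pos (α * |θ|)).le
  linarith
end
end

section
/- Suppose: (i) the model is data uniformly relevant (DUR): there exist d, k > 0 such that for all |θ| > k, |∫_ℝ x·π(x | θ) dx| ≤ |θ| − d; (ii) the non-centred parametrisation is geometrically tight in parameter (GTIP): there exist a, b > 0 such that for every θ ∈ ℝ and every t ≥ 0, ∫_{{x : |x − θ| > t}} π(x | θ) dx ≤ a·e^{−b·t}. Then there exists α₀ > 0 such that for every α ∈ (0, α₀): for all θ > k, ∫_ℝ e^{α x} π(x | θ) dx ≤ e^{α θ}(1 − α d/2), and for all θ < −k, ∫_ℝ e^{−α x} π(x | θ) dx ≤ e^{−α θ}(1 − α d/2). -/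
open MeasureTheory Filter Set

noncomputable section

lemma aux_exp_le (z : ℝ) : Real.exp z ≤ 1 + z + z ^ 2 * Real.exp |z| := by
  have h := Complex.norm_exp_sub_sum_le_norm_mul_exp (z : ℂ) 2
  have e : Complex.exp (z : ℂ) - ∑ m ∈ Finset.range 2, (z : ℂ) ^ m / (m.factorial : ℂ)
      = ((Real.exp z - (1 + z) : ℝ) : ℂ) := by
    simp [Finset.sum_range_succ]
  rw [e, Complex.norm_real, Complex.norm_real, Real.norm_eq_abs, Real.norm_eq_abs, sq_abs] at h
  have := le_abs_self (Real.exp z - (1 + z))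
  linarith

lemma aux_exp_le' (b s u : ℝ) (hb : 0 < b) (hs : |s| ≤ b / 4) :
    Real.exp (s * u) ≤ 1 + s * u + s ^ 2 * (32 / b ^ 2) * Real.exp (b / 2 * |u|) := by
  have h1 := aux_exp_le (s * u)
  have h2 : Real.exp |s * u| ≤ Real.exp (b / 4 * |u|) := by
    rw [abs_mul]; gcongr
  have h3 := Real.quadratic_le_exp_of_nonneg (x := b / 4 * |u|) (by positivity)
  have h4 : u ^ 2 ≤ 32 / b ^ 2 * Real.exp (b / 4 * |u|) := by
    have h0 : 0 ≤ b / 4 * |u| := by positivity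
    have : (b / 4 * |u|) ^ 2 / 2 ≤ Real.exp (b / 4 * |u|) := by linarith
    rw [mul_pow, sq_abs] at this
    rw [div_mul_eq_mul_div, le_div_iff₀ (by positivity)]
    nlinarith
  have h5 : Real.exp (b / 2 * |u|) = Real.exp (b / 4 * |u|) * Real.exp (b / 4 * |u|) := by
    rw [← Real.exp_add]; ring_nf
  have h6 : (s * u) ^ 2 * Real.exp |s * u| ≤
      s ^ 2 * (32 / b ^ 2) * Real.exp (b / 2 * |u|) := by
    rw [h5, mul_pow]
    calc s ^ 2 * u ^ 2 * Real.exp |s * u|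
        ≤ s ^ 2 * (32 / b ^ 2 * Real.exp (b / 4 * |u|)) * Real.exp (b / 4 * |u|) := by gcongr
      _ = _ := by ring
  linarith

lemma aux_moment (μ : Measure ℝ) [IsProbabilityMeasure μ] (θ a b : ℝ) (ha : 0 < a) (hb : 0 < b)
    (h : ∀ t, 0 ≤ t → μ {x | t < |x - θ|} ≤ ENNReal.ofReal (a * Real.exp (-b * t))) :
    Integrable (fun x => Real.exp (b / 2 * |x - θ|)) μ ∧
      ∫ x, Real.exp (b / 2 * |x - θ|) ∂μ ≤ 1 + a := by
  have hint : ∀ r : ℝ, ∫ t in (0:ℝ)..r, b / 2 * Real.exp (b / 2 * t)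
      = Real.exp (b / 2 * r) - 1 := by
    intro r
    rw [intervalIntegral.integral_eq_sub_of_hasDerivAt (f := fun t => Real.exp (b / 2 * t))]
    · simp
    · intro x _
      have := ((hasDerivAt_id x).const_mul (b / 2)).exp
      simpa [mul_comm] using this
    · apply Continuous.intervalIntegrable
      fun_prop
  have lc := lintegral_comp_eq_lintegral_meas_lt_mul μ (f := fun x => |x - θ|)
    (g := fun t => b / 2 * Real.exp (b / 2 * t))
    (ae_of_all _ fun x => abs_nonneg _) (by fun_prop)
    (fun t _ => Continuous.intervalIntegrable (by fun_prop) _ _)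
    (ae_of_all _ fun x => by positivity)
  simp only [hint] at lc
  have hle : ∫⁻ x, ENNReal.ofReal (Real.exp (b / 2 * |x - θ|) - 1) ∂μ ≤ ENNReal.ofReal a := by
    rw [lc]
    calc _ ≤ ∫⁻ t in Ioi (0:ℝ), ENNReal.ofReal (a * (b / 2) * Real.exp (-(b / 2) * t)) := by
          apply setLIntegral_mono' measurableSet_Ioi
          intro t ht
          calc _ ≤ ENNReal.ofReal (a * Real.exp (-b * t)) *
                ENNReal.ofReal (b / 2 * Real.exp (b / 2 * t)) := by
                gcongr
                exact h t (le_of_lt ht)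
            _ = _ := by
                rw [← ENNReal.ofReal_mul (by positivity)]
                congr 1
                have : Real.exp (-(b / 2) * t) = Real.exp (-b * t) * Real.exp (b / 2 * t) := by
                  rw [← Real.exp_add]; ring_nf
                rw [this]; ring
      _ = ENNReal.ofReal a := by
          rw [← ofReal_integral_eq_lintegral_ofReal]
          · rw [integral_const_mul, integral_exp_mul_Ioi (by linarith)]
            congr 1
            simp
            field_simp
          · exact (integrableOn_exp_mul_Ioi (by linarith) 0).const_mul _
          · exact ae_of_all _ fun x => by positivity
  have hnn : ∀ x : ℝ, 0 ≤ Real.exp (b / 2 * |x - θ|) - 1 := fun x => by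
    have := Real.one_le_exp (x := b / 2 * |x - θ|) (by positivity)
    linarith
  have hi : Integrable (fun x => Real.exp (b / 2 * |x - θ|) - 1) μ := by
    refine ⟨by fun_prop, ?_⟩
    rw [hasFiniteIntegral_iff_ofReal (ae_of_all _ hnn)]
    exact hle.trans_lt ENNReal.ofReal_lt_top
  have hi2 : Integrable (fun x => Real.exp (b / 2 * |x - θ|)) μ := by
    have := hi.add (integrable_const (1:ℝ))
    simpa [Pi.add_def] using this
  refine ⟨hi2, ?_⟩
  have e := integral_sub hi2 (integrable_const (μ := μ) (1:ℝ))
  have : ∫ x, (Real.exp (b / 2 * |x - θ|) - 1) ∂μ ≤ a := by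
    rw [integral_eq_lintegral_of_nonneg_ae (ae_of_all _ hnn) hi.1]
    exact ENNReal.toReal_le_of_le_ofReal ha.le hle
  simp only [integral_const, probReal_univ, smul_eq_mul, mul_one] at e
  linarith

lemma aux_drift (μ : Measure ℝ) [IsProbabilityMeasure μ] (θ a b s : ℝ) (ha : 0 < a) (hb : 0 < b)
    (h : ∀ t, 0 ≤ t → μ {x | t < |x - θ|} ≤ ENNReal.ofReal (a * Real.exp (-b * t)))
    (hs : |s| ≤ b / 4) :
    ∫ x, Real.exp (s * x) ∂μ ≤ Real.exp (s * θ) *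
      (1 + s * (∫ x, x ∂μ - θ) + s ^ 2 * (32 / b ^ 2 * (1 + a))) := by
  obtain ⟨hi, hle⟩ := aux_moment μ θ a b ha hb h
  have hu : Integrable (fun x : ℝ => x - θ) μ := by
    refine Integrable.mono' (hi.const_mul (2 / b)) (by fun_prop) (ae_of_all _ fun x => ?_)
    have := Real.add_one_le_exp (b / 2 * |x - θ|)
    rw [Real.norm_eq_abs, div_mul_eq_mul_div, le_div_iff₀ hb]
    linarith
  have hx : Integrable (fun x : ℝ => x) μ := by
    have := hu.add (integrable_const θ)
    simpa [Pi.add_def] using this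
  have hq1 : Integrable (fun x : ℝ => 1 + s * (x - θ)) μ :=
    (integrable_const _).add (hu.const_mul s)
  have hq : Integrable (fun x : ℝ => 1 + s * (x - θ) +
      s ^ 2 * (32 / b ^ 2) * Real.exp (b / 2 * |x - θ|)) μ :=
    ((integrable_const _).add (hu.const_mul s)).add (hi.const_mul _)
  have e1 : ∫ x, Real.exp (s * x) ∂μ = Real.exp (s * θ) * ∫ x, Real.exp (s * (x - θ)) ∂μ := by
    rw [← integral_const_mul]
    congr 1; ext x
    rw [← Real.exp_add]; ring_nf
  rw [e1]
  gcongr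
  calc ∫ x, Real.exp (s * (x - θ)) ∂μ ≤ ∫ x, (1 + s * (x - θ) +
      s ^ 2 * (32 / b ^ 2) * Real.exp (b / 2 * |x - θ|)) ∂μ :=
        integral_mono_of_nonneg (ae_of_all _ fun x => (Real.exp_pos _).le) hq
          (ae_of_all _ fun x => aux_exp_le' b s (x - θ) hb hs)
    _ = 1 + s * (∫ x, x ∂μ - θ) + s ^ 2 * (32 / b ^ 2) * ∫ x, Real.exp (b / 2 * |x - θ|) ∂μ := by
        rw [integral_add hq1 (hi.const_mul _),
          integral_add (integrable_const _) (hu.const_mul s), integral_const_mul,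
          integral_const_mul, integral_sub hx (integrable_const _)]
        simp
    _ ≤ 1 + s * (∫ x, x ∂μ - θ) + s ^ 2 * (32 / b ^ 2) * (1 + a) := by gcongr
    _ = _ := by ring

/-- Lemma on exponential drift of the conditional posterior: under DUR
(with constants `d, k`) and GTIP of the non-centred parametrisation, for all sufficiently
small `α > 0` the conditional posterior exponential moments satisfy the stated bounds. -/
theorem dur_gtip_exponential_moment_bounds (f₁ f₂ : ℝ → ℝ) (y : ℝ)
    (hf₁c : Continuous f₁) (hf₂c : Continuous f₂)
    (hf₁pos : ∀ t, 0 < f₁ t) (hf₂pos : ∀ t, 0 < f₂ t)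
    (hf₁bdd : ∃ M, ∀ t, f₁ t ≤ M) (hf₂bdd : ∃ M, ∀ t, f₂ t ≤ M)
    (hf₁sym : ∀ t, f₁ (-t) = f₁ t) (hf₂sym : ∀ t, f₂ (-t) = f₂ t)
    (hf₁prob : ∫ t, f₁ t = 1) (hf₂prob : ∫ t, f₂ t = 1)
    (hjint : ∀ θ, Integrable (fun x => fjoint f₁ f₂ y θ x))
    (hcpos : ∀ θ, 0 < cnorm f₁ f₂ y θ)
    (d k : ℝ) (hd : 0 < d) (hk : 0 < k)
    (hDUR : ∀ θ : ℝ, k < |θ| → |∫ x, x * post f₁ f₂ y θ x| ≤ |θ| - d)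
    (hGTIP : ∃ a > (0 : ℝ), ∃ b > (0 : ℝ), ∀ θ : ℝ, ∀ t : ℝ, 0 ≤ t →
      (∫ x in {x : ℝ | t < |x - θ|}, post f₁ f₂ y θ x) ≤ a * Real.exp (-b * t)) :
    ∃ α₀ > (0 : ℝ), ∀ α : ℝ, 0 < α → α < α₀ →
      (∀ θ : ℝ, k < θ →
        (∫ x, Real.exp (α * x) * post f₁ f₂ y θ x) ≤
          Real.exp (α * θ) * (1 - α * d / 2)) ∧
      (∀ θ : ℝ, θ < -k →
        (∫ x, Real.exp (-α * x) * post f₁ f₂ y θ x) ≤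
          Real.exp (-α * θ) * (1 - α * d / 2)) := by
  obtain ⟨a, ha, b, hb, hG⟩ := hGTIP
  have hpm : ∀ θ, Measurable (post f₁ f₂ y θ) := fun θ => by
    have : Continuous (post f₁ f₂ y θ) := by
      unfold post fjoint
      fun_prop
    exact this.measurable
  have hpn : ∀ θ x, 0 ≤ post f₁ f₂ y θ x := fun θ x =>
    div_nonneg (mul_nonneg (hf₁pos _).le (hf₂pos _).le) (hcpos θ).le
  have hpi : ∀ θ, Integrable (post f₁ f₂ y θ) := fun θ => (hjint θ).div_const _
  have hp1 : ∀ θ, ∫ x, post f₁ f₂ y θ x = 1 := fun θ => by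
    unfold post
    rw [integral_div]
    exact div_self (hcpos θ).ne'
  have key : ∀ θ s : ℝ, |s| ≤ b / 4 → ∫ x, Real.exp (s * x) * post f₁ f₂ y θ x ≤
      Real.exp (s * θ) * (1 + s * ((∫ x, x * post f₁ f₂ y θ x) - θ) +
        s ^ 2 * (32 / b ^ 2 * (1 + a))) := by
    intro θ s hs
    let μ : Measure ℝ := volume.withDensity (fun x => ENNReal.ofReal (post f₁ f₂ y θ x))
    have hμ : ∀ g : ℝ → ℝ, ∫ x, g x ∂μ = ∫ x, g x * post f₁ f₂ y θ x := by
      intro g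
      rw [integral_withDensity_eq_integral_toReal_smul (hpm θ).ennreal_ofReal
        (ae_of_all _ fun x => ENNReal.ofReal_lt_top)]
      congr 1; ext x
      rw [ENNReal.toReal_ofReal (hpn θ x), smul_eq_mul, mul_comm]
    have hset : ∀ S : Set ℝ, MeasurableSet S →
        μ S = ENNReal.ofReal (∫ x in S, post f₁ f₂ y θ x) := by
      intro S hS
      rw [withDensity_apply _ hS, ofReal_integral_eq_lintegral_ofReal (hpi θ).integrableOn
        (ae_of_all _ (hpn θ))]
    have : IsProbabilityMeasure μ := ⟨by
      rw [hset _ MeasurableSet.univ, setIntegral_univ, hp1, ENNReal.ofReal_one]⟩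
    have := aux_drift μ θ a b s ha hb (fun t ht => by
      rw [hset _ (measurableSet_lt (by fun_prop) (by fun_prop))]
      exact ENNReal.ofReal_le_ofReal (hG θ t ht)) hs
    rwa [hμ, hμ] at this
  set K := 32 / b ^ 2 * (1 + a) with hK
  have hKpos : 0 < K := by positivity
  refine ⟨min (b / 4) (d / (2 * K)), by positivity, fun α hα hα' => ?_⟩
  have h1 : α ≤ b / 4 := (hα'.trans_le (min_le_left _ _)).le
  have h2 : α * K ≤ d / 2 := by
    have := (hα'.trans_le (min_le_right _ _)).le
    rw [le_div_iff₀ (by positivity)] at this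
    linarith
  have h3 : α * (α * K) ≤ α * (d / 2) := by gcongr
  constructor
  · intro θ hθ
    have hD := hDUR θ (by rw [abs_of_pos (hk.trans hθ)]; exact hθ)
    rw [abs_of_pos (hk.trans hθ)] at hD
    have hD2 := (abs_le.1 hD).2
    refine (key θ α (by rwa [abs_of_pos hα])).trans ?_
    gcongr
    have : α * ((∫ x, x * post f₁ f₂ y θ x) - θ) ≤ α * (-d) := by
      gcongr; linarith
    nlinarith
  · intro θ hθ
    have hneg : θ < 0 := by linarith
    have hD := hDUR θ (by rw [abs_of_neg hneg]; linarith)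
    rw [abs_of_neg hneg] at hD
    have hD2 := (abs_le.1 hD).1
    refine (key θ (-α) (by rwa [abs_neg, abs_of_pos hα])).trans ?_
    gcongr
    have : α * d ≤ α * ((∫ x, x * post f₁ f₂ y θ x) - θ) := by
      gcongr; linarith
    nlinarith
end
end
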